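/- Fix a discrete memoryless MAC with finite alphabets, ε∈(0,1), and a sum-capacity-achieving product pmf p_{X₁}p_{X₂}∈𝒫* whose associated constants satisfy V₁>0, V₂>0 and I(X₁;Y|X₂)+I(X₂;Y|X₁) > I(X₁,X₂;Y). Then there is a constant c such that for every sequence of positive integers (K_n) with log₂K_n = o(n^{1/3}) and all sufficiently large n: R_sum(n,ε,K_n) ≥ C_sum + F_{S_{K_n}}^{-1}(ε)/√n − θ_n, where θ_n ≤ c·(log n)/n if K_n ≤ log n; θ_n ≤ c·K_n/n if log n ≤ K_n ≤ (log n)^{3/2}; θ_n ≤ c·(log n)^{3/2}/n if (log n)^{3/2} ≤ K_n ≤ n; and θ_n ≤ c·(log K_n)^{3/2}/n if K_n ≥ n. -/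

import Mathlib

/-!
The proof is random coding with a facilitator that sees `K` candidate codeword pairs for each
message pair and transmits the one with the largest conditional mean information density
`∑ᵢ i(x₁ᵢ, x₂ᵢ)`. The decoder is a threshold test on the three information densities; its
one-shot error bound is `oneshot`: the probability that the selected pair misses the threshold
for `i(x₁,x₂;y)`, plus union bounds.

Write `Λ² = log n + log K`. The information density of the selected pair is the maximum of `K`
i.i.d. sums (variance `n V₁`) plus conditionally independent noise (variance close to `n V₂`), so
its law should be that of `n I + √n S_K`. This is `select_noise`, with error
`O((min(K, Λ³) + Λ²)/√n)`. The two competing errors for the maximum come from comparing `aᴷ` with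
`Φ(z)ᴷ` (`pow_normal_approx`): the Berry–Esseen bound `|a - Φ(z)| = O(1/√n)` costs `K/√n`, whereas
a moderate-deviation bound, with error relative to the tail `1 - Φ(z)` for `z` up to order `Λ`,
costs only `Λ³/√n`. Both bounds (`berry_esseen`, `moderate_deviation`) are one-sided and are
obtained by Stein's method. The solution `f` of Stein's equation satisfies that `w f(w)` is
monotone, which bounds its difference quotients from below (`steinF_slope`) and reduces everything
to the oscillation of `w f(w)` (`stein_ineq`).

To convert error probability into rate, `FSKinv_spec` shows that the density of `S_K` near its
`ε`-quantile is bounded below uniformly in `K`, because the maximum of `K` Gaussians is concentrated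
in a window of bounded width; it also shows that the quantile is `O(1 + √(log K))`. Lowering the
threshold by `O((min(K, Λ³) + Λ²)/√n)` therefore absorbs all errors. The hypothesis
`I(X₁;Y|X₂) + I(X₂;Y|X₁) > I(X₁,X₂;Y)` leaves room to choose the individual rates strictly inside
the two marginal constraints, so that the remaining error terms are exponentially small
(`rate_bound`). The four regimes for `θ_n` are upper bounds for `min(K, Λ³) + Λ²` (`regimes`).
-/

open scoped BigOperators Classical

noncomputable section

/-- A pmf on a finite type. -/
def IsPMF {α : Type*} [Fintype α] (p : α → ℝ) : Prop :=
  (∀ a, 0 ≤ p a) ∧ ∑ a, p a = 1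

variable {X1 X2 Y : Type*} [Fintype X1] [Fintype X2] [Fintype Y]

/-- A discrete memoryless MAC: a conditional pmf `W(y|x₁,x₂)` on finite alphabets. -/
def IsChannel (W : X1 → X2 → Y → ℝ) : Prop :=
  (∀ x1 x2 y, 0 ≤ W x1 x2 y) ∧ ∀ x1 x2, ∑ y, W x1 x2 y = 1

/-- The output marginal `p_Y` induced by a product input pmf `p₁·p₂`. -/
def outDist (W : X1 → X2 → Y → ℝ) (p1 : X1 → ℝ) (p2 : X2 → ℝ) (y : Y) : ℝ :=
  ∑ x1, ∑ x2, p1 x1 * p2 x2 * W x1 x2 y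

/-- The joint information density `i(x₁,x₂;y) = log₂(W(y|x₁,x₂)/p_Y(y))`. -/
def iDens (W : X1 → X2 → Y → ℝ) (p1 : X1 → ℝ) (p2 : X2 → ℝ)
    (x1 : X1) (x2 : X2) (y : Y) : ℝ :=
  Real.logb 2 (W x1 x2 y / outDist W p1 p2 y)

/-- The conditional output marginal `p_{Y|X₂}(y|x₂)`. -/
def condOut2 (W : X1 → X2 → Y → ℝ) (p1 : X1 → ℝ) (x2 : X2) (y : Y) : ℝ :=
  ∑ x1, p1 x1 * W x1 x2 y

/-- The conditional output marginal `p_{Y|X₁}(y|x₁)`. -/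
def condOut1 (W : X1 → X2 → Y → ℝ) (p2 : X2 → ℝ) (x1 : X1) (y : Y) : ℝ :=
  ∑ x2, p2 x2 * W x1 x2 y

/-- The conditional information density `i(x₁;y|x₂)`. -/
def iDensC1 (W : X1 → X2 → Y → ℝ) (p1 : X1 → ℝ) (x1 : X1) (x2 : X2) (y : Y) : ℝ :=
  Real.logb 2 (W x1 x2 y / condOut2 W p1 x2 y)

/-- The conditional information density `i(x₂;y|x₁)`. -/
def iDensC2 (W : X1 → X2 → Y → ℝ) (p2 : X2 → ℝ) (x1 : X1) (x2 : X2) (y : Y) : ℝ :=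
  Real.logb 2 (W x1 x2 y / condOut1 W p2 x1 y)

/-- `i(x₁,x₂) = E[i(x₁,x₂;Y) | X₁=x₁, X₂=x₂] = D(W(·|x₁,x₂) ‖ p_Y)`. -/
def iBar (W : X1 → X2 → Y → ℝ) (p1 : X1 → ℝ) (p2 : X2 → ℝ) (x1 : X1) (x2 : X2) : ℝ :=
  ∑ y, W x1 x2 y * iDens W p1 p2 x1 x2 y

/-- The mutual information `I(X₁,X₂;Y)` under the product input pmf `p₁·p₂` (log base 2). -/
def Isum (W : X1 → X2 → Y → ℝ) (p1 : X1 → ℝ) (p2 : X2 → ℝ) : ℝ :=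
  ∑ x1, ∑ x2, p1 x1 * p2 x2 * iBar W p1 p2 x1 x2

/-- The conditional mutual information `I(X₁;Y|X₂)` under `p₁·p₂`. -/
def Icond1 (W : X1 → X2 → Y → ℝ) (p1 : X1 → ℝ) (p2 : X2 → ℝ) : ℝ :=
  ∑ x1, ∑ x2, ∑ y, p1 x1 * p2 x2 * W x1 x2 y * iDensC1 W p1 x1 x2 y

/-- The conditional mutual information `I(X₂;Y|X₁)` under `p₁·p₂`. -/
def Icond2 (W : X1 → X2 → Y → ℝ) (p1 : X1 → ℝ) (p2 : X2 → ℝ) : ℝ :=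
  ∑ x1, ∑ x2, ∑ y, p1 x1 * p2 x2 * W x1 x2 y * iDensC2 W p2 x1 x2 y

/-- `V₁ = Var(i(X₁,X₂))`, the information variance of the codewords. -/
def Vone (W : X1 → X2 → Y → ℝ) (p1 : X1 → ℝ) (p2 : X2 → ℝ) : ℝ :=
  ∑ x1, ∑ x2, p1 x1 * p2 x2 * (iBar W p1 p2 x1 x2 - Isum W p1 p2) ^ 2

/-- `V₂ = E[Var(i(X₁,X₂;Y)|X₁,X₂)]`, the information variance of the channel noise. -/
def Vtwo (W : X1 → X2 → Y → ℝ) (p1 : X1 → ℝ) (p2 : X2 → ℝ) : ℝ :=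
  ∑ x1, ∑ x2, ∑ y,
    p1 x1 * p2 x2 * W x1 x2 y * (iDens W p1 p2 x1 x2 y - iBar W p1 p2 x1 x2) ^ 2

/-- The average error probability of an `(M₁,M₂,K)` facilitated MAC code (facilitator `e`,
encoders `f₁, f₂`, decoder `g`) on the `n`-fold memoryless product channel. -/
def avgErr (W : X1 → X2 → Y → ℝ) {n M1 M2 K : ℕ}
    (e : Fin M1 → Fin M2 → Fin K)
    (f1 : Fin M1 → Fin K → Fin n → X1) (f2 : Fin M2 → Fin K → Fin n → X2)
    (g : (Fin n → Y) → Fin M1 × Fin M2) : ℝ :=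
  (1 / ((M1 : ℝ) * M2)) * ∑ m1, ∑ m2, ∑ y : Fin n → Y,
    (∏ i, W (f1 m1 (e m1 m2) i) (f2 m2 (e m1 m2) i) (y i)) *
      (if g y = (m1, m2) then 0 else 1)

/-- Existence of an `(n,M₁,M₂,K,ε)` facilitated MAC code. -/
def ExistsCode (W : X1 → X2 → Y → ℝ) (n M1 M2 K : ℕ) (ε : ℝ) : Prop :=
  ∃ (e : Fin M1 → Fin M2 → Fin K) (f1 : Fin M1 → Fin K → Fin n → X1)
    (f2 : Fin M2 → Fin K → Fin n → X2) (g : (Fin n → Y) → Fin M1 × Fin M2),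
    avgErr W e f1 f2 g ≤ ε

/-- The fundamental sum-rate limit `R_sum(n,ε,K)`. -/
def Rsum (W : X1 → X2 → Y → ℝ) (n : ℕ) (ε : ℝ) (K : ℕ) : ℝ :=
  sSup {r | ∃ M1 M2 : ℕ, 0 < M1 ∧ 0 < M2 ∧ ExistsCode W n M1 M2 K ε ∧
    r = Real.logb 2 ((M1 : ℝ) * M2) / n}

/-- The sum-capacity `C_sum = max_{p₁·p₂} I(X₁,X₂;Y)`. -/
def Csum (W : X1 → X2 → Y → ℝ) : ℝ :=
  sSup {r | ∃ p1 p2, IsPMF p1 ∧ IsPMF p2 ∧ r = Isum W p1 p2}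

open MeasureTheory

/-- The CDF of `S_K = √V₂·Z₀ + √V₁·max_{k∈[K]} Z_k` for i.i.d. standard Gaussians
`Z₀,…,Z_K` (realized as coordinates of the product Gaussian measure on `Fin (K+1) → ℝ`). -/
def FSK (V1 V2 : ℝ) (K : ℕ) (s : ℝ) : ℝ :=
  ((Measure.pi fun _ : Fin (K + 1) => ProbabilityTheory.gaussianReal 0 1)
    {ω | Real.sqrt V2 * ω 0 + Real.sqrt V1 * (⨆ k : Fin K, ω k.succ) ≤ s}).toReal

/-- The inverse CDF of `S_K`: `F_{S_K}^{-1}(p) = sup {s : F_{S_K}(s) ≤ p}`. -/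
def FSKinv (V1 V2 : ℝ) (K : ℕ) (p : ℝ) : ℝ :=
  sSup {s | FSK V1 V2 K s ≤ p}

/-! ### The standard Gaussian distribution -/

/-- The standard Gaussian density. -/
def gphi (x : ℝ) : ℝ := (Real.sqrt (2 * Real.pi))⁻¹ * Real.exp (-(x ^ 2) / 2)

/-- The standard Gaussian distribution function. -/
def gPhi (x : ℝ) : ℝ := (ProbabilityTheory.gaussianReal 0 1).real (Set.Iic x)

lemma gphi_eq (x : ℝ) : ProbabilityTheory.gaussianPDFReal 0 1 x = gphi x := by
  simp [ProbabilityTheory.gaussianPDFReal, gphi]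

lemma gphi_pos (x : ℝ) : 0 < gphi x := by unfold gphi; positivity

lemma two_le_sqrt_two_pi : 2 ≤ Real.sqrt (2 * Real.pi) := by
  apply Real.le_sqrt_of_sq_le
  nlinarith [Real.pi_gt_three]

lemma sqrt_two_pi_le : Real.sqrt (2 * Real.pi) ≤ 3 := by
  rw [Real.sqrt_le_left (by norm_num)]
  nlinarith [Real.pi_lt_four]

lemma gphi_le_exp (x : ℝ) : gphi x ≤ Real.exp (-(x ^ 2) / 2) := by
  unfold gphi
  have h := two_le_sqrt_two_pi
  have : (Real.sqrt (2 * Real.pi))⁻¹ ≤ 1 := inv_le_one_of_one_le₀ (by linarith)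
  nlinarith [Real.exp_pos (-(x ^ 2) / 2)]

lemma exp_le_gphi (x : ℝ) : Real.exp (-(x ^ 2) / 2) ≤ 3 * gphi x := by
  unfold gphi
  have h := sqrt_two_pi_le
  have h2 := two_le_sqrt_two_pi
  have : (3 : ℝ)⁻¹ ≤ (Real.sqrt (2 * Real.pi))⁻¹ := inv_anti₀ (by linarith) h
  nlinarith [Real.exp_pos (-(x ^ 2) / 2)]

lemma gphi_le_one (x : ℝ) : gphi x ≤ 1 := by
  refine (gphi_le_exp x).trans ?_
  rw [Real.exp_le_one_iff]
  nlinarith [sq_nonneg x]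

lemma hasDerivAt_gphi (x : ℝ) : HasDerivAt gphi (-x * gphi x) x := by
  unfold gphi
  have h1 : HasDerivAt (fun x : ℝ => -(x ^ 2) / 2) (-x) x := by
    have := ((hasDerivAt_pow 2 x).neg).div_const 2
    refine this.congr_deriv ?_
    simp; ring
  have := (h1.exp).const_mul (Real.sqrt (2 * Real.pi))⁻¹
  refine this.congr_deriv ?_
  ring

lemma continuous_gphi : Continuous gphi := by unfold gphi; fun_prop

lemma integrable_gphi : Integrable gphi := by
  have := ProbabilityTheory.integrable_gaussianPDFReal 0 1
  simpa only [funext gphi_eq] using this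

lemma gPhi_eq_integral (x : ℝ) : gPhi x = ∫ t in Set.Iic x, gphi t := by
  unfold gPhi Measure.real
  rw [ProbabilityTheory.gaussianReal_apply_eq_integral 0 one_ne_zero,
    ENNReal.toReal_ofReal (setIntegral_nonneg measurableSet_Iic
      fun t _ => ProbabilityTheory.gaussianPDFReal_nonneg _ _ _)]
  simp only [gphi_eq]

lemma hasDerivAt_gPhi (x : ℝ) : HasDerivAt gPhi (gphi x) x := by
  have h : ∀ y, gPhi y = gPhi 0 + ∫ t in (0 : ℝ)..y, gphi t := by
    intro y
    rw [gPhi_eq_integral, gPhi_eq_integral, ← intervalIntegral.integral_Iic_sub_Iic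
      integrable_gphi.integrableOn integrable_gphi.integrableOn]
    ring
  rw [show gPhi = fun y => gPhi 0 + ∫ t in (0 : ℝ)..y, gphi t from funext h]
  exact (intervalIntegral.integral_hasDerivAt_right
    (continuous_gphi.intervalIntegrable _ _)
    (continuous_gphi.stronglyMeasurableAtFilter _ _) continuous_gphi.continuousAt).const_add _

lemma continuous_gPhi : Continuous gPhi :=
  continuous_iff_continuousAt.2 fun x => (hasDerivAt_gPhi x).continuousAt

lemma gPhi_strictMono : StrictMono gPhi :=
  strictMono_of_hasDerivAt_pos hasDerivAt_gPhi gphi_pos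

lemma gPhi_nonneg (x : ℝ) : 0 ≤ gPhi x := measureReal_nonneg

lemma gPhi_le_one (x : ℝ) : gPhi x ≤ 1 := measureReal_le_one

lemma gPhi_pos (x : ℝ) : 0 < gPhi x :=
  (gPhi_nonneg (x - 1)).trans_lt (gPhi_strictMono (by linarith))

lemma gPhi_lt_one (x : ℝ) : gPhi x < 1 :=
  (gPhi_strictMono (show x < x + 1 by linarith)).trans_le (gPhi_le_one _)

lemma tendsto_gPhi_atTop : Filter.Tendsto gPhi Filter.atTop (nhds 1) := by
  have := ProbabilityTheory.tendsto_cdf_atTop (ProbabilityTheory.gaussianReal 0 1)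
  refine this.congr fun x => ?_
  rw [ProbabilityTheory.cdf_eq_real]; rfl

lemma gPhi_neg (x : ℝ) : gPhi (-x) = 1 - gPhi x := by
  have hconst : ∀ y, gPhi (-y) + gPhi y = gPhi (-0) + gPhi 0 := by
    intro y
    refine is_const_of_deriv_eq_zero (f := fun y => gPhi (-y) + gPhi y) ?_ ?_ y 0
    · intro y
      exact (((hasDerivAt_gPhi (-y)).comp y (hasDerivAt_neg y)).add
        (hasDerivAt_gPhi y)).differentiableAt
    · intro y
      have := (((hasDerivAt_gPhi (-y)).comp y (hasDerivAt_neg y)).add (hasDerivAt_gPhi y)).deriv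
      refine Eq.trans this ?_
      simp [gphi]
  have h0 : gPhi 0 = 1 / 2 := by
    unfold gPhi
    have hmap := ProbabilityTheory.gaussianReal_map_neg (μ := 0) (v := 1)
    have h1 : (ProbabilityTheory.gaussianReal 0 1).real (Set.Ici 0)
        = (ProbabilityTheory.gaussianReal 0 1).real (Set.Iic 0) := by
      conv_rhs => rw [← neg_zero, ← hmap, map_measureReal_apply measurable_neg measurableSet_Iic]
      congr 1
      ext y; simp
    have : NullSingletonClass (ProbabilityTheory.gaussianReal 0 1) :=
      ProbabilityTheory.nullSingletonClass_gaussianReal one_ne_zero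
    have h2 := measureReal_add_measureReal_compl
      (μ := ProbabilityTheory.gaussianReal 0 1) (measurableSet_Iic (a := (0:ℝ)))
    rw [Set.compl_Iic] at h2
    have h3 : (ProbabilityTheory.gaussianReal 0 1).real (Set.Ioi 0)
        = (ProbabilityTheory.gaussianReal 0 1).real (Set.Ici 0) :=
      measureReal_congr Ioi_ae_eq_Ici
    rw [h3, h1] at h2
    simp at h2
    linarith
  have := hconst x
  rw [neg_zero, h0] at this
  linarith

lemma gPhi_zero : gPhi 0 = 1 / 2 := by
  have := gPhi_neg 0
  rw [neg_zero] at this; linarith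

/-- Gaussian tails decay at least like `e^{-r²/2}` under a shift by `r`. -/
lemma gauss_tail_shift {x r : ℝ} (hx : 0 ≤ x) (hr : 0 ≤ r) :
    1 - gPhi (x + r) ≤ Real.exp (-(r ^ 2) / 2) * (1 - gPhi x) := by
  set D : ℝ → ℝ := fun x => Real.exp (-(r ^ 2) / 2) * (1 - gPhi x) - (1 - gPhi (x + r)) with hD
  have hd : ∀ y, HasDerivAt D (-Real.exp (-(r ^ 2) / 2) * gphi y + gphi (y + r)) y := by
    intro y
    have h1 := ((hasDerivAt_gPhi y).const_sub 1).const_mul (Real.exp (-(r ^ 2) / 2))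
    have h2 := (((hasDerivAt_gPhi (y + r)).comp_add_const y r)).const_sub 1
    exact (h1.sub h2).congr_deriv (by ring)
  have hanti : AntitoneOn D (Set.Ici 0) := by
    apply antitoneOn_of_deriv_nonpos (convex_Ici 0)
    · exact fun y _ => (hd y).continuousAt.continuousWithinAt
    · exact fun y _ => (hd y).differentiableAt.differentiableWithinAt
    · intro y hy
      rw [interior_Ici] at hy
      have hy : 0 < y := hy
      rw [(hd y).deriv]
      unfold gphi
      have : Real.exp (-((y + r) ^ 2) / 2)
          ≤ Real.exp (-(r ^ 2) / 2) * Real.exp (-(y ^ 2) / 2) := by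
        rw [← Real.exp_add, Real.exp_le_exp]
        nlinarith [mul_nonneg hy.le hr]
      have h2 : 0 ≤ (Real.sqrt (2 * Real.pi))⁻¹ := by positivity
      nlinarith [mul_le_mul_of_nonneg_left this h2]
  have hlim : Filter.Tendsto D Filter.atTop (nhds 0) := by
    have h1 := (tendsto_gPhi_atTop.const_sub 1).const_mul (Real.exp (-(r ^ 2) / 2))
    have h2 := ((tendsto_gPhi_atTop.comp (Filter.tendsto_atTop_add_const_right _ r
      Filter.tendsto_id))).const_sub 1
    simpa using h1.sub h2
  have : 0 ≤ D x := by
    refine le_of_tendsto hlim ?_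
    filter_upwards [Filter.eventually_ge_atTop x] with y hy
    exact hanti hx (hx.trans hy : (0:ℝ) ≤ y) hy
  simp only [hD] at this
  linarith

lemma gauss_tail_le {r : ℝ} (hr : 0 ≤ r) : 1 - gPhi r ≤ Real.exp (-(r ^ 2) / 2) / 2 := by
  have := gauss_tail_shift le_rfl hr
  rw [zero_add, gPhi_zero] at this
  linarith

lemma gauss_tail_le_gphi {r : ℝ} (hr : 0 ≤ r) : 1 - gPhi r ≤ 2 * gphi r := by
  have := gauss_tail_le hr
  have := exp_le_gphi r
  have := gphi_pos r
  linarith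

lemma tendsto_sq_mul_tail :
    Filter.Tendsto (fun x : ℝ => x ^ 2 * (1 - gPhi x)) Filter.atTop (nhds 0) := by
  have h : Filter.Tendsto (fun x : ℝ => 4 * (x ^ 2)⁻¹) Filter.atTop (nhds 0) := by
    have := (Filter.tendsto_pow_atTop (α := ℝ) (n := 2) two_ne_zero).inv_tendsto_atTop.const_mul 4
    simpa using this
  refine tendsto_of_tendsto_of_tendsto_of_le_of_le' tendsto_const_nhds h ?_ ?_
  · filter_upwards with x
    have := gPhi_le_one x
    have : 0 ≤ 1 - gPhi x := by linarith
    positivity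
  · filter_upwards [Filter.eventually_gt_atTop 0] with x hx
    have h1 := gauss_tail_le hx.le
    have h2 : Real.exp (-(x ^ 2) / 2) ≤ 8 * (x ^ 4)⁻¹ := by
      rw [show -(x ^ 2) / 2 = -(x ^ 2 / 2) by ring, Real.exp_neg,
        show 8 * (x ^ 4)⁻¹ = (x ^ 4 / 8)⁻¹ by field_simp]
      apply inv_anti₀ (by positivity)
      have := Real.quadratic_le_exp_of_nonneg (x := x ^ 2 / 2) (by positivity)
      nlinarith [sq_nonneg x]
    calc x ^ 2 * (1 - gPhi x) ≤ x ^ 2 * (8 * (x ^ 4)⁻¹ / 2) := by gcongr; linarith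
      _ = 4 * (x ^ 2)⁻¹ := by field_simp; norm_num

lemma tendsto_mul_tail :
    Filter.Tendsto (fun x : ℝ => x * (1 - gPhi x)) Filter.atTop (nhds 0) := by
  refine tendsto_of_tendsto_of_tendsto_of_le_of_le' tendsto_const_nhds tendsto_sq_mul_tail ?_ ?_
  · filter_upwards [Filter.eventually_gt_atTop 0] with x hx
    exact mul_nonneg hx.le (by linarith [gPhi_le_one x])
  · filter_upwards [Filter.eventually_gt_atTop 1] with x hx
    exact mul_le_mul_of_nonneg_right (by nlinarith) (by linarith [gPhi_le_one x])

lemma tendsto_mul_gphi :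
    Filter.Tendsto (fun x : ℝ => x * gphi x) Filter.atTop (nhds 0) := by
  have h : Filter.Tendsto (fun x : ℝ => 2 * x⁻¹) Filter.atTop (nhds 0) := by
    simpa using (tendsto_inv_atTop_zero (𝕜 := ℝ)).const_mul 2
  refine tendsto_of_tendsto_of_tendsto_of_le_of_le' tendsto_const_nhds h ?_ ?_
  · filter_upwards [Filter.eventually_gt_atTop 0] with x hx
    exact mul_nonneg hx.le (gphi_pos x).le
  · filter_upwards [Filter.eventually_gt_atTop 0] with x hx
    have h1 := gphi_le_exp x
    have h2 : Real.exp (-(x ^ 2) / 2) ≤ 2 * (x ^ 2)⁻¹ := by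
      rw [show -(x ^ 2) / 2 = -(x ^ 2 / 2) by ring, Real.exp_neg,
        show 2 * (x ^ 2)⁻¹ = (x ^ 2 / 2)⁻¹ by field_simp]
      apply inv_anti₀ (by positivity)
      linarith [Real.add_one_le_exp (x ^ 2 / 2)]
    calc x * gphi x ≤ x * (2 * (x ^ 2)⁻¹) := by gcongr; linarith
      _ = 2 * x⁻¹ := by field_simp

/-- Upper Mills bound: `x (1 - Φ(x)) ≤ φ(x)`. -/
lemma mills_upper (x : ℝ) : x * (1 - gPhi x) ≤ gphi x := by
  set k : ℝ → ℝ := fun x => gphi x - x * (1 - gPhi x) with hk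
  have hd : ∀ y, HasDerivAt k (-(1 - gPhi y)) y := by
    intro y
    have := (hasDerivAt_gphi y).sub ((hasDerivAt_id y).mul ((hasDerivAt_gPhi y).const_sub 1))
    refine this.congr_deriv ?_
    simp
  have hanti : Antitone k := antitone_of_hasDerivAt_nonpos hd
    fun y => by simp; exact gPhi_le_one y
  have hlim : Filter.Tendsto k Filter.atTop (nhds 0) := by
    have h0 : Filter.Tendsto gphi Filter.atTop (nhds 0) := by
      refine tendsto_of_tendsto_of_tendsto_of_le_of_le' tendsto_const_nhds tendsto_mul_gphi ?_ ?_
      · exact Filter.Eventually.of_forall fun x => (gphi_pos x).le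
      · filter_upwards [Filter.eventually_gt_atTop 1] with x hx
        nlinarith [gphi_pos x]
    simpa using h0.sub tendsto_mul_tail
  have := hanti.le_of_tendsto hlim x
  simp only [hk] at this
  linarith

/-- Lower Mills bound: `x φ(x) ≤ (1 + x²) (1 - Φ(x))`. -/
lemma mills_lower (x : ℝ) : x * gphi x ≤ (1 + x ^ 2) * (1 - gPhi x) := by
  set k : ℝ → ℝ := fun x => (1 + x ^ 2) * (1 - gPhi x) - x * gphi x with hk
  have hd : ∀ y, HasDerivAt k (2 * (y * (1 - gPhi y) - gphi y)) y := by
    intro y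
    have := (((hasDerivAt_pow 2 y).const_add 1).mul ((hasDerivAt_gPhi y).const_sub 1)).sub
      ((hasDerivAt_id y).mul (hasDerivAt_gphi y))
    refine this.congr_deriv ?_
    simp; ring
  have hanti : Antitone k := antitone_of_hasDerivAt_nonpos hd
    fun y => by show _ ≤ (0 : ℝ); linarith [mills_upper y]
  have hlim : Filter.Tendsto k Filter.atTop (nhds 0) := by
    have h := ((tendsto_gPhi_atTop.const_sub 1).add tendsto_sq_mul_tail).sub tendsto_mul_gphi
    simp only [sub_self, add_zero] at h
    refine h.congr fun x => ?_
    simp only [hk]; ring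
  have := hanti.le_of_tendsto hlim x
  simp only [hk] at this
  linarith

lemma mills_upper_neg (x : ℝ) : -x * gPhi x ≤ gphi x := by
  have := mills_upper (-x)
  rw [gPhi_neg] at this
  have h : gphi (-x) = gphi x := by simp [gphi]
  rw [h] at this; linarith

lemma mills_lower_neg (x : ℝ) : -x * gphi x ≤ (1 + x ^ 2) * gPhi x := by
  have := mills_lower (-x)
  rw [gPhi_neg] at this
  have h : gphi (-x) = gphi x := by simp [gphi]
  rw [h] at this
  have h2 : (-x) ^ 2 = x ^ 2 := by ring
  rw [h2] at this; linarith

/-- `e^{-z²/2}` is at most a linear factor larger than the tail. -/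
lemma gphi_le_tail {z : ℝ} (hz : 0 ≤ z) : gphi z ≤ 3 * (1 + z) * (1 - gPhi z) := by
  have h0 : 0 ≤ 1 - gPhi z := by linarith [gPhi_le_one z]
  rcases le_total z 1 with h | h
  · -- at most one standard deviation out, the derivative of `3(1-Φ)-φ` has a sign
    set k : ℝ → ℝ := fun x => 3 * (1 - gPhi x) - gphi x with hk
    have hd : ∀ y, HasDerivAt k (-(3 - y) * gphi y) y := by
      intro y
      have := (((hasDerivAt_gPhi y).const_sub 1).const_mul 3).sub (hasDerivAt_gphi y)
      refine this.congr_deriv ?_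
      ring
    have hanti : AntitoneOn k (Set.Icc 0 1) := by
      apply antitoneOn_of_deriv_nonpos (convex_Icc 0 1)
      · exact fun y _ => (hd y).continuousAt.continuousWithinAt
      · exact fun y _ => (hd y).differentiableAt.differentiableWithinAt
      · intro y hy
        rw [interior_Icc] at hy
        rw [(hd y).deriv]
        nlinarith [gphi_pos y, hy.1, hy.2]
    have h1 : k 1 ≤ k z := hanti ⟨hz, h⟩ ⟨zero_le_one, le_rfl⟩ h
    have h2 : 0 ≤ k 1 := by
      have := mills_lower 1
      have := gphi_pos 1
      simp only [hk]; nlinarith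
    have h3 : 0 ≤ k z := h2.trans h1
    simp only [hk] at h3
    nlinarith
  · have := mills_lower z
    have h4 : z * gphi z ≤ z * (3 * (1 + z) * (1 - gPhi z)) := by
      refine this.trans ?_
      have : 1 + z ^ 2 ≤ z * (3 * (1 + z)) := by nlinarith
      nlinarith
    exact le_of_mul_le_mul_left h4 (by linarith)

lemma gPhi_sub_le {x y : ℝ} (h : x ≤ y) : gPhi y - gPhi x ≤ y - x := by
  have := Convex.image_sub_le_mul_sub_of_deriv_le (D := Set.univ) convex_univ (C := 1)
    continuous_gPhi.continuousOn (fun y _ => (hasDerivAt_gPhi y).differentiableAt.differentiableWithinAt)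
    (fun y _ => by rw [(hasDerivAt_gPhi y).deriv]; exact gphi_le_one y) x trivial y trivial h
  linarith

/-- Local lower bound for Gaussian increments. -/
lemma le_gPhi_sub {R u h : ℝ} (hR : |u| ≤ R) (h0 : 0 ≤ h) (h1 : h ≤ 1) :
    h * gphi (R + 1) ≤ gPhi u - gPhi (u - h) := by
  have := Convex.mul_sub_le_image_sub_of_le_deriv (D := Set.Icc (u - h) u) (convex_Icc _ _)
    (C := gphi (R + 1)) (f := gPhi)
    continuous_gPhi.continuousOn
    (fun y _ => (hasDerivAt_gPhi y).differentiableAt.differentiableWithinAt)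
    (fun y hy => by
      rw [(hasDerivAt_gPhi y).deriv]
      have hy := interior_subset hy
      unfold gphi
      have hyR : |y| ≤ R + 1 := by
        rw [abs_le] at hR ⊢
        constructor <;> linarith [hy.1, hy.2]
      have : y ^ 2 ≤ (R + 1) ^ 2 := by
        rw [← sq_abs]; gcongr
      gcongr) (u - h) ⟨le_rfl, by linarith⟩ u ⟨by linarith, le_rfl⟩ (by linarith)
  linarith

lemma mul_gphi_le (x : ℝ) : |x| * gphi x ≤ 1 := by
  have h1 := gphi_le_exp x
  have h2 : |x| ≤ Real.exp (x ^ 2 / 2) := by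
    have := Real.add_one_le_exp (x ^ 2 / 2)
    have h3 : |x| ≤ 1 + x ^ 2 / 2 := by
      rw [← sq_abs]; nlinarith [sq_nonneg (|x| - 1)]
    linarith
  calc |x| * gphi x ≤ Real.exp (x ^ 2 / 2) * Real.exp (-(x ^ 2) / 2) := by
        gcongr
        exact (gphi_pos x).le
    _ = 1 := by rw [← Real.exp_add]; simp [neg_div]

/-- Rescaling the argument of `Φ` by a factor near `1` moves it by little. -/
lemma gPhi_scale {a x : ℝ} (ha : 1 / 2 ≤ a) : gPhi (a * x) ≤ gPhi x + 2 * |a - 1| := by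
  -- differentiate `a ↦ Φ(a x)`: the derivative `x φ(a x)` is at most `2` on `[1/2, ∞)`
  have key : ∀ b ∈ Set.Ici (1 / 2 : ℝ), ‖x * gphi (b * x)‖ ≤ 2 := by
    intro b hb
    have hb : 1 / 2 ≤ b := hb
    have := mul_gphi_le (b * x)
    rw [abs_mul, abs_of_pos (by linarith : 0 < b)] at this
    rw [Real.norm_eq_abs, abs_mul, abs_of_pos (gphi_pos _)]
    have h0 : 0 ≤ |x| * gphi (b * x) := mul_nonneg (abs_nonneg _) (gphi_pos _).le
    nlinarith
  have hd : ∀ b ∈ Set.Ici (1 / 2 : ℝ), HasDerivWithinAt (fun b => gPhi (b * x)) (x * gphi (b * x))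
      (Set.Ici (1 / 2 : ℝ)) b := by
    intro b _
    have h1 : HasDerivAt (fun b : ℝ => b * x) x b := by simpa using (hasDerivAt_id b).mul_const x
    have := (hasDerivAt_gPhi (b * x)).comp b h1
    rw [mul_comm] at this
    exact this.hasDerivWithinAt
  have := (convex_Ici (1 / 2 : ℝ)).norm_image_sub_le_of_norm_hasDerivWithin_le hd key
    (show (1:ℝ) ∈ Set.Ici (1 / 2 : ℝ) by simp; norm_num) (show a ∈ Set.Ici (1 / 2 : ℝ) from ha)
  rw [one_mul, Real.norm_eq_abs, Real.norm_eq_abs] at this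
  linarith [le_abs_self (gPhi (a * x) - gPhi x)]

/-! ### Expectations over finite product spaces -/

section FiniteProduct

variable {ι α : Type*} [Fintype ι] [DecidableEq ι] [Fintype α]

/-- Expectation of `F` under the product of the (finite) distributions `q i`. -/
def Ep (q : ι → α → ℝ) (F : (ι → α) → ℝ) : ℝ := ∑ ω : ι → α, (∏ i, q i (ω i)) * F ω

lemma Ep_prod (q h : ι → α → ℝ) :
    Ep q (fun ω => ∏ i, h i (ω i)) = ∏ i, ∑ a, q i a * h i a := by
  unfold Ep
  simp_rw [← Finset.prod_mul_distrib]
  exact (Fintype.prod_sum (fun i a => q i a * h i a)).symm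

lemma Ep_const {q : ι → α → ℝ} (hq : ∀ i, ∑ a, q i a = 1) (c : ℝ) :
    Ep q (fun _ => c) = c := by
  have h : ∑ ω : ι → α, ∏ i, q i (ω i) = 1 := by
    rw [← Fintype.prod_sum (fun i a => q i a)]
    simp [hq]
  unfold Ep
  rw [← Finset.sum_mul, h, one_mul]

lemma Ep_add (q : ι → α → ℝ) (F G : (ι → α) → ℝ) :
    Ep q (fun ω => F ω + G ω) = Ep q F + Ep q G := by
  unfold Ep; rw [← Finset.sum_add_distrib]; simp_rw [mul_add]

lemma Ep_sub (q : ι → α → ℝ) (F G : (ι → α) → ℝ) :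
    Ep q (fun ω => F ω - G ω) = Ep q F - Ep q G := by
  unfold Ep; rw [← Finset.sum_sub_distrib]; simp_rw [mul_sub]

lemma Ep_const_mul (q : ι → α → ℝ) (c : ℝ) (F : (ι → α) → ℝ) :
    Ep q (fun ω => c * F ω) = c * Ep q F := by
  unfold Ep; rw [Finset.mul_sum]
  exact Finset.sum_congr rfl fun _ _ => by ring

lemma Ep_sum {κ : Type*} (s : Finset κ) (q : ι → α → ℝ) (F : κ → (ι → α) → ℝ) :
    Ep q (fun ω => ∑ k ∈ s, F k ω) = ∑ k ∈ s, Ep q (F k) := by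
  unfold Ep; rw [Finset.sum_comm]
  simp_rw [Finset.mul_sum]

/-- Monotonicity of the expectation; the comparison is only needed on the support. -/
lemma Ep_mono' {q : ι → α → ℝ} (hq : ∀ i a, 0 ≤ q i a) {F G : (ι → α) → ℝ}
    (h : ∀ ω, (∀ i, 0 < q i (ω i)) → F ω ≤ G ω) : Ep q F ≤ Ep q G := by
  unfold Ep
  refine Finset.sum_le_sum fun ω _ => ?_
  by_cases hp : ∀ i, 0 < q i (ω i)
  · exact mul_le_mul_of_nonneg_left (h ω hp) (Finset.prod_nonneg fun i _ => hq i _)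
  · push Not at hp
    obtain ⟨i, hi⟩ := hp
    rw [Finset.prod_eq_zero (Finset.mem_univ i) (le_antisymm hi (hq i _))]
    simp

lemma Ep_mono {q : ι → α → ℝ} (hq : ∀ i a, 0 ≤ q i a) {F G : (ι → α) → ℝ}
    (h : ∀ ω, F ω ≤ G ω) : Ep q F ≤ Ep q G := Ep_mono' hq fun ω _ => h ω

lemma Ep_nonneg {q : ι → α → ℝ} (hq : ∀ i a, 0 ≤ q i a) {F : (ι → α) → ℝ}
    (h : ∀ ω, 0 ≤ F ω) : 0 ≤ Ep q F :=
  Finset.sum_nonneg fun ω _ => mul_nonneg (Finset.prod_nonneg fun i _ => hq i _) (h ω)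

/-- Resampling one coordinate independently does not change an expectation. -/
lemma Ep_resample {q : ι → α → ℝ} (i : ι) (hq : ∑ a, q i a = 1)
    (F : (ι → α) → ℝ) :
    Ep q F = Ep q (fun ω => ∑ a, q i a * F (Function.update ω i a)) := by
  have hw : ∀ (ω : ι → α) (a : α), q i (ω i) * ∏ j, q j (Function.update ω i a j)
      = q i a * ∏ j, q j (ω j) := by
    intro ω a
    rw [← Finset.mul_prod_erase Finset.univ _ (Finset.mem_univ i),
      ← Finset.mul_prod_erase Finset.univ (fun j => q j (ω j)) (Finset.mem_univ i)]
    have : ∏ x ∈ Finset.univ.erase i, q x (Function.update ω i a x)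
        = ∏ x ∈ Finset.univ.erase i, q x (ω x) :=
      Finset.prod_congr rfl fun x hx => by
        rw [Function.update_of_ne (Finset.ne_of_mem_erase hx)]
    rw [this]; simp; ring
  -- the map `(ω, a) ↦ (update ω i a, ω i)` is an involution exchanging the two sides
  let e : ((ι → α) × α) ≃ ((ι → α) × α) :=
    { toFun := fun p => (Function.update p.1 i p.2, p.1 i)
      invFun := fun p => (Function.update p.1 i p.2, p.1 i)
      left_inv := fun p => by simp
      right_inv := fun p => by simp }
  have h1 : Ep q F = ∑ p : (ι → α) × α, q i p.2 * (∏ j, q j (p.1 j)) * F p.1 := by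
    rw [Fintype.sum_prod_type]
    unfold Ep
    refine Finset.sum_congr rfl fun ω _ => ?_
    simp_rw [mul_assoc]
    rw [← Finset.sum_mul, hq, one_mul]
  rw [h1, ← Equiv.sum_comp e, Fintype.sum_prod_type]
  unfold Ep
  refine Finset.sum_congr rfl fun ω _ => ?_
  rw [Finset.mul_sum]
  refine Finset.sum_congr rfl fun a _ => ?_
  simp only [e, Equiv.coe_fn_mk]
  rw [hw]; ring

/-- Marginalisation: a function of a single coordinate. -/
lemma Ep_single {q : ι → α → ℝ} (hq : ∀ i, ∑ a, q i a = 1) (i : ι)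
    (F : α → ℝ) : Ep q (fun ω => F (ω i)) = ∑ a, q i a * F a := by
  rw [Ep_resample i (hq i)]
  simp only [Function.update_self]
  exact Ep_const hq _

end FiniteProduct

/-! ### The solution of Stein's equation -/

/-- The branch of the Stein solution on `(-∞, z]`. -/
def steinL (z w : ℝ) : ℝ := (1 - gPhi z) * (gPhi w / gphi w)

/-- The branch of the Stein solution on `[z, ∞)`. -/
def steinR (z w : ℝ) : ℝ := gPhi z * ((1 - gPhi w) / gphi w)

/-- The bounded solution of Stein's equation `f'(w) = w f(w) + 1{w ≤ z} - Φ(z)`. -/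
def steinF (z w : ℝ) : ℝ := if w ≤ z then steinL z w else steinR z w

/-- The function `w ↦ w f(w)` for the Stein solution `f`. -/
def steinG (z w : ℝ) : ℝ := w * steinF z w

lemma steinF_of_le {z w : ℝ} (h : w ≤ z) : steinF z w = steinL z w := if_pos h

lemma steinL_self (z : ℝ) : steinL z z = steinR z z := by
  unfold steinL steinR; ring

lemma steinF_of_ge {z w : ℝ} (h : z ≤ w) : steinF z w = steinR z w := by
  rcases h.eq_or_lt with rfl | h
  · rw [steinF_of_le le_rfl, steinL_self]
  · exact if_neg (not_le.2 h)

lemma hasDerivAt_steinL (z w : ℝ) :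
    HasDerivAt (steinL z) ((1 - gPhi z) + w * steinL z w) w := by
  have hp := (gphi_pos w).ne'
  refine (((hasDerivAt_gPhi w).div (hasDerivAt_gphi w) hp).const_mul (1 - gPhi z)).congr_deriv ?_
  unfold steinL
  field_simp
  ring

lemma hasDerivAt_steinR (z w : ℝ) :
    HasDerivAt (steinR z) (-gPhi z + w * steinR z w) w := by
  have hp := (gphi_pos w).ne'
  refine ((((hasDerivAt_gPhi w).const_sub 1).div (hasDerivAt_gphi w) hp).const_mul
    (gPhi z)).congr_deriv ?_
  unfold steinR
  field_simp
  ring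

lemma hasDerivAt_mul_steinL (z w : ℝ) : HasDerivAt (fun w => w * steinL z w)
    ((1 - gPhi z) * ((1 + w ^ 2) * (gPhi w / gphi w) + w)) w := by
  refine ((hasDerivAt_id w).mul (hasDerivAt_steinL z w)).congr_deriv ?_
  unfold steinL; simp; ring

lemma hasDerivAt_mul_steinR (z w : ℝ) : HasDerivAt (fun w => w * steinR z w)
    (gPhi z * ((1 + w ^ 2) * ((1 - gPhi w) / gphi w) - w)) w := by
  refine ((hasDerivAt_id w).mul (hasDerivAt_steinR z w)).congr_deriv ?_
  unfold steinR; simp; ring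

lemma tail_nonneg (z : ℝ) : 0 ≤ 1 - gPhi z := by linarith [gPhi_le_one z]

lemma mono_mul_steinL (z : ℝ) : Monotone fun w => w * steinL z w := by
  refine monotone_of_hasDerivAt_nonneg (hasDerivAt_mul_steinL z) fun w => ?_
  refine mul_nonneg (tail_nonneg z) ?_
  have h := mills_lower_neg w
  have hp := gphi_pos w
  have : -w ≤ (1 + w ^ 2) * (gPhi w / gphi w) := by
    rw [← mul_div_assoc, le_div_iff₀ hp]; exact h
  linarith

lemma mono_mul_steinR (z : ℝ) : Monotone fun w => w * steinR z w := by
  refine monotone_of_hasDerivAt_nonneg (hasDerivAt_mul_steinR z) fun w => ?_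
  refine mul_nonneg (gPhi_nonneg z) ?_
  have h := mills_lower w
  have hp := gphi_pos w
  have : w ≤ (1 + w ^ 2) * ((1 - gPhi w) / gphi w) := by
    rw [← mul_div_assoc, le_div_iff₀ hp]; exact h
  linarith

lemma steinG_mono (z : ℝ) : Monotone (steinG z) := by
  intro a b hab
  unfold steinG
  rcases le_total b z with hb | hb
  · rw [steinF_of_le hb, steinF_of_le (hab.trans hb)]
    exact mono_mul_steinL z hab
  · rcases le_total z a with ha | ha
    · rw [steinF_of_ge ha, steinF_of_ge hb]
      exact mono_mul_steinR z hab
    · rw [steinF_of_le ha, steinF_of_ge hb]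
      refine (mono_mul_steinL z ha).trans ?_
      simp only [steinL_self]
      exact mono_mul_steinR z hb

/-- Mean value inequality from below on an interval. -/
lemma mvt_lower {f f' : ℝ → ℝ} (hf : ∀ x, HasDerivAt f (f' x) x) {a b C : ℝ} (hab : a ≤ b)
    (h : ∀ x, a ≤ x → x ≤ b → C ≤ f' x) : (b - a) * C ≤ f b - f a := by
  have := Convex.mul_sub_le_image_sub_of_le_deriv (D := Set.Icc a b) (convex_Icc _ _)
    (C := C) (f := f) (fun y _ => (hf y).continuousAt.continuousWithinAt)
    (fun y _ => (hf y).differentiableAt.differentiableWithinAt)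
    (fun y hy => by
      have hy := interior_subset hy
      rw [(hf y).deriv]; exact h y hy.1 hy.2) a ⟨le_rfl, hab⟩ b ⟨hab, le_rfl⟩ hab
  linarith

/-- Mean value inequality from above on an interval. -/
lemma mvt_upper {f f' : ℝ → ℝ} (hf : ∀ x, HasDerivAt f (f' x) x) {a b C : ℝ} (hab : a ≤ b)
    (h : ∀ x, a ≤ x → x ≤ b → f' x ≤ C) : f b - f a ≤ (b - a) * C := by
  have := mvt_lower (f := fun x => -f x) (f' := fun x => -f' x) (fun x => (hf x).neg) hab
    (C := -C) (fun x h1 h2 => neg_le_neg (h x h1 h2))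
  linarith

/-- Difference quotients of the Stein solution are bounded below through the Stein equation
and the monotonicity of `w f(w)`; this replaces the zero-bias coupling. -/
lemma steinF_slope {z lo hi a b : ℝ} (hab : a ≤ b) (hlo : lo ≤ a) (hhi : b ≤ hi) :
    (b - a) * (steinG z lo + (if hi ≤ z then 1 else 0) - gPhi z) ≤ steinF z b - steinF z a := by
  have hL : ∀ x, lo ≤ x → x ≤ z →
      steinG z lo + (if hi ≤ z then 1 else 0) - gPhi z ≤ (1 - gPhi z) + x * steinL z x := by
    intro x h1 h2
    have := steinG_mono z h1
    rw [steinG, steinG, steinF_of_le h2] at this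
    unfold steinG
    split_ifs <;> linarith
  have hR : ¬ hi ≤ z → ∀ x, lo ≤ x → z ≤ x →
      steinG z lo + (if hi ≤ z then 1 else 0) - gPhi z ≤ -gPhi z + x * steinR z x := by
    intro hz x h1 h2
    have := steinG_mono z h1
    rw [steinG, steinG, steinF_of_ge h2] at this
    unfold steinG
    rw [if_neg hz]; linarith
  rcases le_total b z with hb | hb
  · rw [steinF_of_le hb, steinF_of_le (hab.trans hb)]
    exact mvt_lower (hasDerivAt_steinL z) hab fun x h1 h2 => hL x (hlo.trans h1) (h2.trans hb)
  by_cases hz : hi ≤ z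
  · have hbz : b = z := le_antisymm (hhi.trans hz) hb
    subst hbz
    rw [steinF_of_le le_rfl, steinF_of_le hab]
    exact mvt_lower (hasDerivAt_steinL b) hab fun x h1 h2 => hL x (hlo.trans h1) h2
  · rcases le_total z a with ha | ha
    · rw [steinF_of_ge ha, steinF_of_ge hb]
      exact mvt_lower (hasDerivAt_steinR z) hab
        fun x h1 h2 => hR hz x (hlo.trans h1) (ha.trans h1)
    · have h1 := mvt_lower (hasDerivAt_steinL z) ha
        fun x h1 h2 => hL x (hlo.trans h1) h2
      have h2 := mvt_lower (hasDerivAt_steinR z) hb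
        fun x h1 h2 => hR hz x ((hlo.trans ha).trans h1) h1
      rw [steinF_of_le ha, steinF_of_ge hb]
      rw [steinL_self] at h1
      linarith

lemma gPhi_le_two_gphi {w : ℝ} (hw : w ≤ 0) : gPhi w ≤ 2 * gphi w := by
  have := gauss_tail_le_gphi (r := -w) (by linarith)
  rw [gPhi_neg] at this
  have h : gphi (-w) = gphi w := by simp [gphi]
  rw [h] at this; linarith

lemma steinF_le_two (z w : ℝ) : steinF z w ≤ 2 := by
  have hp := gphi_pos w
  have hz0 := tail_nonneg z
  have hw0 := tail_nonneg w
  have hz1 := gPhi_nonneg z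
  have hw1 := gPhi_nonneg w
  unfold steinF steinL steinR
  split_ifs with h
  · rw [← mul_div_assoc, div_le_iff₀ hp]
    rcases le_total w 0 with h0 | h0
    · have := gPhi_le_two_gphi h0
      nlinarith
    · have := gauss_tail_le_gphi h0
      have := gPhi_strictMono.monotone h
      nlinarith
  · rw [← mul_div_assoc, div_le_iff₀ hp]
    push Not at h
    rcases le_total w 0 with h0 | h0
    · have := gPhi_le_two_gphi h0
      have := gPhi_strictMono.monotone h.le
      nlinarith
    · have := gauss_tail_le_gphi h0
      nlinarith

lemma steinL_deriv_bound {z w : ℝ} (h : w ≤ z) :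
    0 ≤ (1 - gPhi z) + w * steinL z w ∧ (1 - gPhi z) + w * steinL z w ≤ 2 := by
  have hp := gphi_pos w
  have hz0 := tail_nonneg z
  have hw0 := tail_nonneg w
  have hz1 := gPhi_nonneg z
  have hw1 := gPhi_nonneg w
  have hm := mills_upper_neg w
  have hm2 := mills_upper w
  have e : (1 - gPhi z) + w * steinL z w
      = (1 - gPhi z) * (gphi w + w * gPhi w) / gphi w := by
    unfold steinL; field_simp
  rw [e]
  constructor
  · exact div_nonneg (mul_nonneg hz0 (by linarith)) hp.le
  · rw [div_le_iff₀ hp]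
    rcases le_total w 0 with h0 | h0
    · nlinarith
    · have h1 : (1 - gPhi z) * w ≤ gphi w := by
        have := gPhi_strictMono.monotone h
        nlinarith
      have : (1 - gPhi z) * w * gPhi w ≤ gphi w := by
        have := gPhi_le_one w
        nlinarith
      nlinarith

lemma steinR_deriv_bound {z w : ℝ} (h : z ≤ w) :
    -2 ≤ -gPhi z + w * steinR z w ∧ -gPhi z + w * steinR z w ≤ 0 := by
  have hp := gphi_pos w
  have hz0 := tail_nonneg z
  have hw0 := tail_nonneg w
  have hz1 := gPhi_nonneg z
  have hw1 := gPhi_nonneg w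
  have hm := mills_upper_neg w
  have hm2 := mills_upper w
  have e : -gPhi z + w * steinR z w
      = gPhi z * (w * (1 - gPhi w) - gphi w) / gphi w := by
    unfold steinR; field_simp; ring
  rw [e]
  constructor
  · rw [le_div_iff₀ hp]
    rcases le_total w 0 with h0 | h0
    · have h1 : gPhi z * -w ≤ gphi w := by
        have := gPhi_strictMono.monotone h
        nlinarith
      have : gPhi z * -w * (1 - gPhi w) ≤ gphi w := by nlinarith
      nlinarith
    · have : 0 ≤ gPhi z * (w * (1 - gPhi w)) := by positivity
      nlinarith
  · exact div_nonpos_of_nonpos_of_nonneg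
      (mul_nonpos_of_nonneg_of_nonpos hz1 (by linarith)) hp.le

lemma steinF_lipschitz {z a b : ℝ} (hab : a ≤ b) : |steinF z b - steinF z a| ≤ 2 * (b - a) := by
  rw [abs_le]
  have U1 : ∀ {a b}, a ≤ b → b ≤ z → steinL z b - steinL z a ≤ (b - a) * 2 := fun h h' =>
    mvt_upper (hasDerivAt_steinL z) h fun x _ h2 => (steinL_deriv_bound (h2.trans h')).2
  have U2 : ∀ {a b}, a ≤ b → b ≤ z → (b - a) * 0 ≤ steinL z b - steinL z a := fun h h' =>
    mvt_lower (hasDerivAt_steinL z) h fun x _ h2 => (steinL_deriv_bound (h2.trans h')).1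
  have U3 : ∀ {a b}, a ≤ b → z ≤ a → steinR z b - steinR z a ≤ (b - a) * 0 := fun h h' =>
    mvt_upper (hasDerivAt_steinR z) h fun x h2 _ => (steinR_deriv_bound (h'.trans h2)).2
  have U4 : ∀ {a b}, a ≤ b → z ≤ a → (b - a) * (-2) ≤ steinR z b - steinR z a := fun h h' =>
    mvt_lower (hasDerivAt_steinR z) h fun x h2 _ => (steinR_deriv_bound (h'.trans h2)).1
  rcases le_total b z with hb | hb
  · rw [steinF_of_le hb, steinF_of_le (hab.trans hb)]
    constructor <;> linarith [U1 hab hb, U2 hab hb]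
  · rcases le_total z a with ha | ha
    · rw [steinF_of_ge ha, steinF_of_ge hb]
      constructor <;> linarith [U3 hab ha, U4 hab ha]
    · rw [steinF_of_le ha, steinF_of_ge hb]
      have h1 := U1 ha le_rfl
      have h2 := U2 ha le_rfl
      have h3 := U3 hb le_rfl
      have h4 := U4 hb le_rfl
      rw [steinL_self] at h1 h2
      constructor <;> linarith

lemma steinG_sub_le {z w β : ℝ} (hβ : 0 ≤ β) :
    steinG z w - steinG z (w - β) ≤ 2 * β * (|w| + 1) := by
  have h1 := steinF_lipschitz (z := z) (show w - β ≤ w by linarith)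
  have h2 := steinF_le_two z (w - β)
  have e : steinG z w - steinG z (w - β)
      = w * (steinF z w - steinF z (w - β)) + β * steinF z (w - β) := by
    unfold steinG; ring
  rw [e]
  have h3 : w * (steinF z w - steinF z (w - β)) ≤ |w| * (2 * β) := by
    refine (le_abs_self _).trans ?_
    rw [abs_mul]
    refine mul_le_mul_of_nonneg_left ?_ (abs_nonneg _)
    linarith
  nlinarith

lemma inv_gphi_le (w : ℝ) : 1 ≤ 3 * Real.exp (w ^ 2 / 2) * gphi w := by
  have := exp_le_gphi w
  have h : Real.exp (w ^ 2 / 2) * Real.exp (-(w ^ 2) / 2) = 1 := by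
    rw [← Real.exp_add]; simp [neg_div]
  nlinarith [Real.exp_pos (w ^ 2 / 2)]

lemma mul_steinL_deriv_le {z w b : ℝ} (hz : 0 ≤ z) (hwb : w ≤ b) (hb : b ≤ z) :
    (1 - gPhi z) * ((1 + w ^ 2) * (gPhi w / gphi w) + w)
      ≤ 4 * (1 - gPhi z) * (1 + z ^ 2) * Real.exp (max b 0 ^ 2 / 2) := by
  have hp := gphi_pos w
  have hz0 := tail_nonneg z
  have hw1 := gPhi_nonneg w
  have hm := mills_upper_neg w
  have hE : 1 ≤ Real.exp (max b 0 ^ 2 / 2) := Real.one_le_exp (by positivity)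
  suffices h : (1 + w ^ 2) * (gPhi w / gphi w) + w
      ≤ 4 * (1 + z ^ 2) * Real.exp (max b 0 ^ 2 / 2) by nlinarith
  rcases le_total w 0 with h0 | h0
  · have h1 : gPhi w / gphi w ≤ 2 := by
      rw [div_le_iff₀ hp]; exact gPhi_le_two_gphi h0
    have h2 : -w * (gPhi w / gphi w) ≤ 1 := by
      rw [← mul_div_assoc, div_le_iff₀ hp]; linarith
    have h3 : w ^ 2 * (gPhi w / gphi w) + w ≤ 0 := by nlinarith
    have h4 : 4 * 1 ≤ 4 * (1 + z ^ 2) * Real.exp (max b 0 ^ 2 / 2) := by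
      have : 1 ≤ 1 + z ^ 2 := by nlinarith
      nlinarith
    nlinarith
  · have h1 : gPhi w / gphi w ≤ 3 * Real.exp (max b 0 ^ 2 / 2) := by
      rw [div_le_iff₀ hp]
      have h2 := inv_gphi_le w
      have h3 : Real.exp (w ^ 2 / 2) ≤ Real.exp (max b 0 ^ 2 / 2) := by
        have : w ≤ max b 0 := hwb.trans (le_max_left _ _)
        gcongr
      have := gPhi_le_one w
      nlinarith
    have hwz : w ≤ z := hwb.trans hb
    have h5 : w ^ 2 ≤ z ^ 2 := by gcongr
    have h4 : w ≤ (1 + z ^ 2) * Real.exp (max b 0 ^ 2 / 2) := by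
      have : w ≤ 1 + z ^ 2 := by nlinarith [sq_nonneg (w - 1)]
      nlinarith [sq_nonneg z]
    have h6 : (1 + w ^ 2) * (gPhi w / gphi w)
        ≤ (1 + z ^ 2) * (3 * Real.exp (max b 0 ^ 2 / 2)) := by
      have : 0 ≤ gPhi w / gphi w := by positivity
      gcongr
    linarith

lemma mul_steinR_deriv_le {z w : ℝ} (hz : 0 ≤ z) (hw : z ≤ w) :
    gPhi z * ((1 + w ^ 2) * ((1 - gPhi w) / gphi w) - w) ≤ 2 := by
  have hp := gphi_pos w
  have hw0 := tail_nonneg w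
  have hz1 := gPhi_nonneg z
  have h1 : (1 - gPhi w) / gphi w ≤ 2 := by
    rw [div_le_iff₀ hp]; exact gauss_tail_le_gphi (hz.trans hw)
  have h2 : w * ((1 - gPhi w) / gphi w) ≤ 1 := by
    rw [← mul_div_assoc, div_le_iff₀ hp]; linarith [mills_upper w]
  have h3 : (1 + w ^ 2) * ((1 - gPhi w) / gphi w) - w ≤ 2 := by
    nlinarith [mul_le_mul_of_nonneg_left h2 (hz.trans hw)]
  have := gPhi_le_one z
  nlinarith

/-- Increments of `w f(w)` for `z ≥ 0`, relative to the Gaussian tail at `z`. -/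
lemma steinG_sub_le_tail {z w β : ℝ} (hz : 0 ≤ z) (hβ : 0 ≤ β) :
    steinG z w - steinG z (w - β)
      ≤ 22 * β * (1 + z) ^ 2 * (1 - gPhi z) * Real.exp (min (max w 0) z ^ 2 / 2) := by
  have hz0 := tail_nonneg z
  have hzz : 1 + z ^ 2 ≤ (1 + z) ^ 2 := by nlinarith
  have hzz2 : 1 + z ≤ (1 + z) ^ 2 := by nlinarith
  have htwo : 2 ≤ 18 * (1 + z) ^ 2 * (1 - gPhi z) * Real.exp (z ^ 2 / 2) := by
    have h1 := inv_gphi_le z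
    have h2 := gphi_le_tail hz
    have h3 := Real.exp_pos (z ^ 2 / 2)
    have h4 : gphi z * Real.exp (z ^ 2 / 2)
        ≤ 3 * (1 + z) * (1 - gPhi z) * Real.exp (z ^ 2 / 2) := by gcongr
    have h5 : 3 * (1 + z) * (1 - gPhi z) * Real.exp (z ^ 2 / 2)
        ≤ 3 * (1 + z) ^ 2 * (1 - gPhi z) * Real.exp (z ^ 2 / 2) := by gcongr
    linarith
  have LL : ∀ {a b}, a ≤ b → b ≤ z → b * steinL z b - a * steinL z a
      ≤ (b - a) * (4 * (1 + z) ^ 2 * (1 - gPhi z) * Real.exp (max b 0 ^ 2 / 2)) := by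
    intro a b hab hb
    refine mvt_upper (f := fun w => w * steinL z w) (hasDerivAt_mul_steinL z) hab
      fun x _ h2 => (mul_steinL_deriv_le hz h2 hb).trans ?_
    have := Real.exp_pos (max b 0 ^ 2 / 2)
    calc 4 * (1 - gPhi z) * (1 + z ^ 2) * Real.exp (max b 0 ^ 2 / 2)
        ≤ 4 * (1 - gPhi z) * (1 + z) ^ 2 * Real.exp (max b 0 ^ 2 / 2) := by gcongr
      _ = _ := by ring
  have RR : ∀ {a b}, a ≤ b → z ≤ a → b * steinR z b - a * steinR z a ≤ (b - a) * 2 := by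
    intro a b hab ha
    exact mvt_upper (f := fun w => w * steinR z w) (hasDerivAt_mul_steinR z) hab
      fun x h1 _ => mul_steinR_deriv_le hz (ha.trans h1)
  have hab : w - β ≤ w := by linarith
  unfold steinG
  rcases le_total w z with hb | hb
  · rw [steinF_of_le hb, steinF_of_le (hab.trans hb), min_eq_left (max_le hb hz)]
    refine (LL hab hb).trans ?_
    have : 0 ≤ β * ((1 + z) ^ 2 * (1 - gPhi z) * Real.exp (max w 0 ^ 2 / 2)) := by positivity
    nlinarith
  · rw [min_eq_right (hb.trans (le_max_left _ _))]
    set Q := (1 + z) ^ 2 * (1 - gPhi z) * Real.exp (z ^ 2 / 2) with hQ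
    have hQ0 : 0 ≤ Q := by positivity
    have goal_eq : 22 * β * (1 + z) ^ 2 * (1 - gPhi z) * Real.exp (z ^ 2 / 2) = 22 * β * Q := by
      rw [hQ]; ring
    rw [goal_eq]
    have htwo : 2 ≤ 18 * Q := by rw [hQ]; linarith
    rcases le_total z (w - β) with ha | ha
    · rw [steinF_of_ge ha, steinF_of_ge hb]
      have := RR hab ha
      nlinarith
    · rw [steinF_of_le ha, steinF_of_ge hb]
      have h1 := LL ha le_rfl
      have h2 := RR hb le_rfl
      rw [steinL_self, max_eq_left hz] at h1
      have h3 : (z - (w - β)) * (4 * (1 + z) ^ 2 * (1 - gPhi z) * Real.exp (z ^ 2 / 2))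
          ≤ β * (4 * Q) := by
        rw [show 4 * (1 + z) ^ 2 * (1 - gPhi z) * Real.exp (z ^ 2 / 2) = 4 * Q by rw [hQ]; ring]
        gcongr; linarith
      have h4 : (w - z) * 2 ≤ β * (18 * Q) := by
        have : w - z ≤ β := by linarith
        nlinarith
      linarith

/-! ### Normal approximation for sums of independent bounded variables -/

section NormalApprox

variable {ι α : Type*} [Fintype ι] [DecidableEq ι] [Fintype α]

lemma sum_update_eq (ξ : ι → α → ℝ) (ω : ι → α) (i : ι) (a : α) :
    ∑ j, ξ j (Function.update ω i a j) = ∑ j, ξ j (ω j) - ξ i (ω i) + ξ i a := by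
  rw [← Finset.add_sum_erase Finset.univ _ (Finset.mem_univ i),
    ← Finset.add_sum_erase Finset.univ (fun j => ξ j (ω j)) (Finset.mem_univ i),
    Function.update_self]
  have : ∀ j ∈ Finset.univ.erase i, ξ j (Function.update ω i a j) = ξ j (ω j) := by
    intro j hj
    rw [Function.update_of_ne (Finset.ne_of_mem_erase hj)]
  rw [Finset.sum_congr rfl this]; ring

/-- Stein's method: the distribution function of a normalised sum of independent bounded variables
exceeds the Gaussian one by at most the expected oscillation of `steinG`. -/
lemma stein_ineq {q ξ : ι → α → ℝ} {B : ℝ} (hq0 : ∀ i a, 0 ≤ q i a) (hq1 : ∀ i, ∑ a, q i a = 1)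
    (hm : ∀ i, ∑ a, q i a * ξ i a = 0) (hv : ∑ i, ∑ a, q i a * ξ i a ^ 2 = 1)
    (hB : ∀ i a, |ξ i a| ≤ B) (z : ℝ) :
    Ep q (fun ω => if ∑ i, ξ i (ω i) ≤ z - 2 * B then 1 else 0)
      ≤ gPhi z + Ep q (fun ω => steinG z (∑ i, ξ i (ω i)) -
          steinG z (∑ i, ξ i (ω i) - 2 * B)) := by
  set S : (ι → α) → ℝ := fun ω => ∑ i, ξ i (ω i) with hS
  set H : (ι → α) → ℝ := fun ω =>
    steinG z (S ω - 2 * B) + (if S ω ≤ z - 2 * B then 1 else 0) - gPhi z with hH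
  have key : ∀ i, (∑ a, q i a * ξ i a ^ 2) * Ep q H
      ≤ Ep q (fun ω => ξ i (ω i) * steinF z (S ω)) := by
    intro i
    rw [Ep_resample i (hq1 i) (fun ω => ξ i (ω i) * steinF z (S ω)), ← Ep_const_mul]
    refine Ep_mono hq0 fun ω => ?_
    set V := S ω - ξ i (ω i) with hV
    have hVB := abs_le.1 (hB i (ω i))
    have e1 : ∀ a, S (Function.update ω i a) = V + ξ i a := fun a => sum_update_eq ξ ω i a
    have e2 : ∑ a, q i a * (ξ i (Function.update ω i a i) * steinF z (S (Function.update ω i a)))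
        = ∑ a, q i a * (ξ i a * (steinF z (V + ξ i a) - steinF z V)) := by
      have h0 : ∑ a, q i a * ξ i a * steinF z V = 0 := by
        rw [← Finset.sum_mul, hm, zero_mul]
      rw [← sub_zero (∑ a, q i a * (ξ i (Function.update ω i a i) *
        steinF z (S (Function.update ω i a)))), ← h0, ← Finset.sum_sub_distrib]
      refine Finset.sum_congr rfl fun a _ => ?_
      rw [Function.update_self, e1]; ring
    rw [e2, Finset.sum_mul]
    refine Finset.sum_le_sum fun a _ => ?_
    have hab := abs_le.1 (hB i a)
    have h1 : ξ i a ^ 2 * (steinG z (V - B) + (if V + B ≤ z then 1 else 0) - gPhi z)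
        ≤ ξ i a * (steinF z (V + ξ i a) - steinF z V) := by
      rcases le_total 0 (ξ i a) with h | h
      · have := steinF_slope (z := z) (lo := V - B) (hi := V + B) (a := V) (b := V + ξ i a)
          (by linarith) (by linarith) (by linarith)
        nlinarith
      · have := steinF_slope (z := z) (lo := V - B) (hi := V + B) (a := V + ξ i a) (b := V)
          (by linarith) (by linarith) (by linarith)
        nlinarith
    have h2 : H ω ≤ steinG z (V - B) + (if V + B ≤ z then 1 else 0) - gPhi z := by
      have h3 : steinG z (S ω - 2 * B) ≤ steinG z (V - B) := steinG_mono z (by linarith)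
      have h4 : (if S ω ≤ z - 2 * B then (1 : ℝ) else 0) ≤ if V + B ≤ z then 1 else 0 := by
        split_ifs with h5 h6 <;> linarith
      simp only [hH]; linarith
    have h5 : ξ i a ^ 2 * H ω ≤ ξ i a * (steinF z (V + ξ i a) - steinF z V) :=
      (mul_le_mul_of_nonneg_left h2 (sq_nonneg _)).trans h1
    rw [mul_assoc]
    exact mul_le_mul_of_nonneg_left h5 (hq0 i a)
  have tot : Ep q H ≤ Ep q (fun ω => steinG z (S ω)) := by
    have h1 := Finset.sum_le_sum fun i (_ : i ∈ Finset.univ) => key i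
    rw [← Finset.sum_mul, hv, one_mul, ← Ep_sum] at h1
    refine h1.trans_eq ?_
    congr 1; funext ω
    rw [← Finset.sum_mul]; rfl
  have e3 : Ep q H = Ep q (fun ω => steinG z (S ω - 2 * B))
      + Ep q (fun ω => if S ω ≤ z - 2 * B then 1 else 0) - gPhi z := by
    simp only [hH]
    rw [Ep_sub, Ep_add, Ep_const hq1]
  rw [Ep_sub]
  linarith

lemma Ep_sq_sum {q ξ : ι → α → ℝ} (hq1 : ∀ i, ∑ a, q i a = 1)
    (hm : ∀ i, ∑ a, q i a * ξ i a = 0) :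
    Ep q (fun ω => (∑ i, ξ i (ω i)) ^ 2) = ∑ i, ∑ a, q i a * ξ i a ^ 2 := by
  have h0 : (fun ω : ι → α => (∑ i, ξ i (ω i)) ^ 2)
      = fun ω => ∑ i, ξ i (ω i) * ∑ j, ξ j (ω j) := by
    funext ω; rw [sq, Finset.sum_mul]
  rw [h0, Ep_sum]
  refine Finset.sum_congr rfl fun i _ => ?_
  rw [Ep_resample i (hq1 i)]
  have e : ∀ ω : ι → α, ∑ a, q i a * (ξ i (Function.update ω i a i) *
      ∑ j, ξ j (Function.update ω i a j)) = ∑ a, q i a * ξ i a ^ 2 := by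
    intro ω
    have : ∀ a, q i a * (ξ i (Function.update ω i a i) * ∑ j, ξ j (Function.update ω i a j))
        = q i a * ξ i a * (∑ j, ξ j (ω j) - ξ i (ω i)) + q i a * ξ i a ^ 2 := by
      intro a; rw [sum_update_eq, Function.update_self]; ring
    simp_rw [this]
    rw [Finset.sum_add_distrib, ← Finset.sum_mul, hm, zero_mul, zero_add]
  simp_rw [e]
  exact Ep_const hq1 _

/-- One-sided Berry–Esseen bound for normalised bounded summands. -/
lemma berry_esseen {q ξ : ι → α → ℝ} {B : ℝ} (hq0 : ∀ i a, 0 ≤ q i a)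
    (hq1 : ∀ i, ∑ a, q i a = 1)
    (hm : ∀ i, ∑ a, q i a * ξ i a = 0) (hv : ∑ i, ∑ a, q i a * ξ i a ^ 2 = 1)
    (hB0 : 0 ≤ B) (hB : ∀ i a, |ξ i a| ≤ B) (z : ℝ) :
    Ep q (fun ω => if ∑ i, ξ i (ω i) ≤ z - 2 * B then 1 else 0) ≤ gPhi z + 8 * B := by
  refine (stein_ineq hq0 hq1 hm hv hB z).trans ?_
  have h1 : Ep q (fun ω => steinG z (∑ i, ξ i (ω i)) - steinG z (∑ i, ξ i (ω i) - 2 * B))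
      ≤ Ep q (fun ω => 2 * B * ((∑ i, ξ i (ω i)) ^ 2 + 3)) := by
    refine Ep_mono hq0 fun ω => (steinG_sub_le (by linarith)).trans ?_
    have : |∑ i, ξ i (ω i)| + 1 ≤ ((∑ i, ξ i (ω i)) ^ 2 + 3) / 2 := by
      rw [← sq_abs (∑ i, ξ i (ω i))]
      nlinarith [sq_nonneg (|∑ i, ξ i (ω i)| - 1)]
    nlinarith
  rw [Ep_const_mul, Ep_add, Ep_sq_sum hq1 hm, hv, Ep_const hq1] at h1
  linarith

lemma exp_le_cubic {x : ℝ} (hx : |x| ≤ 1) : Real.exp x ≤ 1 + x + x ^ 2 / 2 + |x| ^ 3 := by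
  have h := Real.exp_bound hx (n := 3) (by norm_num)
  simp [Finset.sum_range_succ, Nat.factorial] at h
  have := (abs_le.1 h).2
  nlinarith [pow_nonneg (abs_nonneg x) 3]

lemma exp_le_quadratic {x : ℝ} (hx : |x| ≤ 1) : Real.exp x ≤ 1 + x + x ^ 2 := by
  have h := Real.exp_bound hx (n := 2) (by norm_num)
  simp [Finset.sum_range_succ, Nat.factorial] at h
  have := (abs_le.1 h).2
  nlinarith [sq_nonneg x]

/-- Moment generating function of a sum of independent centred bounded variables. -/
lemma mgf_le {q ξ : ι → α → ℝ} {B t : ℝ} (hq0 : ∀ i a, 0 ≤ q i a)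
    (hq1 : ∀ i, ∑ a, q i a = 1)
    (hm : ∀ i, ∑ a, q i a * ξ i a = 0) (hv : ∑ i, ∑ a, q i a * ξ i a ^ 2 = 1)
    (hB : ∀ i a, |ξ i a| ≤ B) (ht : 0 ≤ t) (htB : t * B ≤ 1) :
    Ep q (fun ω => Real.exp (t * ∑ i, ξ i (ω i))) ≤ Real.exp (t ^ 2 / 2 + B * t ^ 3) := by
  have e : (fun ω : ι → α => Real.exp (t * ∑ i, ξ i (ω i)))
      = fun ω => ∏ i, Real.exp (t * ξ i (ω i)) := by
    funext ω; rw [Finset.mul_sum, Real.exp_sum]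
  rw [e, Ep_prod q (fun i a => Real.exp (t * ξ i a))]
  have h1 : ∀ i, ∑ a, q i a * Real.exp (t * ξ i a)
      ≤ Real.exp ((t ^ 2 / 2 + B * t ^ 3) * ∑ a, q i a * ξ i a ^ 2) := by
    intro i
    have h2 : ∑ a, q i a * Real.exp (t * ξ i a)
        ≤ ∑ a, (q i a + t * (q i a * ξ i a) + (t ^ 2 / 2 + B * t ^ 3) * (q i a * ξ i a ^ 2)) := by
      refine Finset.sum_le_sum fun a _ => ?_
      have hb := hB i a
      have h3 : |t * ξ i a| ≤ 1 := by
        rw [abs_mul, abs_of_nonneg ht]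
        exact (mul_le_mul_of_nonneg_left hb ht).trans htB
      have h4 := exp_le_cubic h3
      have h5 : |t * ξ i a| ^ 3 ≤ B * t ^ 3 * ξ i a ^ 2 := by
        rw [abs_mul, abs_of_nonneg ht, mul_pow, pow_succ |ξ i a|, sq_abs]
        have : ξ i a ^ 2 * |ξ i a| ≤ ξ i a ^ 2 * B := mul_le_mul_of_nonneg_left hb (sq_nonneg _)
        nlinarith [pow_nonneg ht 3]
      have h6 : Real.exp (t * ξ i a)
          ≤ 1 + t * ξ i a + (t ^ 2 / 2 + B * t ^ 3) * ξ i a ^ 2 := by nlinarith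
      have := mul_le_mul_of_nonneg_left h6 (hq0 i a)
      linarith
    rw [Finset.sum_add_distrib, Finset.sum_add_distrib, ← Finset.mul_sum, ← Finset.mul_sum,
      hq1, hm] at h2
    have := Real.add_one_le_exp ((t ^ 2 / 2 + B * t ^ 3) * ∑ a, q i a * ξ i a ^ 2)
    linarith
  refine (Finset.prod_le_prod (fun i _ => Finset.sum_nonneg fun a _ =>
    mul_nonneg (hq0 i a) (Real.exp_pos _).le) fun i _ => h1 i).trans_eq ?_
  rw [← Real.exp_sum, ← Finset.mul_sum, hv, mul_one]

end NormalApprox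

section ModerateDeviations

variable {ι α : Type*} [Fintype ι] [DecidableEq ι] [Fintype α]

/-- The Gaussian weight on `[0, z]` is dominated by exponential tilts at integer parameters,
whose expectations are controlled by the moment generating function. -/
lemma exp_sq_le_sum {z : ℝ} (hz : 0 ≤ z) (w : ℝ) :
    Real.exp (min (max w 0) z ^ 2 / 2)
      ≤ ∑ j ∈ Finset.range (⌊z⌋₊ + 1), 2 * Real.exp (-((j : ℝ) ^ 2 / 2)) * Real.exp (j * w) := by
  set u := min (max w 0) z with hu
  have hu0 : 0 ≤ u := le_min (le_max_right _ _) hz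
  have huz : u ≤ z := min_le_right _ _
  set j := ⌊u⌋₊ with hj
  have hj1 : (j : ℝ) ≤ u := Nat.floor_le hu0
  have hj2 : u < j + 1 := Nat.lt_floor_add_one u
  have hjm : j ∈ Finset.range (⌊z⌋₊ + 1) :=
    Finset.mem_range.2 (Nat.lt_succ_of_le (Nat.floor_mono huz))
  refine le_trans ?_ (Finset.single_le_sum
    (f := fun j : ℕ => 2 * Real.exp (-((j : ℝ) ^ 2 / 2)) * Real.exp (j * w))
    (fun i _ => by positivity) hjm)
  have h1 : (j : ℝ) * u ≤ j * w := by
    rcases le_total 0 w with h | h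
    · have : u ≤ w := (min_le_left _ _).trans (max_eq_left h).le
      exact mul_le_mul_of_nonneg_left this (Nat.cast_nonneg j)
    · have h0 : u = 0 := by rw [hu, max_eq_right h, min_eq_left hz]
      have : (j : ℝ) = 0 := by simp [hj, h0]
      simp [this]
  have h2 : Real.exp (1 / 2) ≤ 2 := by
    have := exp_le_quadratic (x := 1 / 2) (by norm_num [abs_of_pos])
    linarith
  calc Real.exp (u ^ 2 / 2) ≤ Real.exp (1 / 2 + (-((j : ℝ) ^ 2 / 2) + j * w)) := by
        apply Real.exp_le_exp.2
        have : (u - j) ^ 2 ≤ 1 := by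
          rw [sq_le_one_iff_abs_le_one, abs_le]; constructor <;> linarith
        nlinarith
    _ = Real.exp (1 / 2) * (Real.exp (-((j : ℝ) ^ 2 / 2)) * Real.exp (j * w)) := by
        rw [Real.exp_add, Real.exp_add]
    _ ≤ 2 * (Real.exp (-((j : ℝ) ^ 2 / 2)) * Real.exp (j * w)) :=
        mul_le_mul_of_nonneg_right h2 (by positivity)
    _ = _ := by ring

/-- Moderate-deviation refinement of the Berry–Esseen bound: for `z` up to order `B ^ (-1/3)` the
error is relative to the Gaussian tail. -/
lemma moderate_deviation {q ξ : ι → α → ℝ} {B z : ℝ} (hq0 : ∀ i a, 0 ≤ q i a)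
    (hq1 : ∀ i, ∑ a, q i a = 1)
    (hm : ∀ i, ∑ a, q i a * ξ i a = 0) (hv : ∑ i, ∑ a, q i a * ξ i a ^ 2 = 1)
    (hB0 : 0 ≤ B) (hB : ∀ i a, |ξ i a| ≤ B) (hz : 0 ≤ z) (hzB : B * (1 + z) ^ 3 ≤ 1) :
    Ep q (fun ω => if ∑ i, ξ i (ω i) ≤ z - 2 * B then 1 else 0)
      ≤ gPhi z + 264 * (B * (1 + z) ^ 3) * (1 - gPhi z) := by
  refine (stein_ineq hq0 hq1 hm hv hB z).trans ?_
  have hz0 := tail_nonneg z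
  set A := 22 * (2 * B) * (1 + z) ^ 2 * (1 - gPhi z) with hA
  have hA0 : 0 ≤ A := by positivity
  have h1 : Ep q (fun ω => steinG z (∑ i, ξ i (ω i)) - steinG z (∑ i, ξ i (ω i) - 2 * B))
      ≤ A * ∑ j ∈ Finset.range (⌊z⌋₊ + 1), 2 * Real.exp (-((j : ℝ) ^ 2 / 2)) *
        Ep q (fun ω => Real.exp (j * ∑ i, ξ i (ω i))) := by
    simp_rw [← Ep_const_mul]
    rw [← Ep_sum, ← Ep_const_mul]
    refine Ep_mono hq0 fun ω => (steinG_sub_le_tail hz (by linarith)).trans ?_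
    exact mul_le_mul_of_nonneg_left (exp_sq_le_sum hz _) hA0
  have h2 : ∀ j ∈ Finset.range (⌊z⌋₊ + 1), 2 * Real.exp (-((j : ℝ) ^ 2 / 2)) *
      Ep q (fun ω => Real.exp (j * ∑ i, ξ i (ω i))) ≤ 6 := by
    intro j hj
    have hjz : (j : ℝ) ≤ z := by
      have : j ≤ ⌊z⌋₊ := Nat.lt_succ_iff.1 (Finset.mem_range.1 hj)
      exact (Nat.cast_le.2 this).trans (Nat.floor_le hz)
    have hj0 : (0 : ℝ) ≤ j := Nat.cast_nonneg j
    have hj3 : B * (j : ℝ) ^ 3 ≤ 1 := by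
      refine le_trans (mul_le_mul_of_nonneg_left ?_ hB0) hzB
      exact pow_le_pow_left₀ hj0 (by linarith) 3
    have hj1 : (j : ℝ) * B ≤ 1 := by
      have : (j : ℝ) ≤ (1 + z) ^ 3 := by nlinarith [mul_nonneg hz hz, pow_nonneg hz 3]
      nlinarith
    have := mgf_le hq0 hq1 hm hv hB hj0 hj1
    calc _ ≤ 2 * Real.exp (-((j : ℝ) ^ 2 / 2)) * Real.exp ((j : ℝ) ^ 2 / 2 + B * (j : ℝ) ^ 3) :=
          mul_le_mul_of_nonneg_left this (by positivity)
      _ = 2 * Real.exp (B * (j : ℝ) ^ 3) := by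
          rw [mul_assoc, ← Real.exp_add]; ring_nf
      _ ≤ 2 * Real.exp 1 := by
          have := Real.exp_le_exp.2 hj3
          linarith
      _ ≤ 6 := by
          have := exp_le_quadratic (x := 1) (by norm_num)
          linarith
  have h3 := Finset.sum_le_sum h2
  rw [Finset.sum_const, Finset.card_range, nsmul_eq_mul] at h3
  have h4 : ((⌊z⌋₊ + 1 : ℕ) : ℝ) ≤ 1 + z := by
    push_cast; linarith [Nat.floor_le hz]
  have h5 : A * ∑ j ∈ Finset.range (⌊z⌋₊ + 1), 2 * Real.exp (-((j : ℝ) ^ 2 / 2)) *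
        Ep q (fun ω => Real.exp (j * ∑ i, ξ i (ω i))) ≤ A * ((1 + z) * 6) := by
    refine mul_le_mul_of_nonneg_left (h3.trans ?_) hA0
    nlinarith
  have h6 : A * ((1 + z) * 6) = 264 * (B * (1 + z) ^ 3) * (1 - gPhi z) := by rw [hA]; ring
  linarith

/-- Chernoff bound for a sum of independent centred variables bounded by `A`. -/
lemma chernoff {q ξ : ι → α → ℝ} {A t s : ℝ} (hq0 : ∀ i a, 0 ≤ q i a)
    (hq1 : ∀ i, ∑ a, q i a = 1)
    (hm : ∀ i, ∑ a, q i a * ξ i a = 0) (hA : ∀ i a, |ξ i a| ≤ A) (ht : 0 ≤ t) (htA : t * A ≤ 1) :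
    Ep q (fun ω => if s ≤ ∑ i, ξ i (ω i) then 1 else 0)
      ≤ Real.exp (-(t * s) + Fintype.card ι * (t * A) ^ 2) := by
  have h1 : Ep q (fun ω => if s ≤ ∑ i, ξ i (ω i) then 1 else 0)
      ≤ Ep q (fun ω => Real.exp (-(t * s)) * ∏ i, Real.exp (t * ξ i (ω i))) := by
    refine Ep_mono hq0 fun ω => ?_
    rw [← Real.exp_sum, ← Finset.mul_sum, ← Real.exp_add]
    split_ifs with h
    · exact Real.one_le_exp (by nlinarith)
    · exact (Real.exp_pos _).le
  refine h1.trans ?_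
  rw [Ep_const_mul, Ep_prod q (fun i a => Real.exp (t * ξ i a)), Real.exp_add]
  refine mul_le_mul_of_nonneg_left ?_ (Real.exp_pos _).le
  have h2 : ∀ i, ∑ a, q i a * Real.exp (t * ξ i a) ≤ Real.exp ((t * A) ^ 2) := by
    intro i
    have h2 : ∑ a, q i a * Real.exp (t * ξ i a)
        ≤ ∑ a, (q i a + t * (q i a * ξ i a) + q i a * (t * A) ^ 2) := by
      refine Finset.sum_le_sum fun a _ => ?_
      have h3 : |t * ξ i a| ≤ t * A := by
        rw [abs_mul, abs_of_nonneg ht]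
        exact mul_le_mul_of_nonneg_left (hA i a) ht
      have h4 := exp_le_quadratic (h3.trans htA)
      have h5 : (t * ξ i a) ^ 2 ≤ (t * A) ^ 2 := sq_le_sq.2 (h3.trans (le_abs_self _))
      have := mul_le_mul_of_nonneg_left (h4.trans (add_le_add_right h5 _)) (hq0 i a)
      linarith
    rw [Finset.sum_add_distrib, Finset.sum_add_distrib, ← Finset.mul_sum, ← Finset.sum_mul,
      hq1, hm] at h2
    have := Real.add_one_le_exp ((t * A) ^ 2)
    linarith
  refine (Finset.prod_le_prod (fun i _ => Finset.sum_nonneg fun a _ =>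
    mul_nonneg (hq0 i a) (Real.exp_pos _).le) fun i _ => h2 i).trans_eq ?_
  rw [← Real.exp_sum, Finset.sum_const, nsmul_eq_mul]; rfl

end ModerateDeviations

lemma pow_sub_pow_le_mul {a b : ℝ} (hb : 0 ≤ b) (hab : b ≤ a) (K : ℕ) :
    a ^ (K + 1) - b ^ (K + 1) ≤ (K + 1) * (a - b) * a ^ K := by
  induction K with
  | zero => simp
  | succ K ih =>
    have h1 : b ^ (K + 1) ≤ a ^ (K + 1) := pow_le_pow_left₀ hb hab _
    have h2 : a ^ (K + 1 + 1) - b ^ (K + 1 + 1)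
        = a * (a ^ (K + 1) - b ^ (K + 1)) + (a - b) * b ^ (K + 1) := by ring
    have h3 : a * (a ^ (K + 1) - b ^ (K + 1)) ≤ a * ((K + 1) * (a - b) * a ^ K) :=
      mul_le_mul_of_nonneg_left ih (hb.trans hab)
    have h4 : (a - b) * b ^ (K + 1) ≤ (a - b) * a ^ (K + 1) :=
      mul_le_mul_of_nonneg_left h1 (by linarith)
    rw [h2]; push_cast
    calc _ ≤ a * ((K + 1) * (a - b) * a ^ K) + (a - b) * a ^ (K + 1) := add_le_add h3 h4
      _ = _ := by ring

/-- The probability of exactly one success in `K + 1` trials is at most one. -/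
lemma mul_one_sub_pow_le {x : ℝ} (h0 : 0 ≤ x) (h1 : x ≤ 1) (K : ℕ) :
    (K + 1) * x * (1 - x) ^ K ≤ 1 := by
  have h2 : 1 + K * x ≤ (1 + x) ^ K := one_add_mul_le_pow (by linarith) K
  have h3 : (1 - x) ^ K * (1 + x) ^ K ≤ 1 := by
    rw [← mul_pow]; exact pow_le_one₀ (by nlinarith) (by nlinarith)
  have h4 : 0 ≤ (1 - x) ^ K := pow_nonneg (by linarith) K
  nlinarith

/-- Comparison of the distribution functions of the maxima of `K` independent copies, given the
Berry–Esseen and moderate-deviation comparisons `a ↔ Φ(z)` for a single copy. The `ℓ`-term is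
the better one when `K` is large. -/
lemma pow_normal_approx {a B z ℓ : ℝ} {K : ℕ} (hK : 0 < K) (ha0 : 0 ≤ a) (ha1 : a ≤ 1)
    (hB0 : 0 ≤ B) (hbe : a ≤ gPhi z + 8 * B) (hℓ : 0 ≤ ℓ) (hBℓ : 528 * (B * (1 + ℓ) ^ 3) ≤ 1)
    (hmd : 0 ≤ z → B * (1 + z) ^ 3 ≤ 1 →
      a ≤ gPhi z + 264 * (B * (1 + z) ^ 3) * (1 - gPhi z)) :
    a ^ K ≤ gPhi z ^ K + min (8 * B * K) (528 * (B * (1 + ℓ) ^ 3) + K * Real.exp (-(ℓ ^ 2) / 2)) := by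
  have hb0 := gPhi_nonneg z
  have hb1 := gPhi_le_one z
  have hE := Real.exp_pos (-(ℓ ^ 2) / 2)
  obtain ⟨k, rfl⟩ : ∃ k, K = k + 1 := ⟨K - 1, by omega⟩
  have hK0 : (0 : ℝ) < ((k + 1 : ℕ) : ℝ) := by positivity
  rw [← sub_le_iff_le_add']
  rcases le_total a (gPhi z) with hab | hab
  · have : a ^ (k + 1) ≤ gPhi z ^ (k + 1) := pow_le_pow_left₀ ha0 hab _
    exact (sub_nonpos.2 this).trans (le_min (by positivity) (by positivity))
  have hpow := pow_sub_pow_le_mul hb0 hab k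
  have hak : a ^ k ≤ 1 := pow_le_one₀ ha0 ha1
  refine le_min ?_ ?_
  · refine hpow.trans ?_
    push_cast
    have : (↑k + 1) * (a - gPhi z) * a ^ k ≤ (↑k + 1) * (a - gPhi z) * 1 :=
      mul_le_mul_of_nonneg_left hak (mul_nonneg (by positivity) (by linarith))
    nlinarith
  have hℓ1 : 1 ≤ (1 + ℓ) ^ 3 := one_le_pow₀ (by linarith)
  have hB1 : B ≤ B * (1 + ℓ) ^ 3 := le_mul_of_one_le_right hB0 hℓ1
  rcases lt_or_ge z 0 with hz | hz
  · have h1 : gPhi z ≤ 1 / 2 := by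
      rw [← gPhi_zero]; exact gPhi_strictMono.monotone hz.le
    have h2 : a ≤ 3 / 5 := by linarith
    have h3 : a ^ k ≤ (1 - 2 / 5) ^ k := pow_le_pow_left₀ ha0 (by linarith) _
    have h4 := mul_one_sub_pow_le (x := 2 / 5) (by norm_num) (by norm_num) k
    have h5 : (↑k + 1) * (a - gPhi z) * a ^ k ≤ (↑k + 1) * (8 * B) * (1 - 2 / 5) ^ k := by
      refine mul_le_mul (mul_le_mul_of_nonneg_left (by linarith) (by positivity)) h3
        (pow_nonneg ha0 _) (by positivity)
    have h6 : (↑k + 1) * (8 * B) * (1 - 2 / 5) ^ k ≤ 20 * B := by nlinarith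
    have h7 : 0 ≤ ((k + 1 : ℕ) : ℝ) * Real.exp (-(ℓ ^ 2) / 2) := by positivity
    linarith
  rcases le_or_gt z ℓ with hzl | hzl
  · have hcube : (1 + z) ^ 3 ≤ (1 + ℓ) ^ 3 := pow_le_pow_left₀ (by linarith) (by linarith) 3
    have hBz : B * (1 + z) ^ 3 ≤ B * (1 + ℓ) ^ 3 := mul_le_mul_of_nonneg_left hcube hB0
    have h1 := hmd hz (by linarith)
    set η := 264 * (B * (1 + ℓ) ^ 3) with hη
    have hp0 := tail_nonneg z
    set p := 1 - gPhi z with hp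
    have h2 : a - gPhi z ≤ η * p := by
      have : 264 * (B * (1 + z) ^ 3) * p ≤ η * p :=
        mul_le_mul_of_nonneg_right (by linarith) hp0
      linarith
    have hη0 : 0 ≤ η := by positivity
    have h3 : a ≤ 1 - p / 2 := by
      have : η * p ≤ 1 / 2 * p := mul_le_mul_of_nonneg_right (by linarith) hp0
      linarith
    have h4 : a ^ k ≤ (1 - p / 2) ^ k := pow_le_pow_left₀ ha0 h3 _
    have h5 := mul_one_sub_pow_le (x := p / 2) (by linarith) (by linarith) k
    have h6 : (↑k + 1) * (a - gPhi z) * a ^ k ≤ (↑k + 1) * (η * p) * (1 - p / 2) ^ k :=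
      mul_le_mul (mul_le_mul_of_nonneg_left h2 (by positivity)) h4
        (pow_nonneg ha0 _) (by positivity)
    have h7 : (↑k + 1) * (η * p) * (1 - p / 2) ^ k ≤ 2 * η := by
      have : (↑k + 1) * (η * p) * (1 - p / 2) ^ k
          = 2 * η * ((↑k + 1) * (p / 2) * (1 - p / 2) ^ k) := by ring
      rw [this]
      exact mul_le_of_le_one_right (by linarith) h5
    have h8 : 0 ≤ ((k + 1 : ℕ) : ℝ) * Real.exp (-(ℓ ^ 2) / 2) := by positivity
    linarith
  · have h1 := gauss_tail_le hℓ
    have h2 : gPhi ℓ ≤ gPhi z := gPhi_strictMono.monotone hzl.le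
    have h3 : 1 + ((k + 1 : ℕ) : ℝ) * (gPhi z - 1) ≤ (1 + (gPhi z - 1)) ^ (k + 1) :=
      one_add_mul_le_pow (by linarith) _
    have h4 : a ^ (k + 1) ≤ 1 := pow_le_one₀ ha0 ha1
    have h5 : ((k + 1 : ℕ) : ℝ) * (1 - gPhi z)
        ≤ ((k + 1 : ℕ) : ℝ) * Real.exp (-(ℓ ^ 2) / 2) := by
      refine mul_le_mul_of_nonneg_left ?_ hK0.le
      linarith
    have h6 : (1 + (gPhi z - 1)) ^ (k + 1) = gPhi z ^ (k + 1) := by congr 1; ring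
    rw [h6] at h3
    have h7 : 0 ≤ 528 * (B * (1 + ℓ) ^ 3) := by positivity
    nlinarith

/-! ### The distribution function of `S_K` -/

/-- The law of `K` independent standard Gaussians. -/
def gaussPi (K : ℕ) : Measure (Fin K → ℝ) :=
  Measure.pi fun _ : Fin K => ProbabilityTheory.gaussianReal 0 1

instance (K : ℕ) : IsProbabilityMeasure (gaussPi K) := by
  unfold gaussPi; infer_instance

lemma measurable_iSup_coord (K : ℕ) : Measurable fun ω : Fin K → ℝ => ⨆ k, ω k :=
  Measurable.iSup fun k => measurable_pi_apply k

lemma iSup_le_iff_fin {K : ℕ} (hK : 0 < K) (ω : Fin K → ℝ) (x : ℝ) :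
    (⨆ k, ω k) ≤ x ↔ ∀ k, ω k ≤ x := by
  have : Nonempty (Fin K) := ⟨⟨0, hK⟩⟩
  exact ciSup_le_iff (Set.finite_range ω).bddAbove

lemma gaussPi_iSup_le {K : ℕ} (hK : 0 < K) (x : ℝ) :
    (gaussPi K).real {ω | (⨆ k, ω k) ≤ x} = gPhi x ^ K := by
  have h : {ω : Fin K → ℝ | (⨆ k, ω k) ≤ x} = Set.pi Set.univ fun _ => Set.Iic x := by
    ext ω
    rw [Set.mem_ofPred, iSup_le_iff_fin hK]
    exact ⟨fun h k _ => h k, fun h k => h k trivial⟩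
  rw [h, gaussPi, Measure.real, Measure.pi_pi, ENNReal.toReal_prod]
  simp [gPhi, Measure.real]

lemma FSK_eq_prod (V1 V2 : ℝ) (K : ℕ) (s : ℝ) :
    FSK V1 V2 K s = ((ProbabilityTheory.gaussianReal 0 1).prod (gaussPi K)).real
      {x | Real.sqrt V2 * x.1 + Real.sqrt V1 * (⨆ k, x.2 k) ≤ s} := by
  have hmp := measurePreserving_piFinSuccAbove
    (fun _ : Fin (K + 1) => ProbabilityTheory.gaussianReal 0 1) 0
  have hms : MeasurableSet {x : ℝ × (Fin K → ℝ) |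
      Real.sqrt V2 * x.1 + Real.sqrt V1 * (⨆ k, x.2 k) ≤ s} := by
    refine measurableSet_le ?_ measurable_const
    exact (measurable_const.mul measurable_fst).add
      (measurable_const.mul ((measurable_iSup_coord K).comp measurable_snd))
  rw [FSK, Measure.real]
  congr 1
  exact (hmp.measure_preimage hms.nullMeasurableSet)

lemma measurableSet_FSK (V1 V2 : ℝ) (K : ℕ) (s : ℝ) : MeasurableSet {x : ℝ × (Fin K → ℝ) |
    Real.sqrt V2 * x.1 + Real.sqrt V1 * (⨆ k, x.2 k) ≤ s} := by
  refine measurableSet_le ?_ measurable_const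
  exact (measurable_const.mul measurable_fst).add
    (measurable_const.mul ((measurable_iSup_coord K).comp measurable_snd))

/-- `F_{S_K}` obtained by conditioning on `Z₀`. -/
lemma FSK_eq_integral_pow {V1 V2 : ℝ} (hV1 : 0 < V1) {K : ℕ} (hK : 0 < K) (s : ℝ) :
    FSK V1 V2 K s = ∫ z, gPhi ((s - Real.sqrt V2 * z) / Real.sqrt V1) ^ K
      ∂(ProbabilityTheory.gaussianReal 0 1) := by
  have h1 : 0 < Real.sqrt V1 := Real.sqrt_pos.2 hV1
  have hmeas := measurableSet_FSK V1 V2 K s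
  rw [FSK_eq_prod, Measure.real, Measure.prod_apply hmeas, ← integral_toReal]
  · refine integral_congr_ae (Filter.Eventually.of_forall fun z => ?_)
    simp only
    rw [← gaussPi_iSup_le hK, Measure.real]
    congr 2
    ext ω
    simp only [Set.mem_preimage, Set.mem_ofPred_eq]
    rw [le_div_iff₀ h1]
    constructor <;> intro h <;> linarith
  · exact (measurable_measure_prodMk_left hmeas).aemeasurable
  · exact Filter.Eventually.of_forall fun z => measure_lt_top _ _

/-- `F_{S_K}` obtained by conditioning on the maximum. -/
lemma FSK_eq_integral_max {V1 V2 : ℝ} (hV2 : 0 < V2) {K : ℕ} (s : ℝ) :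
    FSK V1 V2 K s = ∫ ω, gPhi ((s - Real.sqrt V1 * (⨆ k, ω k)) / Real.sqrt V2) ∂(gaussPi K) := by
  have h1 : 0 < Real.sqrt V2 := Real.sqrt_pos.2 hV2
  have hmeas := measurableSet_FSK V1 V2 K s
  rw [FSK_eq_prod, Measure.real, Measure.prod_apply_symm hmeas, ← integral_toReal]
  · refine integral_congr_ae (Filter.Eventually.of_forall fun ω => ?_)
    simp only
    rw [gPhi, Measure.real]
    congr 2
    ext z
    simp only [Set.mem_preimage, Set.mem_ofPred_eq, Set.mem_Iic]
    rw [le_div_iff₀ h1]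
    constructor <;> intro h <;> linarith
  · exact (measurable_measure_prodMk_right hmeas).aemeasurable
  · exact Filter.Eventually.of_forall fun z => measure_lt_top _ _

lemma integrable_gPhi_comp {Ω : Type*} [MeasurableSpace Ω] {μ : Measure Ω} [IsFiniteMeasure μ]
    {f : Ω → ℝ} (hf : Measurable f) : Integrable (fun ω => gPhi (f ω)) μ := by
  refine Integrable.of_bound (C := 1) (continuous_gPhi.measurable.comp hf).aestronglyMeasurable
    (Filter.Eventually.of_forall fun ω => ?_)
  simp only [Real.norm_eq_abs, abs_of_nonneg (gPhi_nonneg _)]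
  exact gPhi_le_one _

lemma measurable_FSK_arg (V1 V2 : ℝ) (K : ℕ) (s : ℝ) : Measurable fun ω : Fin K → ℝ =>
    (s - Real.sqrt V1 * (⨆ k, ω k)) / Real.sqrt V2 :=
  (measurable_const.sub (measurable_const.mul (measurable_iSup_coord K))).div_const _

lemma FSK_mono (V1 V2 : ℝ) (K : ℕ) : Monotone (FSK V1 V2 K) := by
  intro s t hst
  rw [FSK_eq_prod, FSK_eq_prod]
  exact measureReal_mono fun x (hx : _ ≤ s) => hx.trans hst

/-- The median-type location `τ` of the maximum of `K` Gaussians. -/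
lemma exists_tau {K : ℕ} (hK : 0 < K) :
    ∃ τ : ℝ, 0 ≤ τ ∧ K * (1 - gPhi τ) = 1 / 2 ∧ τ ^ 2 ≤ 2 * Real.log K := by
  have hK1 : (1 : ℝ) ≤ K := by exact_mod_cast hK
  have hK0 : (0 : ℝ) < K := by linarith
  have hlim : Filter.Tendsto (fun x => gPhi x) Filter.atTop (nhds 1) := tendsto_gPhi_atTop
  obtain ⟨x, hx, hx0⟩ : ∃ x, 1 - 1 / (2 * (K : ℝ)) < gPhi x ∧ 0 ≤ x := by
    have h1 : ∀ᶠ x in Filter.atTop, 1 - 1 / (2 * (K : ℝ)) < gPhi x :=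
      hlim.eventually (lt_mem_nhds (by
        have : 0 < 1 / (2 * (K : ℝ)) := by positivity
        linarith))
    exact (h1.and (Filter.eventually_ge_atTop 0)).exists
  have hmem : 1 - 1 / (2 * (K : ℝ)) ∈ Set.Icc (gPhi 0) (gPhi x) := by
    refine ⟨?_, hx.le⟩
    rw [gPhi_zero]
    have : 1 / (2 * (K : ℝ)) ≤ 1 / 2 := by
      apply one_div_le_one_div_of_le <;> linarith
    linarith
  obtain ⟨τ, hτ, hτe⟩ := intermediate_value_Icc hx0 continuous_gPhi.continuousOn hmem
  have e : K * (1 - gPhi τ) = 1 / 2 := by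
    rw [hτe]; field_simp; ring
  refine ⟨τ, hτ.1, e, ?_⟩
  have h2 := gauss_tail_le hτ.1
  have h3 : 1 ≤ K * Real.exp (-(τ ^ 2) / 2) := by nlinarith
  have h4 := Real.log_le_log one_pos h3
  rw [Real.log_one, Real.log_mul hK0.ne' (Real.exp_pos _).ne', Real.log_exp] at h4
  linarith

/-- Concentration of the maximum of `K` Gaussians around `τ`, uniformly in `K`. -/
lemma max_concentration {K : ℕ} (hK : 0 < K) {τ r : ℝ} (hτ : 0 ≤ τ)
    (he : K * (1 - gPhi τ) = 1 / 2) (hr : 0 ≤ r) :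
    1 - Real.exp (-(r ^ 2) / 16) ≤ gPhi (τ + r) ^ K ∧
      gPhi (τ - r) ^ K ≤ Real.exp (-(r ^ 2) / 16) := by
  have hK0 : (0 : ℝ) < K := by exact_mod_cast hK
  constructor
  · have h1 := gauss_tail_shift hτ hr
    have h2 : 1 + (K : ℝ) * (gPhi (τ + r) - 1) ≤ (1 + (gPhi (τ + r) - 1)) ^ K :=
      one_add_mul_le_pow (by linarith [gPhi_nonneg (τ + r)]) _
    have h3 : (1 + (gPhi (τ + r) - 1)) = gPhi (τ + r) := by ring
    rw [h3] at h2
    have h4 : (K : ℝ) * (1 - gPhi (τ + r)) ≤ Real.exp (-(r ^ 2) / 2) * (1 / 2) := by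
      rw [← he]; nlinarith
    have h5 : Real.exp (-(r ^ 2) / 2) ≤ Real.exp (-(r ^ 2) / 16) :=
      Real.exp_le_exp.2 (by nlinarith [sq_nonneg r])
    have := Real.exp_pos (-(r ^ 2) / 2)
    linarith
  · rcases le_total (r / 2) τ with h | h
    · have h0 : gPhi (τ - r) ≤ gPhi (τ - r / 2) := gPhi_strictMono.monotone (by linarith)
      have h1 := gauss_tail_shift (x := τ - r / 2) (r := r / 2) (by linarith) (by linarith)
      rw [sub_add_cancel] at h1
      have h2 : gPhi (τ - r) ≤ Real.exp (-(1 - gPhi (τ - r / 2))) := by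
        have := Real.add_one_le_exp (-(1 - gPhi (τ - r / 2)))
        linarith
      refine (pow_le_pow_left₀ (gPhi_nonneg _) h2 K).trans ?_
      rw [← Real.exp_nat_mul]
      apply Real.exp_le_exp.2
      have h3 : 1 / 2 ≤ Real.exp (-((r / 2) ^ 2) / 2) * (K * (1 - gPhi (τ - r / 2))) := by
        rw [← he]; nlinarith
      have h4 : Real.exp ((r / 2) ^ 2 / 2) * Real.exp (-((r / 2) ^ 2) / 2) = 1 := by
        rw [← Real.exp_add]; simp [neg_div]
      have h5 : Real.exp ((r / 2) ^ 2 / 2) * (1 / 2) ≤ K * (1 - gPhi (τ - r / 2)) := by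
        calc _ ≤ Real.exp ((r / 2) ^ 2 / 2) *
              (Real.exp (-((r / 2) ^ 2) / 2) * (K * (1 - gPhi (τ - r / 2)))) :=
              mul_le_mul_of_nonneg_left h3 (Real.exp_pos _).le
          _ = _ := by rw [← mul_assoc, h4, one_mul]
      have h6 := Real.add_one_le_exp ((r / 2) ^ 2 / 2)
      nlinarith
    · have h0 : gPhi (τ - r) ≤ gPhi (-(r / 2)) := gPhi_strictMono.monotone (by linarith)
      have h1 := gauss_tail_le (r := r / 2) (by linarith)
      rw [gPhi_neg] at h0
      have h2 : gPhi (τ - r) ^ K ≤ gPhi (τ - r) :=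
        pow_le_of_le_one (gPhi_nonneg _) (gPhi_le_one _) hK.ne'
      have h3 : Real.exp (-((r / 2) ^ 2) / 2) ≤ Real.exp (-(r ^ 2) / 16) :=
        Real.exp_le_exp.2 (by nlinarith [sq_nonneg r])
      have := Real.exp_pos (-((r / 2) ^ 2) / 2)
      linarith

set_option maxHeartbeats 1000000 in
/-- Uniformly in `K`: the `ε`-quantile of `S_K` is of order `√(log K)`, and the distribution
function has slope bounded below at the quantile. -/
lemma FSKinv_spec {V1 V2 ε : ℝ} (hV1 : 0 < V1) (hV2 : 0 < V2) (h0 : 0 < ε) (h1 : ε < 1) :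
    ∃ c h0 R : ℝ, 0 < c ∧ 0 < h0 ∧ 0 < R ∧ ∀ K : ℕ, 0 < K →
      |FSKinv V1 V2 K ε| ≤ R * (1 + Real.sqrt (Real.log K)) ∧
      ∀ h, 0 < h → h ≤ h0 → FSK V1 V2 K (FSKinv V1 V2 K ε - h) ≤ ε - c * h := by
  set σ1 := Real.sqrt V1 with hσ1
  set σ2 := Real.sqrt V2 with hσ2
  have hs1 : 0 < σ1 := Real.sqrt_pos.2 hV1
  have hs2 : 0 < σ2 := Real.sqrt_pos.2 hV2
  obtain ⟨η, hη0, hηε, hηε'⟩ : ∃ η : ℝ, 0 < η ∧ 4 * η ≤ ε ∧ 4 * η ≤ 1 - ε :=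
    ⟨min (ε / 4) ((1 - ε) / 4), lt_min (by linarith) (by linarith),
      by linarith [min_le_left (ε / 4) ((1 - ε) / 4)],
      by linarith [min_le_right (ε / 4) ((1 - ε) / 4)]⟩
  have hη1 : η < 1 := by linarith
  set r := 4 * Real.sqrt (-Real.log η) with hr
  have hlog : 0 ≤ -Real.log η := by linarith [Real.log_neg hη0 hη1]
  have hr0 : 0 ≤ r := by positivity
  have hrη : Real.exp (-(r ^ 2) / 16) = η := by
    rw [hr, mul_pow, Real.sq_sqrt hlog]
    rw [show -((4 : ℝ) ^ 2 * -Real.log η) / 16 = Real.log η by ring, Real.exp_log hη0]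
  have hPr : 1 - η ≤ gPhi r := by
    have := gauss_tail_le hr0
    have h2 : Real.exp (-(r ^ 2) / 2) ≤ Real.exp (-(r ^ 2) / 16) :=
      Real.exp_le_exp.2 (by nlinarith [sq_nonneg r])
    have := Real.exp_pos (-(r ^ 2) / 2)
    linarith
  set R' := (σ1 + σ2) * r with hR'
  have hR'0 : 0 ≤ R' := by positivity
  set R2 := (R' + σ2 + σ1 * r) / σ2 with hR2
  refine ⟨1 / 2 * gphi (R2 + 1) / (2 * σ2), σ2, R' + 2 * σ1,
    by have := gphi_pos (R2 + 1); positivity, hs2, by positivity, fun K hK => ?_⟩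
  obtain ⟨τ, hτ0, hτe, hτK⟩ := exists_tau hK
  obtain ⟨hup, hlo⟩ := max_concentration hK hτ0 hτe hr0
  rw [hrη] at hup hlo
  rw [← gaussPi_iSup_le hK] at hup hlo
  set μ := gaussPi K with hμ
  set U := {ω : Fin K → ℝ | (⨆ k, ω k) ≤ τ + r} with hU
  set D := {ω : Fin K → ℝ | (⨆ k, ω k) ≤ τ - r} with hD
  have hUm : MeasurableSet U := measurableSet_le (measurable_iSup_coord K) measurable_const
  have hDm : MeasurableSet D := measurableSet_le (measurable_iSup_coord K) measurable_const
  set F := FSK V1 V2 K with hF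
  have hFi : ∀ s, F s = ∫ ω, gPhi ((s - σ1 * (⨆ k, ω k)) / σ2) ∂μ :=
    fun s => FSK_eq_integral_max hV2 s
  have hFint : ∀ s, Integrable (fun ω : Fin K → ℝ => gPhi ((s - σ1 * (⨆ k, ω k)) / σ2)) μ :=
    fun s => integrable_gPhi_comp (measurable_FSK_arg V1 V2 K s)
  have hFmono : Monotone F := FSK_mono V1 V2 K
  -- The quantile lies within `R'` of `σ1 * τ`, since the maximum is within `r` of `τ` and
  -- `Z₀` within `r` of `0`, each up to probability `η`.
  have hhi : ε < F (σ1 * τ + R') := by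
    have h2 : ∫ ω, U.indicator (fun _ => gPhi r) ω ∂μ ≤ F (σ1 * τ + R') := by
      rw [hFi]
      refine integral_mono ((integrable_const _).indicator hUm) (hFint _) fun ω => ?_
      by_cases hω : ω ∈ U
      · rw [Set.indicator_of_mem hω]
        refine gPhi_strictMono.monotone ?_
        rw [le_div_iff₀ hs2, hR']
        have : σ1 * (⨆ k, ω k) ≤ σ1 * (τ + r) := mul_le_mul_of_nonneg_left hω hs1.le
        linarith
      · rw [Set.indicator_of_notMem hω]; exact gPhi_nonneg _
    rw [integral_indicator_const _ hUm, smul_eq_mul] at h2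
    have h3 : (1 - η) * (1 - η) ≤ μ.real U * gPhi r :=
      mul_le_mul hup hPr (by linarith) measureReal_nonneg
    nlinarith
  have hlow : F (σ1 * τ - R') ≤ ε := by
    have h2 : F (σ1 * τ - R') ≤ ∫ ω, (D.indicator (fun _ => (1 : ℝ)) ω + gPhi (-r)) ∂μ := by
      rw [hFi]
      refine integral_mono (hFint _)
        (((integrable_const _).indicator hDm).add (integrable_const _)) fun ω => ?_
      by_cases hω : ω ∈ D
      · simp only [Set.indicator_of_mem hω]
        linarith [gPhi_le_one ((σ1 * τ - R' - σ1 * ⨆ k, ω k) / σ2), gPhi_nonneg (-r)]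
      · simp only [Set.indicator_of_notMem hω, zero_add]
        refine gPhi_strictMono.monotone ?_
        rw [div_le_iff₀ hs2, hR']
        have hω' : τ - r < ⨆ k, ω k := not_le.1 hω
        have : σ1 * (τ - r) ≤ σ1 * (⨆ k, ω k) := mul_le_mul_of_nonneg_left hω'.le hs1.le
        linarith
    rw [integral_add ((integrable_const _).indicator hDm) (integrable_const _),
      integral_indicator_const _ hDm, integral_const, smul_eq_mul, smul_eq_mul, mul_one,
      probReal_univ, one_mul, gPhi_neg] at h2
    linarith
  have hbdd : BddAbove {s | F s ≤ ε} := ⟨σ1 * τ + R', fun s hs => by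
    by_contra hlt
    exact absurd (hhi.trans_le (hFmono (not_le.1 hlt).le)) (not_lt.2 hs)⟩
  have hne : (σ1 * τ - R') ∈ {s | F s ≤ ε} := hlow
  set Q := FSKinv V1 V2 K ε with hQ
  have hQ1 : σ1 * τ - R' ≤ Q := le_csSup hbdd hne
  have hQ2 : Q ≤ σ1 * τ + R' := csSup_le ⟨_, hne⟩ fun s hs => by
    by_contra hlt
    exact absurd (hhi.trans_le (hFmono (not_le.1 hlt).le)) (not_lt.2 hs)
  refine ⟨?_, fun h hh hhs => ?_⟩
  · have hτ2 : τ ≤ 2 * Real.sqrt (Real.log K) := by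
      have h3 : τ ≤ Real.sqrt (2 * Real.log K) := Real.le_sqrt_of_sq_le hτK
      have hL0 : 0 ≤ Real.log K := Real.log_natCast_nonneg K
      refine h3.trans (Real.sqrt_le_left ?_ |>.2 ?_) <;> first | positivity | skip
      rw [mul_pow, Real.sq_sqrt hL0]; linarith
    have hS := Real.sqrt_nonneg (Real.log K)
    have h4 : σ1 * τ ≤ σ1 * (2 * Real.sqrt (Real.log K)) := mul_le_mul_of_nonneg_left hτ2 hs1.le
    have h5 : 0 ≤ σ1 * τ := by positivity
    have h6 : 0 ≤ R' * Real.sqrt (Real.log K) := by positivity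
    rw [abs_le]; constructor <;> nlinarith
  · -- points below the quantile lie in the sublevel set
    have hF1 : F (Q - h / 2) ≤ ε := by
      obtain ⟨s, hs, hs'⟩ := exists_lt_of_lt_csSup ⟨_, hne⟩ (show Q - h / 2 < sSup {s | F s ≤ ε} by
        change Q - h / 2 < Q; linarith)
      exact (hFmono hs'.le).trans hs
    set G := U \ D with hG
    have hGm : MeasurableSet G := hUm.diff hDm
    have hGp : 1 / 2 ≤ μ.real G := by
      have h2 : μ.real U ≤ μ.real G + μ.real D := by
        refine (measureReal_mono (fun ω hω => ?_)).trans (measureReal_union_le G D)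
        by_cases hd : ω ∈ D
        · exact Or.inr hd
        · exact Or.inl ⟨hω, hd⟩
      linarith
    have h3 : ∫ ω, G.indicator (fun _ => h / (2 * σ2) * gphi (R2 + 1)) ω ∂μ
        ≤ F (Q - h / 2) - F (Q - h) := by
      rw [hFi, hFi, ← integral_sub (hFint _) (hFint _)]
      refine integral_mono ((integrable_const _).indicator hGm) ((hFint _).sub (hFint _))
        fun ω => ?_
      have hm : gPhi ((Q - h - σ1 * (⨆ k, ω k)) / σ2)
          ≤ gPhi ((Q - h / 2 - σ1 * (⨆ k, ω k)) / σ2) := by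
        refine gPhi_strictMono.monotone ?_
        gcongr; linarith
      by_cases hω : ω ∈ G
      · rw [Set.indicator_of_mem hω]
        have hω1 : (⨆ k, ω k) ≤ τ + r := hω.1
        have hω2 : τ - r < ⨆ k, ω k := not_le.1 hω.2
        have b1 : σ1 * (⨆ k, ω k) ≤ σ1 * (τ + r) := mul_le_mul_of_nonneg_left hω1 hs1.le
        have b2 : σ1 * (τ - r) ≤ σ1 * (⨆ k, ω k) := mul_le_mul_of_nonneg_left hω2.le hs1.le
        have h4 : |(Q - h / 2 - σ1 * (⨆ k, ω k)) / σ2| ≤ R2 := by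
          rw [abs_div, abs_of_pos hs2, hR2]
          refine div_le_div_of_nonneg_right ?_ hs2.le
          rw [abs_le]; constructor <;> linarith
        have h5 := le_gPhi_sub h4 (h := h / (2 * σ2)) (by positivity)
          (by rw [div_le_one (by positivity)]; linarith)
        have h6 : (Q - h / 2 - σ1 * (⨆ k, ω k)) / σ2 - h / (2 * σ2)
            = (Q - h - σ1 * (⨆ k, ω k)) / σ2 := by field_simp; ring
        rw [h6] at h5
        exact h5
      · rw [Set.indicator_of_notMem hω]
        simp only
        linarith
    rw [integral_indicator_const _ hGm, smul_eq_mul] at h3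
    have h7 : 1 / 2 * (h / (2 * σ2) * gphi (R2 + 1))
        ≤ μ.real G * (h / (2 * σ2) * gphi (R2 + 1)) :=
      mul_le_mul_of_nonneg_right hGp (by have := gphi_pos (R2 + 1); positivity)
    have h8 : 1 / 2 * gphi (R2 + 1) / (2 * σ2) * h = 1 / 2 * (h / (2 * σ2) * gphi (R2 + 1)) := by
      ring
    rw [h8]
    linarith

/-! ### One-shot random coding with a facilitator -/

section RandomCoding

lemma Ep_exists_le {ι α : Type*} [Fintype ι] [DecidableEq ι] [Fintype α] {q : ι → α → ℝ}
    (hq0 : ∀ i a, 0 ≤ q i a) (hq1 : ∀ i, ∑ a, q i a = 1) {F : (ι → α) → ℝ} {c : ℝ}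
    (h : Ep q F ≤ c) : ∃ ω, F ω ≤ c := by
  have hne : Nonempty (ι → α) := by
    by_contra hE
    have : IsEmpty (ι → α) := not_nonempty_iff.1 hE
    have h1 := Ep_const hq1 (1 : ℝ)
    simp [Ep] at h1
  obtain ⟨ω0, hω0⟩ := Finite.exists_min F
  refine ⟨ω0, le_trans ?_ h⟩
  rw [← Ep_const hq1 (F ω0)]
  exact Ep_mono hq0 hω0

/-- Two independent families combine into one family of pairs. -/
lemma Ep_pair {ι α β : Type*} [Fintype ι] [DecidableEq ι] [Fintype α] [Fintype β]
    (q : ι → α → ℝ) (q' : ι → β → ℝ) (F : (ι → α) → (ι → β) → ℝ) :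
    Ep q (fun a => Ep q' (fun b => F a b))
      = Ep (fun i (x : α × β) => q i x.1 * q' i x.2)
          (fun ω => F (fun i => (ω i).1) (fun i => (ω i).2)) := by
  unfold Ep
  simp_rw [Finset.mul_sum]
  rw [← Fintype.sum_prod_type']
  refine (Fintype.sum_equiv (Equiv.arrowProdEquivProdArrow ι (fun _ => α) (fun _ => β)) _ _
    fun ω => ?_).symm
  simp only [Equiv.arrowProdEquivProdArrow, Equiv.coe_fn_mk, Finset.prod_mul_distrib]
  ring

/-- Change of measure: a codeword drawn independently of the output `y` passes a likelihood-ratio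
test with threshold `c` with probability at most `1 / c`. -/
lemma markov_test {α : Type*} [Fintype α] {P w : α → ℝ} {Q c : ℝ} (hP : ∀ a, 0 ≤ P a)
    (hw : ∀ a, 0 ≤ w a) (hQ : ∑ a, P a * w a = Q) (hc : 0 < c) :
    ∑ a, P a * (if c * Q < w a then 1 else 0) ≤ 1 / c := by
  have hQ0 : 0 ≤ Q := hQ ▸ Finset.sum_nonneg fun a _ => mul_nonneg (hP a) (hw a)
  rcases hQ0.eq_or_lt with h0 | h0
  · have h1 : ∀ a, P a * w a = 0 := by
      have := (Finset.sum_eq_zero_iff_of_nonneg (s := Finset.univ)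
        (fun a _ => mul_nonneg (hP a) (hw a))).1 (hQ.trans h0.symm)
      exact fun a => this a (Finset.mem_univ a)
    have h2 : ∀ a, P a * (if c * Q < w a then (1 : ℝ) else 0) = 0 := by
      intro a
      rw [← h0, mul_zero]
      split_ifs with h
      · rcases mul_eq_zero.1 (h1 a) with h | h'
        · simp [h]
        · exact absurd h' h.ne'
      · simp
    simp only [h2, Finset.sum_const_zero]; positivity
  · rw [le_div_iff₀ hc]
    have h1 : (∑ a, P a * (if c * Q < w a then (1 : ℝ) else 0)) * c * Q ≤ 1 * Q := by
      rw [one_mul, Finset.sum_mul, Finset.sum_mul]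
      conv_rhs => rw [← hQ]
      refine Finset.sum_le_sum fun a _ => ?_
      split_ifs with h
      · have := mul_le_mul_of_nonneg_left h.le (hP a)
        linarith
      · simpa using mul_nonneg (hP a) (hw a)
    exact le_of_mul_le_mul_right h1 h0

variable {A B D : Type*} [Fintype A] [Fintype B] [Fintype D]

/-- The three-fold likelihood-ratio test of the decoder. -/
def Test (Wn : A → B → D → ℝ) (Q : D → ℝ) (Q2 : B → D → ℝ) (Q1 : A → D → ℝ) (c c1 c2 : ℝ)
    (a : A) (b : B) (y : D) : Prop :=
  c * Q y < Wn a b y ∧ c1 * Q2 b y < Wn a b y ∧ c2 * Q1 a y < Wn a b y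

/-- Indicator function of a proposition. -/
def ind (p : Prop) : ℝ := if p then 1 else 0

lemma ind_nonneg (p : Prop) : 0 ≤ ind p := by unfold ind; split_ifs <;> norm_num

lemma ind_le_one (p : Prop) : ind p ≤ 1 := by unfold ind; split_ifs <;> norm_num

lemma ind_mono {p q : Prop} (h : p → q) : ind p ≤ ind q := by
  unfold ind; split_ifs with h1 h2 <;> first | exact absurd (h h1) h2 | norm_num

/-- The law of a block of `K` codewords. -/
def blockLaw (K : ℕ) (P : A → ℝ) (a : Fin K → A) : ℝ := ∏ k, P (a k)

lemma blockLaw_nonneg {K : ℕ} {P : A → ℝ} (hP : IsPMF P) (a : Fin K → A) : 0 ≤ blockLaw K P a :=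
  Finset.prod_nonneg fun _ _ => hP.1 _

lemma sum_blockLaw_mul {K : ℕ} (P : A → ℝ) (F : (Fin K → A) → ℝ) :
    ∑ a, blockLaw K P a * F a = Ep (fun _ => P) F := rfl

lemma sum_blockLaw {K : ℕ} {P : A → ℝ} (hP : IsPMF P) : ∑ a, blockLaw K P a = 1 := by
  have := Ep_const (ι := Fin K) (q := fun _ => P) (fun _ => hP.2) 1
  simpa [Ep, blockLaw] using this

/-- Resampling one message's block: an upper bound for the resampled function bounds the
expectation. -/
lemma Ep_block_le {M K : ℕ} {P : A → ℝ} (hP : IsPMF P) (m : Fin M)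
    {F : (Fin M → Fin K → A) → ℝ} {c : ℝ}
    (h : ∀ C, Ep (fun _ => P) (fun a => F (Function.update C m a)) ≤ c) :
    Ep (fun _ => blockLaw K P) F ≤ c := by
  rw [Ep_resample m (sum_blockLaw hP), ← Ep_const (ι := Fin M) (q := fun _ => blockLaw K P)
    (fun _ => sum_blockLaw hP) c]
  exact Ep_mono (fun _ => blockLaw_nonneg hP) h

lemma Ep_swap {ι κ α β : Type*} [Fintype ι] [DecidableEq ι] [Fintype κ] [DecidableEq κ]
    [Fintype α] [Fintype β] (q : ι → α → ℝ) (q' : κ → β → ℝ) (F : (ι → α) → (κ → β) → ℝ) :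
    Ep q (fun a => Ep q' (fun b => F a b)) = Ep q' (fun b => Ep q (fun a => F a b)) := by
  unfold Ep
  simp_rw [Finset.mul_sum]
  rw [Finset.sum_comm]
  exact Finset.sum_congr rfl fun _ _ => Finset.sum_congr rfl fun _ _ => by ring

/-- Expected contribution of a competing message pair that differs in the first message only. -/
lemma wrong_first {K : ℕ} {P1 : A → ℝ} {Wn : A → B → D → ℝ} {Q2 : B → D → ℝ} {c1 : ℝ}
    (hP1 : IsPMF P1) (hW0 : ∀ a b y, 0 ≤ Wn a b y)
    (hQ2 : ∀ b y, ∑ a, P1 a * Wn a b y = Q2 b y) (hc1 : 0 < c1)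
    (w : D → ℝ) (hw0 : ∀ y, 0 ≤ w y) (hw1 : ∑ y, w y = 1) (b : Fin K → B) :
    Ep (fun _ => P1) (fun a : Fin K → A =>
      ∑ y, w y * ∑ k, ind (c1 * Q2 (b k) y < Wn (a k) (b k) y)) ≤ K / c1 := by
  rw [Ep_sum]
  have : ∀ y ∈ Finset.univ, Ep (fun _ => P1) (fun a : Fin K → A =>
      w y * ∑ k, ind (c1 * Q2 (b k) y < Wn (a k) (b k) y)) ≤ w y * (K / c1) := by
    intro y _
    rw [Ep_const_mul, Ep_sum]
    refine mul_le_mul_of_nonneg_left ?_ (hw0 y)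
    have h2 : ∀ k ∈ Finset.univ, Ep (fun _ => P1)
        (fun a : Fin K → A => ind (c1 * Q2 (b k) y < Wn (a k) (b k) y)) ≤ 1 / c1 := by
      intro k _
      rw [Ep_single (fun _ => hP1.2) k (fun x => ind (c1 * Q2 (b k) y < Wn x (b k) y))]
      exact markov_test hP1.1 (fun a => hW0 a (b k) y) (hQ2 (b k) y) hc1
    refine (Finset.sum_le_sum h2).trans_eq ?_
    rw [Finset.sum_const, Finset.card_univ, Fintype.card_fin, nsmul_eq_mul]; ring
  refine (Finset.sum_le_sum this).trans_eq ?_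
  rw [← Finset.sum_mul, hw1, one_mul]

/-- Expected contribution of a competing message pair that differs in both messages. -/
lemma wrong_both {K : ℕ} {P1 : A → ℝ} {P2 : B → ℝ} {Wn : A → B → D → ℝ} {Q : D → ℝ} {c : ℝ}
    (hP1 : IsPMF P1) (hP2 : IsPMF P2) (hW0 : ∀ a b y, 0 ≤ Wn a b y)
    (hQ : ∀ y, ∑ a, ∑ b, P1 a * P2 b * Wn a b y = Q y) (hc : 0 < c)
    (w : D → ℝ) (hw0 : ∀ y, 0 ≤ w y) (hw1 : ∑ y, w y = 1) :
    Ep (fun _ => P1) (fun a : Fin K → A => Ep (fun _ => P2) (fun b : Fin K → B =>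
      ∑ y, w y * ∑ k, ind (c * Q y < Wn (a k) (b k) y))) ≤ K / c := by
  rw [Ep_pair]
  have hpm : IsPMF (fun x : A × B => P1 x.1 * P2 x.2) := by
    refine ⟨fun x => mul_nonneg (hP1.1 _) (hP2.1 _), ?_⟩
    rw [Fintype.sum_prod_type]
    simp_rw [← Finset.mul_sum, hP2.2, mul_one, hP1.2]
  exact wrong_first (A := A × B) (B := Unit) (K := K) (P1 := fun x => P1 x.1 * P2 x.2)
    (Wn := fun x _ y => Wn x.1 x.2 y) (Q2 := fun _ y => Q y) hpm
    (fun x _ y => hW0 x.1 x.2 y)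
    (fun _ y => by rw [Fintype.sum_prod_type]; exact hQ y) hc w hw0 hw1 (fun _ => ())

end RandomCoding

section OneShot

variable {A B D : Type*} [Fintype A] [Fintype B] [Fintype D]

lemma Ep_le_const {ι α : Type*} [Fintype ι] [DecidableEq ι] [Fintype α] {q : ι → α → ℝ}
    (hq0 : ∀ i a, 0 ≤ q i a) (hq1 : ∀ i, ∑ a, q i a = 1) {F : (ι → α) → ℝ} {c : ℝ}
    (h : ∀ ω, F ω ≤ c) : Ep q F ≤ c := by
  rw [← Ep_const hq1 c]; exact Ep_mono hq0 h

lemma Ep_block_single {M K : ℕ} {P : A → ℝ} (hP : IsPMF P) (m : Fin M) (G : (Fin K → A) → ℝ) :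
    Ep (fun _ => blockLaw K P) (fun C : Fin M → Fin K → A => G (C m)) = Ep (fun _ => P) G :=
  Ep_single (fun _ => sum_blockLaw hP) m G

/-- The decision that the message pair `m` passes the test at output `y`, for the codebooks
`C1`, `C2` and the facilitator rule `sel`. -/
def passes (Wn : A → B → D → ℝ) (Q : D → ℝ) (Q2 : B → D → ℝ) (Q1 : A → D → ℝ) (c c1 c2 : ℝ)
    {K M1 M2 : ℕ} (sel : (Fin K → A) → (Fin K → B) → Fin K) (C1 : Fin M1 → Fin K → A)
    (C2 : Fin M2 → Fin K → B) (m : Fin M1 × Fin M2) (y : D) : Prop :=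
  Test Wn Q Q2 Q1 c c1 c2 (C1 m.1 (sel (C1 m.1) (C2 m.2))) (C2 m.2 (sel (C1 m.1) (C2 m.2))) y

/-- Expected probability that a fixed wrong message pair passes the test. -/
lemma wrong_pass {K M1 M2 : ℕ} {P1 : A → ℝ} {P2 : B → ℝ} {Wn : A → B → D → ℝ} {Q : D → ℝ}
    {Q2 : B → D → ℝ} {Q1 : A → D → ℝ} {c c1 c2 : ℝ} (hP1 : IsPMF P1) (hP2 : IsPMF P2)
    (hW0 : ∀ a b y, 0 ≤ Wn a b y) (hW1 : ∀ a b, ∑ y, Wn a b y = 1)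
    (hQ : ∀ y, ∑ a, ∑ b, P1 a * P2 b * Wn a b y = Q y)
    (hQ2 : ∀ b y, ∑ a, P1 a * Wn a b y = Q2 b y) (hQ1 : ∀ a y, ∑ b, P2 b * Wn a b y = Q1 a y)
    (hc : 0 < c) (hc1 : 0 < c1) (hc2 : 0 < c2) (sel : (Fin K → A) → (Fin K → B) → Fin K)
    (m m' : Fin M1 × Fin M2) (hm : m' ≠ m) :
    Ep (fun _ => blockLaw K P1) (fun C1 : Fin M1 → Fin K → A =>
      Ep (fun _ => blockLaw K P2) (fun C2 : Fin M2 → Fin K → B =>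
        ∑ y, Wn (C1 m.1 (sel (C1 m.1) (C2 m.2))) (C2 m.2 (sel (C1 m.1) (C2 m.2))) y *
          ind (passes Wn Q Q2 Q1 c c1 c2 sel C1 C2 m' y)))
      ≤ K / c + (if m'.2 = m.2 then K / c1 else 0) + (if m'.1 = m.1 then K / c2 else 0) := by
  have p0 : 0 ≤ (K : ℝ) / c := by positivity
  have p1 : 0 ≤ (K : ℝ) / c1 := by positivity
  have p2 : 0 ≤ (K : ℝ) / c2 := by positivity
  have single : ∀ (f : Fin K → Prop) (k : Fin K) (p : Prop), (p → f k) →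
      ind p ≤ ∑ k, ind (f k) := fun f k p h =>
    (ind_mono h).trans (Finset.single_le_sum (f := fun k => ind (f k))
      (fun _ _ => ind_nonneg _) (Finset.mem_univ k))
  by_cases h1 : m'.1 = m.1
  · have h2 : m'.2 ≠ m.2 := fun h2 => hm (Prod.ext h1 h2)
    rw [if_neg h2, if_pos h1]
    suffices h : ∀ C1 : Fin M1 → Fin K → A, _ ≤ (K : ℝ) / c2 from
      (Ep_le_const (fun _ => blockLaw_nonneg hP1) (fun _ => sum_blockLaw hP1) h).trans
        (by linarith)
    intro C1
    refine Ep_block_le hP2 m'.2 fun C2 => ?_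
    refine le_trans (Ep_mono (fun _ => hP2.1) fun b => ?_)
      (wrong_first (A := B) (B := A) (P1 := P2) (Wn := fun b a y => Wn a b y) (Q2 := Q1) hP2
        (fun b a y => hW0 a b y) hQ1 hc2
        (fun y => Wn (C1 m.1 (sel (C1 m.1) (C2 m.2))) (C2 m.2 (sel (C1 m.1) (C2 m.2))) y)
        (fun y => hW0 _ _ y) (hW1 _ _) (C1 m.1))
    rw [Function.update_of_ne h2.symm]
    refine Finset.sum_le_sum fun y _ => mul_le_mul_of_nonneg_left ?_ (hW0 _ _ _)
    refine single (fun k => c2 * Q1 (C1 m.1 k) y < Wn (C1 m.1 k) (b k) y)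
      (sel (C1 m'.1) b) _ fun hp => ?_
    unfold passes Test at hp
    rw [Function.update_self, h1] at hp
    rw [h1]
    exact hp.2.2
  · by_cases h2 : m'.2 = m.2
    · rw [if_pos h2, if_neg h1, Ep_swap]
      suffices h : ∀ C2 : Fin M2 → Fin K → B, _ ≤ (K : ℝ) / c1 from
        (Ep_le_const (fun _ => blockLaw_nonneg hP2) (fun _ => sum_blockLaw hP2) h).trans
          (by linarith)
      intro C2
      refine Ep_block_le hP1 m'.1 fun C1 => ?_
      refine le_trans (Ep_mono (fun _ => hP1.1) fun a => ?_)
        (wrong_first (P1 := P1) (Wn := Wn) (Q2 := Q2) hP1 hW0 hQ2 hc1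
          (fun y => Wn (C1 m.1 (sel (C1 m.1) (C2 m.2))) (C2 m.2 (sel (C1 m.1) (C2 m.2))) y)
          (fun y => hW0 _ _ y) (hW1 _ _) (C2 m.2))
      rw [Function.update_of_ne (Ne.symm h1)]
      refine Finset.sum_le_sum fun y _ => mul_le_mul_of_nonneg_left ?_ (hW0 _ _ _)
      refine single (fun k => c1 * Q2 (C2 m.2 k) y < Wn (a k) (C2 m.2 k) y)
        (sel a (C2 m'.2)) _ fun hp => ?_
      unfold passes Test at hp
      rw [Function.update_self, h2] at hp
      rw [h2]
      exact hp.2.1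
    · rw [if_neg h2, if_neg h1]
      refine le_trans (Ep_block_le hP1 m'.1 (c := (K : ℝ) / c) fun C1 => ?_) (by linarith)
      rw [Ep_swap]
      refine Ep_block_le hP2 m'.2 fun C2 => ?_
      rw [Ep_swap]
      refine le_trans (Ep_mono (fun _ => hP1.1) fun a => Ep_mono (fun _ => hP2.1) fun b => ?_)
        (wrong_both (P1 := P1) (P2 := P2) (Wn := Wn) (Q := Q) hP1 hP2 hW0 hQ hc
          (fun y => Wn (C1 m.1 (sel (C1 m.1) (C2 m.2))) (C2 m.2 (sel (C1 m.1) (C2 m.2))) y)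
          (fun y => hW0 _ _ y) (hW1 _ _))
      rw [Function.update_of_ne (Ne.symm h1), Function.update_of_ne (Ne.symm h2)]
      refine Finset.sum_le_sum fun y _ => mul_le_mul_of_nonneg_left ?_ (hW0 _ _ _)
      refine single (fun k => c * Q y < Wn (a k) (b k) y) (sel a b) _ fun hp => ?_
      unfold passes Test at hp
      rw [Function.update_self, Function.update_self] at hp
      exact hp.1

/-- The transmitted pair fails the test: the joint condition is kept for the selected codewords,
the two marginal conditions are bounded by a union over all `K` codewords. -/
lemma correct_fail {K M1 M2 : ℕ} {P1 : A → ℝ} {P2 : B → ℝ} {Wn : A → B → D → ℝ} {Q : D → ℝ}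
    {Q2 : B → D → ℝ} {Q1 : A → D → ℝ} {c c1 c2 : ℝ} (hP1 : IsPMF P1) (hP2 : IsPMF P2)
    (hW0 : ∀ a b y, 0 ≤ Wn a b y) (sel : (Fin K → A) → (Fin K → B) → Fin K)
    (m : Fin M1 × Fin M2) :
    Ep (fun _ => blockLaw K P1) (fun C1 : Fin M1 → Fin K → A =>
      Ep (fun _ => blockLaw K P2) (fun C2 : Fin M2 → Fin K → B =>
        ∑ y, Wn (C1 m.1 (sel (C1 m.1) (C2 m.2))) (C2 m.2 (sel (C1 m.1) (C2 m.2))) y *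
          ind (¬ passes Wn Q Q2 Q1 c c1 c2 sel C1 C2 m y)))
      ≤ Ep (fun _ => P1) (fun a : Fin K → A => Ep (fun _ => P2) (fun b : Fin K → B =>
          ∑ y, Wn (a (sel a b)) (b (sel a b)) y * ind (Wn (a (sel a b)) (b (sel a b)) y ≤ c * Q y)))
        + K * (∑ a, ∑ b, P1 a * P2 b * ∑ y, Wn a b y * ind (Wn a b y ≤ c1 * Q2 b y))
        + K * (∑ a, ∑ b, P1 a * P2 b * ∑ y, Wn a b y * ind (Wn a b y ≤ c2 * Q1 a y)) := by
  have e : Ep (fun _ => blockLaw K P1) (fun C1 : Fin M1 → Fin K → A =>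
      Ep (fun _ => blockLaw K P2) (fun C2 : Fin M2 → Fin K → B =>
        ∑ y, Wn (C1 m.1 (sel (C1 m.1) (C2 m.2))) (C2 m.2 (sel (C1 m.1) (C2 m.2))) y *
          ind (¬ passes Wn Q Q2 Q1 c c1 c2 sel C1 C2 m y)))
      = Ep (fun _ => P1) (fun a : Fin K → A => Ep (fun _ => P2) (fun b : Fin K → B =>
          ∑ y, Wn (a (sel a b)) (b (sel a b)) y *
            ind (¬ Test Wn Q Q2 Q1 c c1 c2 (a (sel a b)) (b (sel a b)) y))) := by
    refine (Ep_block_single hP1 m.1 (fun a => Ep (fun _ => blockLaw K P2)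
      (fun C2 : Fin M2 → Fin K → B => ∑ y, Wn (a (sel a (C2 m.2))) (C2 m.2 (sel a (C2 m.2))) y *
        ind (¬ Test Wn Q Q2 Q1 c c1 c2 (a (sel a (C2 m.2))) (C2 m.2 (sel a (C2 m.2))) y)))).trans ?_
    congr 1; funext a
    exact Ep_block_single hP2 m.2 (fun b => ∑ y, Wn (a (sel a b)) (b (sel a b)) y *
      ind (¬ Test Wn Q Q2 Q1 c c1 c2 (a (sel a b)) (b (sel a b)) y))
  have hk : ∀ G : A → B → ℝ, Ep (fun _ => P1) (fun a : Fin K → A =>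
      Ep (fun _ => P2) (fun b : Fin K → B => ∑ k, G (a k) (b k)))
      = K * ∑ a, ∑ b, P1 a * P2 b * G a b := by
    intro G
    simp_rw [Ep_sum]
    have : ∀ k : Fin K, Ep (fun _ => P1) (fun a : Fin K → A =>
        Ep (fun _ => P2) (fun b : Fin K → B => G (a k) (b k)))
        = ∑ a, ∑ b, P1 a * P2 b * G a b := by
      intro k
      have h1 : ∀ a : Fin K → A, Ep (fun _ => P2) (fun b : Fin K → B => G (a k) (b k))
          = ∑ y, P2 y * G (a k) y := fun a => Ep_single (fun _ => hP2.2) k (fun y => G (a k) y)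
      simp_rw [h1]
      rw [Ep_single (fun _ => hP1.2) k (fun x => ∑ y, P2 y * G x y)]
      simp_rw [Finset.mul_sum, mul_assoc]
    simp_rw [this]
    rw [Finset.sum_const, Finset.card_univ, Fintype.card_fin, nsmul_eq_mul]
  rw [e, ← hk (fun a b => ∑ y, Wn a b y * ind (Wn a b y ≤ c1 * Q2 b y)),
    ← hk (fun a b => ∑ y, Wn a b y * ind (Wn a b y ≤ c2 * Q1 a y)), ← Ep_add, ← Ep_add]
  refine Ep_mono (fun _ => hP1.1) fun a => ?_
  rw [← Ep_add, ← Ep_add]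
  refine Ep_mono (fun _ => hP2.1) fun b => ?_
  set k := sel a b
  have hnn : ∀ (G : A → B → D → Prop) (k : Fin K),
      0 ≤ ∑ y, Wn (a k) (b k) y * ind (G (a k) (b k) y) := fun G k =>
    Finset.sum_nonneg fun y _ => mul_nonneg (hW0 _ _ _) (ind_nonneg _)
  have s1 := Finset.single_le_sum (s := Finset.univ)
    (f := fun k : Fin K => ∑ y, Wn (a k) (b k) y * ind (Wn (a k) (b k) y ≤ c1 * Q2 (b k) y))
    (fun k _ => hnn (fun a b y => Wn a b y ≤ c1 * Q2 b y) k) (Finset.mem_univ k)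
  have s2 := Finset.single_le_sum (s := Finset.univ)
    (f := fun k : Fin K => ∑ y, Wn (a k) (b k) y * ind (Wn (a k) (b k) y ≤ c2 * Q1 (a k) y))
    (fun k _ => hnn (fun a b y => Wn a b y ≤ c2 * Q1 a y) k) (Finset.mem_univ k)
  refine le_trans ?_ (add_le_add (add_le_add le_rfl s1) s2)
  rw [← Finset.sum_add_distrib, ← Finset.sum_add_distrib]
  refine Finset.sum_le_sum fun y _ => ?_
  rw [← mul_add, ← mul_add]
  refine mul_le_mul_of_nonneg_left ?_ (hW0 _ _ _)
  unfold Test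
  by_cases t1 : Wn (a k) (b k) y ≤ c * Q y
  · refine le_trans (ind_le_one _) ?_
    have e1 : ind (Wn (a k) (b k) y ≤ c * Q y) = 1 := if_pos t1
    rw [e1]
    linarith [ind_nonneg (Wn (a k) (b k) y ≤ c1 * Q2 (b k) y),
      ind_nonneg (Wn (a k) (b k) y ≤ c2 * Q1 (a k) y)]
  · by_cases t2 : Wn (a k) (b k) y ≤ c1 * Q2 (b k) y
    · refine le_trans (ind_le_one _) ?_
      have e1 : ind (Wn (a k) (b k) y ≤ c1 * Q2 (b k) y) = 1 := if_pos t2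
      rw [e1]
      linarith [ind_nonneg (Wn (a k) (b k) y ≤ c * Q y),
        ind_nonneg (Wn (a k) (b k) y ≤ c2 * Q1 (a k) y)]
    · have h3 : ind (¬ (c * Q y < Wn (a k) (b k) y ∧ c1 * Q2 (b k) y < Wn (a k) (b k) y ∧
          c2 * Q1 (a k) y < Wn (a k) (b k) y)) ≤ ind (Wn (a k) (b k) y ≤ c2 * Q1 (a k) y) := by
        refine ind_mono fun hh => ?_
        by_contra t3
        exact hh ⟨not_le.1 t1, not_le.1 t2, not_le.1 t3⟩
      linarith [ind_nonneg (Wn (a k) (b k) y ≤ c * Q y),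
        ind_nonneg (Wn (a k) (b k) y ≤ c1 * Q2 (b k) y)]

/-- One-shot achievability for the facilitated MAC. -/
lemma oneshot {K M1 M2 : ℕ} (hM1 : 0 < M1) (hM2 : 0 < M2)
    {P1 : A → ℝ} {P2 : B → ℝ} {Wn : A → B → D → ℝ} {Q : D → ℝ}
    {Q2 : B → D → ℝ} {Q1 : A → D → ℝ} {c c1 c2 : ℝ} (hP1 : IsPMF P1) (hP2 : IsPMF P2)
    (hW0 : ∀ a b y, 0 ≤ Wn a b y) (hW1 : ∀ a b, ∑ y, Wn a b y = 1)
    (hQ : ∀ y, ∑ a, ∑ b, P1 a * P2 b * Wn a b y = Q y)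
    (hQ2 : ∀ b y, ∑ a, P1 a * Wn a b y = Q2 b y) (hQ1 : ∀ a y, ∑ b, P2 b * Wn a b y = Q1 a y)
    (hc : 0 < c) (hc1 : 0 < c1) (hc2 : 0 < c2) (sel : (Fin K → A) → (Fin K → B) → Fin K) :
    ∃ (e : Fin M1 → Fin M2 → Fin K) (f1 : Fin M1 → Fin K → A) (f2 : Fin M2 → Fin K → B)
      (g : D → Fin M1 × Fin M2),
      (1 / ((M1 : ℝ) * M2)) * ∑ m1, ∑ m2, ∑ y : D,
        Wn (f1 m1 (e m1 m2)) (f2 m2 (e m1 m2)) y * (if g y = (m1, m2) then 0 else 1)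
      ≤ Ep (fun _ => P1) (fun a : Fin K → A => Ep (fun _ => P2) (fun b : Fin K → B =>
          ∑ y, Wn (a (sel a b)) (b (sel a b)) y * ind (Wn (a (sel a b)) (b (sel a b)) y ≤ c * Q y)))
        + K * (∑ a, ∑ b, P1 a * P2 b * ∑ y, Wn a b y * ind (Wn a b y ≤ c1 * Q2 b y))
        + K * (∑ a, ∑ b, P1 a * P2 b * ∑ y, Wn a b y * ind (Wn a b y ≤ c2 * Q1 a y))
        + (M1 * M2 * K / c + M1 * K / c1 + M2 * K / c2) := by
  set T := Ep (fun _ => P1) (fun a : Fin K → A => Ep (fun _ => P2) (fun b : Fin K → B =>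
          ∑ y, Wn (a (sel a b)) (b (sel a b)) y * ind (Wn (a (sel a b)) (b (sel a b)) y ≤ c * Q y)))
        + K * (∑ a, ∑ b, P1 a * P2 b * ∑ y, Wn a b y * ind (Wn a b y ≤ c1 * Q2 b y))
        + K * (∑ a, ∑ b, P1 a * P2 b * ∑ y, Wn a b y * ind (Wn a b y ≤ c2 * Q1 a y)) with hT
  have hM1' : (0 : ℝ) < M1 := by exact_mod_cast hM1
  have hM2' : (0 : ℝ) < M2 := by exact_mod_cast hM2
  let pss := fun (C1 : Fin M1 → Fin K → A) (C2 : Fin M2 → Fin K → B) (m : Fin M1 × Fin M2)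
    (y : D) => passes Wn Q Q2 Q1 c c1 c2 sel C1 C2 m y
  let wt := fun (C1 : Fin M1 → Fin K → A) (C2 : Fin M2 → Fin K → B) (m : Fin M1 × Fin M2)
    (y : D) => Wn (C1 m.1 (sel (C1 m.1) (C2 m.2))) (C2 m.2 (sel (C1 m.1) (C2 m.2))) y
  let g := fun (C1 : Fin M1 → Fin K → A) (C2 : Fin M2 → Fin K → B) (y : D) =>
    if h : ∃ m, pss C1 C2 m y then Classical.choose h else ((⟨0, hM1⟩, ⟨0, hM2⟩) : Fin M1 × Fin M2)
  -- union bound for the error event of this decoder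
  let E := fun C1 C2 (m : Fin M1 × Fin M2) =>
    ∑ y, wt C1 C2 m y * ind (¬ pss C1 C2 m y)
      + ∑ m' ∈ Finset.univ.erase m, ∑ y, wt C1 C2 m y * ind (pss C1 C2 m' y)
  have hE : ∀ C1 C2 m, ∑ y, wt C1 C2 m y * (if g C1 C2 y = m then 0 else 1) ≤ E C1 C2 m := by
    intro C1 C2 m
    simp only [E]
    rw [Finset.sum_comm, ← Finset.sum_add_distrib]
    refine Finset.sum_le_sum fun y _ => ?_
    rw [← Finset.mul_sum, ← mul_add]
    refine mul_le_mul_of_nonneg_left ?_ (hW0 _ _ _)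
    have hs0 : 0 ≤ ∑ m' ∈ Finset.univ.erase m, ind (pss C1 C2 m' y) :=
      Finset.sum_nonneg fun _ _ => ind_nonneg _
    have hn0 := ind_nonneg (¬ pss C1 C2 m y)
    split_ifs with hg
    · linarith
    · by_cases hp : pss C1 C2 m y
      · have hex : ∃ m, pss C1 C2 m y := ⟨m, hp⟩
        have hge : g C1 C2 y = Classical.choose hex := dif_pos hex
        have hgp : pss C1 C2 (g C1 C2 y) y := hge ▸ Classical.choose_spec hex
        have h1 : ind (pss C1 C2 (g C1 C2 y) y) = 1 := if_pos hgp
        have := Finset.single_le_sum (s := Finset.univ.erase m)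
          (f := fun m' => ind (pss C1 C2 m' y)) (fun _ _ => ind_nonneg _)
          (Finset.mem_erase.2 ⟨hg, Finset.mem_univ _⟩)
        simp only [h1] at this
        linarith
      · have h1 : ind (¬ pss C1 C2 m y) = 1 := if_pos hp
        linarith
  set β := (M1 * M2 * K / c + M1 * K / c1 + M2 * K / c2 : ℝ) with hβ
  have hEE : ∀ m, Ep (fun _ => blockLaw K P1) (fun C1 => Ep (fun _ => blockLaw K P2)
      (fun C2 => E C1 C2 m)) ≤ T + β := by
    intro m
    simp only [E]
    simp_rw [Ep_add, Ep_sum (Finset.univ.erase m)]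
    refine add_le_add (correct_fail hP1 hP2 hW0 sel m) ?_
    refine (Finset.sum_le_sum fun m' hm' => wrong_pass hP1 hP2 hW0 hW1 hQ hQ2 hQ1 hc hc1 hc2 sel
      m m' (Finset.ne_of_mem_erase hm')).trans ?_
    refine (Finset.sum_le_sum_of_subset_of_nonneg (Finset.erase_subset m Finset.univ)
      fun m' _ _ => ?_).trans_eq ?_
    · positivity
    · rw [Finset.sum_add_distrib, Finset.sum_add_distrib, Fintype.sum_prod_type,
        Fintype.sum_prod_type, Fintype.sum_prod_type_right]
      simp [hβ]
      ring
  have hfin : Ep (fun _ => blockLaw K P1) (fun C1 => Ep (fun _ => blockLaw K P2) (fun C2 =>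
      (1 / ((M1 : ℝ) * M2)) * ∑ m, E C1 C2 m)) ≤ T + β := by
    simp_rw [Ep_const_mul, Ep_sum]
    have h1 : ∑ m, Ep (fun _ => blockLaw K P1) (fun C1 => Ep (fun _ => blockLaw K P2)
      (fun C2 => E C1 C2 m)) ≤ ∑ m : Fin M1 × Fin M2, (T + β) :=
      Finset.sum_le_sum fun m _ => hEE m
    rw [Finset.sum_const, Finset.card_univ, Fintype.card_prod, Fintype.card_fin, Fintype.card_fin,
      nsmul_eq_mul] at h1
    push_cast at h1
    rw [one_div, inv_mul_le_iff₀ (by positivity)]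
    exact h1
  obtain ⟨C1, hC1⟩ := Ep_exists_le (fun _ => blockLaw_nonneg hP1) (fun _ => sum_blockLaw hP1) hfin
  obtain ⟨C2, hC2⟩ := Ep_exists_le (fun _ => blockLaw_nonneg hP2) (fun _ => sum_blockLaw hP2) hC1
  refine ⟨fun m1 m2 => sel (C1 m1) (C2 m2), C1, C2, g C1 C2, le_trans ?_ hC2⟩
  refine mul_le_mul_of_nonneg_left ?_ (by positivity)
  rw [Fintype.sum_prod_type]
  exact Finset.sum_le_sum fun m1 _ => Finset.sum_le_sum fun m2 _ => hE C1 C2 (m1, m2)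

end OneShot

/-! ### From sums of independent variables to `S_K` -/

section Transfer

/-- A family of pairs whose second component is drawn conditionally on the first. -/
lemma Ep_bind {ι α β : Type*} [Fintype ι] [DecidableEq ι] [Fintype α] [Fintype β]
    (q : ι → α → ℝ) (w : ι → α → β → ℝ) (F : (ι → α) → (ι → β) → ℝ) :
    Ep q (fun a => Ep (fun i => w i (a i)) (fun b => F a b))
      = Ep (fun i (x : α × β) => q i x.1 * w i x.1 x.2)
          (fun ω => F (fun i => (ω i).1) (fun i => (ω i).2)) := by
  unfold Ep
  simp_rw [Finset.mul_sum]
  rw [← Fintype.sum_prod_type']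
  refine (Fintype.sum_equiv (Equiv.arrowProdEquivProdArrow ι (fun _ => α) (fun _ => β)) _ _
    fun ω => ?_).symm
  simp only [Equiv.arrowProdEquivProdArrow, Equiv.coe_fn_mk, Finset.prod_mul_distrib]
  ring

variable {ι α : Type*} [Fintype ι] [DecidableEq ι] [Fintype α]

/-- Berry–Esseen for a sum whose variance `σ²` is only approximately equal to `v`. -/
lemma noise_be {q ξ : ι → α → ℝ} {B v ρ : ℝ} (hq0 : ∀ i a, 0 ≤ q i a)
    (hq1 : ∀ i, ∑ a, q i a = 1) (hm : ∀ i, ∑ a, q i a * ξ i a = 0)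
    (hB0 : 0 ≤ B) (hB : ∀ i a, |ξ i a| ≤ B) (hv : 0 < v) (hρ0 : 0 ≤ ρ) (hρ : ρ ≤ 1 / 2)
    (hvar : |(∑ i, ∑ a, q i a * ξ i a ^ 2) - v| ≤ ρ * v) (x : ℝ) :
    Ep q (fun ω => if ∑ i, ξ i (ω i) ≤ x then 1 else 0)
      ≤ gPhi (x / Real.sqrt v) + (4 * ρ + 20 * B / Real.sqrt v) := by
  set T := ∑ i, ∑ a, q i a * ξ i a ^ 2 with hT
  obtain ⟨hT1, hT2⟩ := abs_le.1 hvar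
  have hTv : v / 2 ≤ T := by nlinarith
  have hTv' : T ≤ 2 * v := by nlinarith
  have hT0 : 0 < T := by linarith
  set σ := Real.sqrt T with hσ
  set s := Real.sqrt v with hs
  have hσ0 : 0 < σ := Real.sqrt_pos.2 hT0
  have hs0 : 0 < s := Real.sqrt_pos.2 hv
  have hσ2 : σ ^ 2 = T := Real.sq_sqrt hT0.le
  have hs2 : s ^ 2 = v := Real.sq_sqrt hv.le
  have h1 : s ≤ 2 * σ := by
    refine (sq_le_sq₀ hs0.le (by positivity)).1 ?_
    nlinarith
  have h2 : σ ≤ 2 * s := by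
    refine (sq_le_sq₀ hσ0.le (by positivity)).1 ?_
    nlinarith
  have hbe := berry_esseen (q := q) (ξ := fun i a => ξ i a / σ) (B := B / σ) hq0 hq1
    (fun i => by
      have : ∑ a, q i a * (ξ i a / σ) = (∑ a, q i a * ξ i a) / σ := by
        rw [Finset.sum_div]; exact Finset.sum_congr rfl fun _ _ => by ring
      rw [this, hm, zero_div])
    (by
      have : ∀ i, ∑ a, q i a * (ξ i a / σ) ^ 2 = (∑ a, q i a * ξ i a ^ 2) / T := by
        intro i
        rw [Finset.sum_div, ← hσ2]; exact Finset.sum_congr rfl fun _ _ => by ring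
      simp_rw [this]
      rw [← Finset.sum_div]
      exact div_self hT0.ne')
    (by positivity)
    (fun i a => by
      rw [abs_div, abs_of_pos hσ0]
      exact div_le_div_of_nonneg_right (hB i a) hσ0.le) (x / σ + 2 * (B / σ))
  have e : (fun ω : ι → α => if ∑ i, ξ i (ω i) ≤ x then (1 : ℝ) else 0)
      = fun ω => if ∑ i, ξ i (ω i) / σ ≤ x / σ + 2 * (B / σ) - 2 * (B / σ) then 1 else 0 := by
    funext ω
    simp only [add_sub_cancel_right, ← Finset.sum_div, div_le_div_iff_of_pos_right hσ0]
  rw [e]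
  refine hbe.trans ?_
  have h3 := gPhi_sub_le (x := x / σ) (y := x / σ + 2 * (B / σ)) (by
    have : 0 ≤ B / σ := by positivity
    linarith)
  have h4 := gPhi_scale (a := s / σ) (x := x / s) (by rw [le_div_iff₀ hσ0]; linarith)
  have e2 : s / σ * (x / s) = x / σ := by field_simp
  rw [e2] at h4
  have h5 : |s / σ - 1| ≤ 2 * ρ := by
    have e3 : s / σ - 1 = (s - σ) / σ := by field_simp
    rw [e3, abs_div, abs_of_pos hσ0, div_le_iff₀ hσ0]
    have h6 : |s - σ| * (s + σ) ≤ ρ * v := by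
      rw [← abs_of_pos (show 0 < s + σ by linarith), ← abs_mul]
      have : (s - σ) * (s + σ) = -(T - v) := by rw [← hσ2, ← hs2]; ring
      rw [this, abs_neg]; exact hvar
    have h7 : |s - σ| * s ≤ (2 * ρ * σ) * s := by
      have : |s - σ| * σ ≥ 0 := by positivity
      have h8 : ρ * v ≤ 2 * ρ * σ * s := by
        rw [← hs2]; nlinarith [mul_nonneg hρ0 hs0.le]
      nlinarith
    exact le_of_mul_le_mul_right h7 hs0
  have h6 : B / σ ≤ 2 * (B / s) := by
    rw [div_le_iff₀ hσ0]
    have : 2 * (B / s) * σ = B * (2 * σ / s) := by ring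
    rw [this]
    exact le_mul_of_one_le_right hB0 (by rw [le_div_iff₀ hs0]; linarith)
  have e4 : 20 * B / s = 20 * (B / s) := by ring
  rw [e4]
  linarith

/-- Replacing each of the `K` Gaussian coordinates in the maximum by an independent copy of a
variable `U` whose maximum is close in law costs only the error `Δ`. -/
lemma max_transfer {q : α → ℝ} (hq : IsPMF q) {V1 V2 : ℝ} (hV1 : 0 < V1) (hV2 : 0 < V2)
    {K : ℕ} (hK : 0 < K) (U : α → ℝ) {δ Δ : ℝ}
    (h : ∀ x, (∑ a, q a * (if U a ≤ x - δ then 1 else 0)) ^ K ≤ gPhi x ^ K + Δ) (s : ℝ) :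
    Ep (fun _ : Fin K => q)
      (fun ω => gPhi ((s - Real.sqrt V1 * (⨆ k, U (ω k))) / Real.sqrt V2))
      ≤ FSK V1 V2 K (s + Real.sqrt V1 * δ) + Δ := by
  have h1 : 0 < Real.sqrt V1 := Real.sqrt_pos.2 hV1
  have h2 : 0 < Real.sqrt V2 := Real.sqrt_pos.2 hV2
  set γ := ProbabilityTheory.gaussianReal 0 1 with hγ
  have hset : ∀ ω : Fin K → α, MeasurableSet
      (Set.Iic ((s - Real.sqrt V1 * (⨆ k, U (ω k))) / Real.sqrt V2)) := fun ω => measurableSet_Iic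
  have e1 : ∀ ω : Fin K → α, gPhi ((s - Real.sqrt V1 * (⨆ k, U (ω k))) / Real.sqrt V2)
      = ∫ z, (Set.Iic ((s - Real.sqrt V1 * (⨆ k, U (ω k))) / Real.sqrt V2)).indicator
          (fun _ => (1 : ℝ)) z ∂γ := by
    intro ω
    rw [integral_indicator_const _ (hset ω), smul_eq_mul, mul_one]; rfl
  have e2 : Ep (fun _ : Fin K => q)
      (fun ω => gPhi ((s - Real.sqrt V1 * (⨆ k, U (ω k))) / Real.sqrt V2))
      = ∫ z, Ep (fun _ : Fin K => q) (fun ω =>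
        (Set.Iic ((s - Real.sqrt V1 * (⨆ k, U (ω k))) / Real.sqrt V2)).indicator
          (fun _ => (1 : ℝ)) z) ∂γ := by
    unfold Ep
    rw [integral_finsetSum _ fun ω _ =>
      (((integrable_const (1 : ℝ)).indicator (hset ω)).const_mul _)]
    refine Finset.sum_congr rfl fun ω _ => ?_
    beta_reduce
    rw [e1, integral_const_mul]
  have e3 : ∀ z, Ep (fun _ : Fin K => q) (fun ω =>
        (Set.Iic ((s - Real.sqrt V1 * (⨆ k, U (ω k))) / Real.sqrt V2)).indicator
          (fun _ => (1 : ℝ)) z)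
      = (∑ a, q a * (if U a ≤ (s - Real.sqrt V2 * z) / Real.sqrt V1 then 1 else 0)) ^ K := by
    intro z
    have := Ep_prod (fun _ : Fin K => q)
      (fun _ a => if U a ≤ (s - Real.sqrt V2 * z) / Real.sqrt V1 then (1 : ℝ) else 0)
    rw [Finset.prod_const, Finset.card_univ, Fintype.card_fin] at this
    rw [← this]
    congr 1; funext ω
    have hiff : z ∈ Set.Iic ((s - Real.sqrt V1 * (⨆ k, U (ω k))) / Real.sqrt V2)
        ↔ ∀ k, U (ω k) ≤ (s - Real.sqrt V2 * z) / Real.sqrt V1 := by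
      rw [← iSup_le_iff_fin hK, Set.mem_Iic, le_div_iff₀ h2, le_div_iff₀ h1]
      constructor <;> intro h <;> linarith
    by_cases hz : z ∈ Set.Iic ((s - Real.sqrt V1 * (⨆ k, U (ω k))) / Real.sqrt V2)
    · rw [Set.indicator_of_mem hz]
      symm
      exact Finset.prod_eq_one fun k _ => if_pos (hiff.1 hz k)
    · rw [Set.indicator_of_notMem hz]
      have : ∃ k, ¬ U (ω k) ≤ (s - Real.sqrt V2 * z) / Real.sqrt V1 := by
        by_contra hcon; push Not at hcon; exact hz (hiff.2 hcon)
      obtain ⟨k, hk⟩ := this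
      exact (Finset.prod_eq_zero (Finset.mem_univ k) (if_neg hk)).symm
  have e4 : FSK V1 V2 K (s + Real.sqrt V1 * δ) + Δ
      = ∫ z, (gPhi ((s + Real.sqrt V1 * δ - Real.sqrt V2 * z) / Real.sqrt V1) ^ K + Δ) ∂γ := by
    rw [integral_add _ (integrable_const _), ← FSK_eq_integral_pow hV1 hK, integral_const,
      probReal_univ, one_smul]
    refine Integrable.of_bound (C := 1) ?_ (Filter.Eventually.of_forall fun z => ?_)
    · refine ((continuous_gPhi.comp ?_).pow K).aestronglyMeasurable
      fun_prop
    · rw [Real.norm_eq_abs, abs_of_nonneg (pow_nonneg (gPhi_nonneg _) _)]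
      exact pow_le_one₀ (gPhi_nonneg _) (gPhi_le_one _)
  rw [e2, e4]
  refine integral_mono_of_nonneg (Filter.Eventually.of_forall fun z => ?_) ?_
    (Filter.Eventually.of_forall fun z => ?_)
  · exact Ep_nonneg (fun _ => hq.1) fun ω => Set.indicator_nonneg (fun _ _ => zero_le_one) _
  · refine Integrable.of_bound (C := 1 + |Δ|) ?_ (Filter.Eventually.of_forall fun z => ?_)
    · refine Continuous.aestronglyMeasurable ?_
      refine ((continuous_gPhi.comp ?_).pow K).add continuous_const
      fun_prop
    · refine (norm_add_le _ _).trans (add_le_add ?_ le_rfl)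
      rw [Real.norm_eq_abs, abs_of_nonneg (pow_nonneg (gPhi_nonneg _) _)]
      exact pow_le_one₀ (gPhi_nonneg _) (gPhi_le_one _)
  · simp only
    rw [e3]
    have := h ((s + Real.sqrt V1 * δ - Real.sqrt V2 * z) / Real.sqrt V1)
    have e5 : (s + Real.sqrt V1 * δ - Real.sqrt V2 * z) / Real.sqrt V1 - δ
        = (s - Real.sqrt V2 * z) / Real.sqrt V1 := by field_simp; ring
    rwa [e5] at this

/-- Two-sided deviation bound at scale `Λ√n`. -/
lemma chernoff_two_sided {n : ℕ} (hn : 0 < n) {q f : α → ℝ} {A μ Λ : ℝ} (hq : IsPMF q)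
    (hA : 0 < A) (hf : ∀ a, |f a - μ| ≤ A) (hμ : ∑ a, q a * f a = μ) (hΛ : 0 ≤ Λ)
    (hΛn : Λ ≤ Real.sqrt n) :
    Ep (fun _ : Fin n => q) (fun ω => if |∑ i, f (ω i) - n * μ| ≤ 2 * A * Λ * Real.sqrt n
      then 0 else 1) ≤ 2 * Real.exp (-(Λ ^ 2)) := by
  have hn0 : (0 : ℝ) < n := by exact_mod_cast hn
  have hs0 : 0 < Real.sqrt n := Real.sqrt_pos.2 hn0
  have hs2 : Real.sqrt n ^ 2 = n := Real.sq_sqrt hn0.le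
  set t := Λ / (A * Real.sqrt n) with ht
  have ht0 : 0 ≤ t := by positivity
  have htA : t * A = Λ / Real.sqrt n := by rw [ht]; field_simp
  have htA1 : t * A ≤ 1 := by rw [htA, div_le_one hs0]; exact hΛn
  have hexp : -(t * (2 * A * Λ * Real.sqrt n)) + Fintype.card (Fin n) * (t * A) ^ 2
      = -(Λ ^ 2) := by
    rw [Fintype.card_fin, show t * (2 * A * Λ * Real.sqrt n) = (t * A) * (2 * Λ * Real.sqrt n) by
      ring, htA, div_pow, hs2]
    field_simp; ring
  have hm : ∑ a, q a * (f a - μ) = 0 := by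
    simp_rw [mul_sub]; rw [Finset.sum_sub_distrib, hμ, ← Finset.sum_mul, hq.2]; ring
  have hm' : ∑ a, q a * (μ - f a) = 0 := by
    simp_rw [mul_sub]; rw [Finset.sum_sub_distrib, hμ, ← Finset.sum_mul, hq.2]; ring
  have c1 := chernoff (ι := Fin n) (q := fun _ => q) (ξ := fun _ a => f a - μ) (A := A) (t := t)
    (s := 2 * A * Λ * Real.sqrt n) (fun _ => hq.1) (fun _ => hq.2) (fun _ => hm) (fun _ => hf)
    ht0 htA1
  have c2 := chernoff (ι := Fin n) (q := fun _ => q) (ξ := fun _ a => μ - f a) (A := A) (t := t)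
    (s := 2 * A * Λ * Real.sqrt n) (fun _ => hq.1) (fun _ => hq.2) (fun _ => hm')
    (fun _ a => by rw [abs_sub_comm]; exact hf a) ht0 htA1
  rw [hexp] at c1 c2
  refine le_trans ?_ ((add_le_add c1 c2).trans_eq (by ring))
  rw [← Ep_add]
  refine Ep_mono (fun _ => hq.1) fun ω => ?_
  have e1 : ∑ i : Fin n, (f (ω i) - μ) = ∑ i, f (ω i) - n * μ := by
    rw [Finset.sum_sub_distrib]; simp
  have e2 : ∑ i : Fin n, (μ - f (ω i)) = -(∑ i, f (ω i) - n * μ) := by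
    rw [Finset.sum_sub_distrib]; simp
  simp only [e1, e2]
  by_cases h : |∑ i, f (ω i) - n * μ| ≤ 2 * A * Λ * Real.sqrt n
  · rw [if_pos h]; positivity
  · rw [if_neg h]
    rcases lt_abs.1 (not_le.1 h) with h' | h'
    · rw [if_pos h'.le]; split_ifs <;> norm_num
    · rw [if_pos h'.le]; split_ifs <;> norm_num

/-- Exponentially small probability of a linear deviation below the mean. -/
lemma exp_small {q f : α → ℝ} {μ μ' : ℝ} (hq : IsPMF q) (hμ : ∑ a, q a * f a = μ)
    (hμ' : μ' < μ) : ∃ r > 0, ∀ n : ℕ, Ep (fun _ : Fin n => q)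
      (fun ω => if ∑ i, f (ω i) ≤ n * μ' then 1 else 0) ≤ Real.exp (-(r * n)) := by
  obtain ⟨A, hA⟩ : ∃ A, ∀ a, |μ - f a| ≤ A :=
    ⟨∑ a, |μ - f a|, fun a => Finset.single_le_sum (f := fun a => |μ - f a|)
      (fun _ _ => abs_nonneg _) (Finset.mem_univ a)⟩
  set A' := |A| + 1 with hA'
  have hA0 : 0 < A' := by positivity
  have hAA : ∀ a, |μ - f a| ≤ A' := fun a => (hA a).trans (by linarith [le_abs_self A])
  set d := μ - μ' with hd
  have hd0 : 0 < d := by linarith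
  set t := min (1 / A') (d / (2 * A' ^ 2)) with ht
  have ht0 : 0 < t := lt_min (by positivity) (by positivity)
  have ht1 : t * A' ≤ 1 := by
    have := min_le_left (1 / A') (d / (2 * A' ^ 2))
    rw [← ht, le_div_iff₀ hA0] at this; exact this
  have ht2 : t * A' ^ 2 ≤ d / 2 := by
    have := min_le_right (1 / A') (d / (2 * A' ^ 2))
    rw [← ht, le_div_iff₀ (by positivity)] at this; linarith
  have hm' : ∑ a, q a * (μ - f a) = 0 := by
    simp_rw [mul_sub]; rw [Finset.sum_sub_distrib, hμ, ← Finset.sum_mul, hq.2]; ring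
  refine ⟨t * d / 2, by positivity, fun n => ?_⟩
  have c2 := chernoff (ι := Fin n) (q := fun _ => q) (ξ := fun _ a => μ - f a) (A := A') (t := t)
    (s := n * d) (fun _ => hq.1) (fun _ => hq.2) (fun _ => hm') (fun _ a => hAA a) ht0.le ht1
  have e : (fun ω : Fin n → α => if ∑ i, f (ω i) ≤ n * μ' then (1 : ℝ) else 0)
      = fun ω => if n * d ≤ ∑ i, (μ - f (ω i)) then 1 else 0 := by
    funext ω
    congr 1
    rw [Finset.sum_sub_distrib]
    simp only [Finset.sum_const, Finset.card_univ, Fintype.card_fin, nsmul_eq_mul, hd]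
    exact propext ⟨fun h => by linarith, fun h => by linarith⟩
  rw [e]
  refine c2.trans (Real.exp_le_exp.2 ?_)
  rw [Fintype.card_fin]
  have h3 : t * (t * A' ^ 2) ≤ t * (d / 2) := mul_le_mul_of_nonneg_left ht2 ht0.le
  have h4 : (n : ℝ) * (t * (t * A' ^ 2)) ≤ n * (t * (d / 2)) :=
    mul_le_mul_of_nonneg_left h3 (Nat.cast_nonneg n)
  nlinarith

end Transfer

/-! ### The best of `K` codewords followed by channel noise -/

section Selection

lemma exists_abs_bound {α : Type*} [Finite α] (g : α → ℝ) : ∃ A > 0, ∀ a, |g a| ≤ A := by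
  have := Fintype.ofFinite α
  refine ⟨1 + ∑ a, |g a|, by positivity, fun a => ?_⟩
  have := Finset.single_le_sum (f := fun a => |g a|) (fun _ _ => abs_nonneg _) (Finset.mem_univ a)
  linarith

set_option maxHeartbeats 1000000 in
/-- Out of `K` independent codewords, the one with the largest conditional mean of the information
density is transmitted. The probability that the resulting information density falls below
`nμ + √n s` is at most the probability that `S_K ≤ s`, up to an error of order
`(min(K, Λ³) + Λ²)/√n`, where `Λ² ≥ log n + log K`. The codewords `x γ` are indexed by an auxiliary
type `Γ` whose law `q` is pushed to the i.i.d. law by `x`. -/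
lemma select_noise {X D : Type*} [Fintype X] [Fintype D] {p : X → ℝ} (hp : IsPMF p)
    {w f : X → D → ℝ} (hw0 : ∀ x y, 0 ≤ w x y) (hw1 : ∀ x, ∑ y, w x y = 1)
    {m v : X → ℝ} {μ V1 V2 : ℝ} (hm : ∀ x, ∑ y, w x y * f x y = m x)
    (hv : ∀ x, ∑ y, w x y * (f x y - m x) ^ 2 = v x)
    (hμ : ∑ x, p x * m x = μ) (hV1 : ∑ x, p x * (m x - μ) ^ 2 = V1)
    (hV2 : ∑ x, p x * v x = V2) (hV10 : 0 < V1) (hV20 : 0 < V2) :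
    ∃ C D' κ : ℝ, 0 < C ∧ 0 < D' ∧ 0 < κ ∧ ∀ (n K : ℕ) (Λ : ℝ), 0 < n → 0 < K → 1 ≤ Λ →
      n * K ≤ Real.exp (Λ ^ 2) → Λ ^ 3 ≤ κ * Real.sqrt n →
      ∀ (Γ : Type _) [Fintype Γ] (q : Γ → ℝ) (x : Γ → Fin n → X), IsPMF q →
      (∀ F : (Fin n → X) → ℝ, ∑ γ, q γ * F (x γ) = Ep (fun _ => p) F) →
      ∀ (sel : (Fin K → Γ) → Fin K),
      (∀ (ω : Fin K → Γ) (k : Fin K), ∑ i, m (x (ω k) i) ≤ ∑ i, m (x (ω (sel ω)) i)) → ∀ s : ℝ,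
      Ep (fun _ => q) (fun ω : Fin K → Γ => Ep (fun i => w (x (ω (sel ω)) i))
        (fun y => if ∑ i, f (x (ω (sel ω)) i) (y i) ≤ n * μ + Real.sqrt n * s then 1 else 0))
      ≤ FSK V1 V2 K (s + D' / Real.sqrt n) + C * (min (K : ℝ) (Λ ^ 3) + Λ ^ 2) / Real.sqrt n := by
  obtain ⟨A1, hA10, hA1⟩ := exists_abs_bound (fun z : X × D => f z.1 z.2 - m z.1)
  obtain ⟨A2, hA20, hA2⟩ := exists_abs_bound (fun x : X => m x - μ)
  obtain ⟨A3, hA30, hA3⟩ := exists_abs_bound (fun x : X => v x - V2)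
  set A := A1 + A2 + A3 with hA
  have hA0 : 0 < A := by positivity
  have hAf : ∀ x y, |f x y - m x| ≤ A := fun x y => (hA1 (x, y)).trans (by linarith)
  have hAm : ∀ x, |m x - μ| ≤ A := fun x => (hA2 x).trans (by linarith)
  have hAv : ∀ x, |v x - V2| ≤ A := fun x => (hA3 x).trans (by linarith)
  set r1 := Real.sqrt V1 with hr1
  set r2 := Real.sqrt V2 with hr2
  have hr10 : 0 < r1 := Real.sqrt_pos.2 hV10
  have hr20 : 0 < r2 := Real.sqrt_pos.2 hV20
  have hr1s : r1 ^ 2 = V1 := Real.sq_sqrt hV10.le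
  have hr2s : r2 ^ 2 = V2 := Real.sq_sqrt hV20.le
  refine ⟨8 * A / V2 + 20 * A / r2 + 2 + (14256 * A / r1 + 1), 2 * A,
    min 1 (min (V2 / (4 * A)) (r1 / (14256 * A))), by positivity, by positivity,
    lt_min one_pos (lt_min (by positivity) (by positivity)), ?_⟩
  intro n K Λ hn hK hΛ hnK hΛκ Γ _ q x hq hlaw sel hsel s
  have hn0 : (0 : ℝ) < n := by exact_mod_cast hn
  have hn1 : (1 : ℝ) ≤ n := by exact_mod_cast hn
  have hK1 : (1 : ℝ) ≤ K := by exact_mod_cast hK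
  set sn := Real.sqrt n with hsn
  have hsn0 : 0 < sn := Real.sqrt_pos.2 hn0
  have hsn1 : 1 ≤ sn := Real.one_le_sqrt.2 hn1
  have hsn2 : sn ^ 2 = n := Real.sq_sqrt hn0.le
  have hΛ0 : 0 < Λ := by linarith
  have hΛ3 : Λ ≤ Λ ^ 3 := le_self_pow₀ hΛ (by norm_num)
  have hΛ2 : Λ ≤ Λ ^ 2 := le_self_pow₀ hΛ (by norm_num)
  have hκ1 : Λ ^ 3 ≤ sn := hΛκ.trans (by
    have := mul_le_mul_of_nonneg_right
      (min_le_left 1 (min (V2 / (4 * A)) (r1 / (14256 * A)))) hsn0.le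
    linarith)
  have hκ2 : Λ ^ 3 ≤ V2 / (4 * A) * sn := hΛκ.trans
    (mul_le_mul_of_nonneg_right ((min_le_right _ _).trans (min_le_left _ _)) hsn0.le)
  have hκ3 : Λ ^ 3 ≤ r1 / (14256 * A) * sn := hΛκ.trans
    (mul_le_mul_of_nonneg_right ((min_le_right _ _).trans (min_le_right _ _)) hsn0.le)
  have hsq1 : Real.sqrt (n * V1) = sn * r1 := Real.sqrt_mul hn0.le _
  have hsq2 : Real.sqrt (n * V2) = sn * r2 := Real.sqrt_mul hn0.le _
  have hexp : K * Real.exp (-(Λ ^ 2)) ≤ 1 / n := by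
    rw [Real.exp_neg, le_div_iff₀ hn0, mul_comm, ← mul_assoc, ← div_eq_mul_inv,
      div_le_one (Real.exp_pos _)]
    exact hnK
  have hninv : 1 / (n : ℝ) ≤ 1 / sn := by
    apply one_div_le_one_div_of_le hsn0
    rw [← hsn2]; nlinarith
  set U : Γ → ℝ := fun γ => (∑ i, m (x γ i) - n * μ) / (sn * r1) with hU
  set ρ := 2 * A * Λ / (V2 * sn) with hρ
  have hρ0 : 0 ≤ ρ := by positivity
  have hρ1 : ρ ≤ 1 / 2 := by
    rw [hρ, div_le_iff₀ (by positivity)]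
    have : Λ ≤ V2 / (4 * A) * sn := hΛ3.trans hκ2
    rw [div_mul_eq_mul_div, le_div_iff₀ (by positivity)] at this
    linarith
  have hρv : ρ * (n * V2) = 2 * A * Λ * sn := by
    rw [hρ, ← hsn2]; field_simp
  let good : Γ → Prop := fun γ => |∑ i, v (x γ i) - n * V2| ≤ 2 * A * Λ * sn
  have hpt : ∀ ω : Fin K → Γ, Ep (fun i => w (x (ω (sel ω)) i))
        (fun y => if ∑ i, f (x (ω (sel ω)) i) (y i) ≤ n * μ + sn * s then 1 else 0)
      ≤ gPhi ((s - r1 * (⨆ k, U (ω k))) / r2) + (4 * ρ + 20 * A / (sn * r2))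
        + ∑ k, (if good (ω k) then (0 : ℝ) else 1) := by
    intro ω
    have hsum0 : ∀ k ∈ Finset.univ, 0 ≤ (if good (ω k) then (0 : ℝ) else 1) := by
      intro k _; split_ifs <;> norm_num
    by_cases hg : good (ω (sel ω))
    · have hbe := noise_be (ι := Fin n) (q := fun i => w (x (ω (sel ω)) i))
        (ξ := fun i y => f (x (ω (sel ω)) i) y - m (x (ω (sel ω)) i)) (B := A) (v := n * V2)
        (ρ := ρ) (fun i => hw0 _) (fun i => hw1 _)
        (fun i => by
          simp_rw [mul_sub]
          rw [Finset.sum_sub_distrib, hm, ← Finset.sum_mul, hw1]; ring)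
        hA0.le (fun i => hAf _) (by positivity) hρ0 hρ1
        (by simp_rw [hv]; rw [hρv]; exact hg)
        (n * μ + sn * s - ∑ i, m (x (ω (sel ω)) i))
      have e1 : (n * μ + sn * s - ∑ i, m (x (ω (sel ω)) i)) / Real.sqrt (n * V2)
          = (s - r1 * (⨆ k, U (ω k))) / r2 := by
        have : (⨆ k, U (ω k)) = U (ω (sel ω)) := by
          have : Nonempty (Fin K) := ⟨sel ω⟩
          apply le_antisymm
          · refine ciSup_le fun k => ?_
            simp only [hU]
            exact div_le_div_of_nonneg_right (by linarith [hsel ω k]) (by positivity)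
          · exact le_ciSup (f := fun k => U (ω k)) (Set.finite_range _).bddAbove (sel ω)
        rw [this, hsq2]
        simp only [hU]
        field_simp
        ring
      rw [e1, hsq2] at hbe
      have e2 : (fun y : Fin n → D => if ∑ i, f (x (ω (sel ω)) i) (y i) ≤ n * μ + sn * s
            then (1 : ℝ) else 0)
          = fun y => if ∑ i, (f (x (ω (sel ω)) i) (y i) - m (x (ω (sel ω)) i))
            ≤ n * μ + sn * s - ∑ i, m (x (ω (sel ω)) i) then 1 else 0 := by
        funext y
        simp only [Finset.sum_sub_distrib, sub_le_sub_iff_right]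
      rw [e2]
      linarith [Finset.sum_nonneg hsum0]
    · have h1 : Ep (fun i => w (x (ω (sel ω)) i))
        (fun y => if ∑ i, f (x (ω (sel ω)) i) (y i) ≤ n * μ + sn * s then 1 else 0) ≤ 1 := by
        refine (Ep_mono (G := fun _ => 1) (fun i => hw0 _) fun y => ?_).trans_eq
          (Ep_const (fun i => hw1 _) 1)
        split_ifs <;> norm_num
      have h2 := Finset.single_le_sum hsum0 (Finset.mem_univ (sel ω))
      rw [if_neg hg] at h2
      have h3 := gPhi_nonneg ((s - r1 * (⨆ k, U (ω k))) / r2)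
      have h4 : 0 ≤ 4 * ρ + 20 * A / (sn * r2) := by positivity
      linarith
  refine (Ep_mono (fun _ => hq.1) hpt).trans ?_
  rw [Ep_add, Ep_add, Ep_const (fun _ => hq.2), Ep_sum]
  have hbad : ∑ k : Fin K, Ep (fun _ => q) (fun ω : Fin K → Γ =>
      (if good (ω k) then (0 : ℝ) else 1)) ≤ 2 / n := by
    have h1 : ∀ k : Fin K, Ep (fun _ => q) (fun ω : Fin K → Γ =>
        (if good (ω k) then (0 : ℝ) else 1)) ≤ 2 * Real.exp (-(Λ ^ 2)) := by
      intro k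
      rw [Ep_single (fun _ => hq.2) k (fun γ => if good γ then (0 : ℝ) else 1)]
      refine le_trans (le_of_eq ?_) (chernoff_two_sided hn hp hA0 hAv hV2 hΛ0.le
        (hΛ3.trans hκ1))
      rw [← hlaw]
    refine (Finset.sum_le_sum fun k _ => h1 k).trans ?_
    rw [Finset.sum_const, Finset.card_univ, Fintype.card_fin, nsmul_eq_mul]
    have : 2 / (n : ℝ) = 2 * (1 / n) := by ring
    rw [this]; linarith
  set B := A / (sn * r1) with hB
  have hB0 : 0 ≤ B := by positivity
  have hBΛ : B * (1 + 2 * Λ) ^ 3 ≤ 27 * A / r1 * Λ ^ 3 / sn := by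
    have h1 : (1 + 2 * Λ) ^ 3 ≤ (3 * Λ) ^ 3 := pow_le_pow_left₀ (by positivity) (by linarith) _
    refine (mul_le_mul_of_nonneg_left h1 hB0).trans_eq ?_
    rw [hB]; field_simp; ring
  set Δ := min (8 * B * K) (528 * (B * (1 + 2 * Λ) ^ 3) + K * Real.exp (-((2 * Λ) ^ 2) / 2))
    with hΔ
  have hpow : ∀ z, (∑ γ, q γ * (if U γ ≤ z - 2 * B then 1 else 0)) ^ K ≤ gPhi z ^ K + Δ := by
    intro z
    have hm0 : ∀ i : Fin n, ∑ a, p a * ((m a - μ) / (sn * r1)) = 0 := by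
      intro _
      have : ∑ a, p a * ((m a - μ) / (sn * r1)) = (∑ a, p a * m a - (∑ a, p a) * μ) / (sn * r1) := by
        rw [Finset.sum_mul, ← Finset.sum_sub_distrib, Finset.sum_div]
        exact Finset.sum_congr rfl fun _ _ => by ring
      rw [this, hμ, hp.2]; simp
    have hv1 : ∑ i : Fin n, ∑ a, p a * ((m a - μ) / (sn * r1)) ^ 2 = 1 := by
      have : ∑ a, p a * ((m a - μ) / (sn * r1)) ^ 2
          = (∑ a, p a * (m a - μ) ^ 2) / (n * V1) := by
        rw [Finset.sum_div, ← hsn2, ← hr1s]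
        exact Finset.sum_congr rfl fun _ _ => by ring
      rw [this, hV1, Finset.sum_const, Finset.card_univ, Fintype.card_fin, nsmul_eq_mul]
      field_simp
    have hbd : ∀ (i : Fin n) a, |(m a - μ) / (sn * r1)| ≤ B := by
      intro _ a
      rw [abs_div, abs_of_pos (show 0 < sn * r1 by positivity)]
      exact div_le_div_of_nonneg_right (hAm a) (by positivity)
    have e : ∑ γ, q γ * (if U γ ≤ z - 2 * B then (1 : ℝ) else 0) = Ep (fun _ : Fin n => p)
        (fun ω => if ∑ i, (m (ω i) - μ) / (sn * r1) ≤ z - 2 * B then 1 else 0) := by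
      rw [← hlaw]
      refine Finset.sum_congr rfl fun γ _ => ?_
      have : ∑ i, (m (x γ i) - μ) / (sn * r1) = U γ := by
        rw [← Finset.sum_div, Finset.sum_sub_distrib]; simp [hU]
      simp only [this]
    refine pow_normal_approx hK ?_ ?_ hB0 ?_ (by positivity) ?_ ?_
    · exact Finset.sum_nonneg fun γ _ => mul_nonneg (hq.1 γ) (by split_ifs <;> norm_num)
    · refine (Finset.sum_le_sum (g := q) fun γ _ => ?_).trans_eq hq.2
      have := hq.1 γ
      split_ifs <;> linarith
    · rw [e]
      exact berry_esseen (fun _ => hp.1) (fun _ => hp.2) hm0 hv1 hB0 hbd z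
    · refine (mul_le_mul_of_nonneg_left hBΛ (by norm_num)).trans ?_
      rw [div_mul_eq_mul_div, le_div_iff₀ (by positivity)] at hκ3
      rw [← mul_div_assoc, div_le_one hsn0]
      rw [show 528 * (27 * A / r1 * Λ ^ 3) = (Λ ^ 3 * (14256 * A)) / r1 by ring,
        div_le_iff₀ hr10]
      linarith
    · intro hz hzB
      rw [e]
      exact moderate_deviation (fun _ => hp.1) (fun _ => hp.2) hm0 hv1 hB0 hbd hz hzB
  have hmt := max_transfer hq hV10 hV20 hK U hpow s
  rw [← hr1, ← hr2] at hmt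
  have e5 : r1 * (2 * B) = 2 * A / sn := by rw [hB]; field_simp
  rw [e5] at hmt
  have hΔ1 : Δ ≤ (14256 * A / r1 + 1) * min (K : ℝ) (Λ ^ 3) / sn := by
    have hAr : 0 < A / r1 := by positivity
    rw [mul_min_of_nonneg _ _ (by positivity), ← min_div_div_right hsn0.le]
    refine min_le_min ?_ ?_
    · rw [show 8 * B * K = (8 * (A / r1)) * K / sn by rw [hB]; field_simp]
      refine div_le_div_of_nonneg_right (mul_le_mul_of_nonneg_right ?_ (by linarith)) hsn0.le
      rw [show 14256 * A / r1 = 14256 * (A / r1) by ring]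
      linarith
    · have h1 : K * Real.exp (-((2 * Λ) ^ 2) / 2) ≤ 1 / sn := by
        refine le_trans ?_ (hexp.trans hninv)
        refine mul_le_mul_of_nonneg_left (Real.exp_le_exp.2 ?_) (by linarith)
        nlinarith
      have h2 : 1 / sn ≤ Λ ^ 3 / sn := div_le_div_of_nonneg_right (by linarith) hsn0.le
      have h3 : (14256 * A / r1 + 1) * Λ ^ 3 / sn
          = 528 * (27 * A / r1 * Λ ^ 3 / sn) + Λ ^ 3 / sn := by ring
      linarith
  have h1 : 4 * ρ ≤ 8 * A / V2 * Λ ^ 2 / sn := by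
    have : 4 * ρ = 8 * A / V2 * Λ / sn := by rw [hρ]; field_simp; ring
    rw [this]
    exact div_le_div_of_nonneg_right (mul_le_mul_of_nonneg_left hΛ2 (by positivity)) hsn0.le
  have h1Λ : 1 ≤ Λ ^ 2 := by linarith
  have h2 : 20 * A / (sn * r2) ≤ 20 * A / r2 * Λ ^ 2 / sn := by
    have : 20 * A / (sn * r2) = 20 * A / r2 * 1 / sn := by field_simp
    rw [this]
    exact div_le_div_of_nonneg_right (mul_le_mul_of_nonneg_left h1Λ (by positivity)) hsn0.le
  have h3 : 2 / (n : ℝ) ≤ 2 * Λ ^ 2 / sn := by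
    have h4 : 2 / (n : ℝ) = 2 * (1 / n) := by ring
    have h5 : 2 * 1 / sn ≤ 2 * Λ ^ 2 / sn :=
      div_le_div_of_nonneg_right (mul_le_mul_of_nonneg_left h1Λ (by positivity)) hsn0.le
    have h6 : 2 * 1 / sn = 2 * (1 / sn) := by ring
    rw [h4]; linarith
  have hmin0 : 0 ≤ min (K : ℝ) (Λ ^ 3) := le_min (by linarith) (by positivity)
  have h7 : (8 * A / V2 + 20 * A / r2 + 2 + (14256 * A / r1 + 1))
        * (min (K : ℝ) (Λ ^ 3) + Λ ^ 2) / sn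
      = (8 * A / V2 + 20 * A / r2 + 2) * min (K : ℝ) (Λ ^ 3) / sn
        + (14256 * A / r1 + 1) * Λ ^ 2 / sn
        + 8 * A / V2 * Λ ^ 2 / sn + 20 * A / r2 * Λ ^ 2 / sn + 2 * Λ ^ 2 / sn
        + (14256 * A / r1 + 1) * min (K : ℝ) (Λ ^ 3) / sn := by ring
  have h8 : 0 ≤ (8 * A / V2 + 20 * A / r2 + 2) * min (K : ℝ) (Λ ^ 3) / sn := by positivity
  have h9 : 0 ≤ (14256 * A / r1 + 1) * Λ ^ 2 / sn := by positivity
  rw [h7]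
  linarith

end Selection

/-! ### Random coding for the memoryless channel -/

section Memoryless

/-- On the support, a likelihood-ratio test is a test on the sum of the information densities. -/
lemma sum_logb_le_of_prod_le {n : ℕ} {w d : Fin n → ℝ} {γ : ℝ} (hw : ∀ i, 0 < w i)
    (hd : ∀ i, 0 < d i) (h : ∏ i, w i ≤ (2 : ℝ) ^ γ * ∏ i, d i) :
    ∑ i, Real.logb 2 (w i / d i) ≤ γ := by
  have hd' : 0 < ∏ i, d i := Finset.prod_pos fun i _ => hd i
  have hw' : 0 < ∏ i, w i := Finset.prod_pos fun i _ => hw i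
  rw [← Real.logb_prod _ _ fun i _ => (div_pos (hw i) (hd i)).ne', Finset.prod_div_distrib,
    Real.logb_le_iff_le_rpow (by norm_num) (div_pos hw' hd'), div_le_iff₀ hd']
  exact h

variable {W : X1 → X2 → Y → ℝ} {p1 : X1 → ℝ} {p2 : X2 → ℝ}

lemma condOut2_pos (hW : IsChannel W) (hp1 : IsPMF p1) {x1 : X1} {x2 : X2} {y : Y}
    (h1 : 0 < p1 x1) (h : 0 < W x1 x2 y) : 0 < condOut2 W p1 x2 y :=
  Finset.sum_pos' (fun x _ => mul_nonneg (hp1.1 x) (hW.1 _ _ _))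
    ⟨x1, Finset.mem_univ _, mul_pos h1 h⟩

lemma condOut1_pos (hW : IsChannel W) (hp2 : IsPMF p2) {x1 : X1} {x2 : X2} {y : Y}
    (h2 : 0 < p2 x2) (h : 0 < W x1 x2 y) : 0 < condOut1 W p2 x1 y :=
  Finset.sum_pos' (fun x _ => mul_nonneg (hp2.1 x) (hW.1 _ _ _))
    ⟨x2, Finset.mem_univ _, mul_pos h2 h⟩

lemma outDist_eq (y : Y) : outDist W p1 p2 y = ∑ x1, p1 x1 * condOut1 W p2 x1 y := by
  unfold outDist condOut1
  refine Finset.sum_congr rfl fun x1 _ => ?_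
  rw [Finset.mul_sum]
  exact Finset.sum_congr rfl fun _ _ => by ring

lemma outDist_pos (hW : IsChannel W) (hp1 : IsPMF p1) (hp2 : IsPMF p2) {x1 : X1} {x2 : X2} {y : Y}
    (h1 : 0 < p1 x1) (h2 : 0 < p2 x2) (h : 0 < W x1 x2 y) : 0 < outDist W p1 p2 y := by
  rw [outDist_eq]
  refine Finset.sum_pos' (fun x _ => mul_nonneg (hp1.1 x)
    (Finset.sum_nonneg fun z _ => mul_nonneg (hp2.1 z) (hW.1 _ _ _)))
    ⟨x1, Finset.mem_univ _, mul_pos h1 (condOut1_pos hW hp2 h2 h)⟩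

/-- The joint law of inputs and output. -/
def tripleLaw (W : X1 → X2 → Y → ℝ) (p1 : X1 → ℝ) (p2 : X2 → ℝ) (z : (X1 × X2) × Y) : ℝ :=
  p1 z.1.1 * p2 z.1.2 * W z.1.1 z.1.2 z.2

lemma sum_tripleLaw_mul (g : X1 → X2 → Y → ℝ) :
    ∑ z, tripleLaw W p1 p2 z * g z.1.1 z.1.2 z.2
      = ∑ x1, ∑ x2, ∑ y, p1 x1 * p2 x2 * W x1 x2 y * g x1 x2 y := by
  rw [Fintype.sum_prod_type, Fintype.sum_prod_type]; rfl

lemma isPMF_tripleLaw (hW : IsChannel W) (hp1 : IsPMF p1) (hp2 : IsPMF p2) :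
    IsPMF (tripleLaw W p1 p2) := by
  refine ⟨fun z => mul_nonneg (mul_nonneg (hp1.1 _) (hp2.1 _)) (hW.1 _ _ _), ?_⟩
  have := sum_tripleLaw_mul (W := W) (p1 := p1) (p2 := p2) (fun _ _ _ => 1)
  simp only [mul_one] at this
  rw [this]
  simp_rw [← Finset.mul_sum, hW.2, mul_one, ← Finset.mul_sum, hp2.2, mul_one, hp1.2]

/-- The correct codeword fails the likelihood-ratio test against `d` at rate `μ'` only if the
normalized information density falls below `μ'`. -/
lemma triple_fail_le (hW : IsChannel W) (hp1 : IsPMF p1) (hp2 : IsPMF p2) {n : ℕ}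
    {d : X1 → X2 → Y → ℝ}
    (hd : ∀ x1 x2 y, 0 < p1 x1 → 0 < p2 x2 → 0 < W x1 x2 y → 0 < d x1 x2 y) (γ : ℝ) :
    ∑ a : Fin n → X1, ∑ b : Fin n → X2, blockLaw n p1 a * blockLaw n p2 b *
      ∑ y : Fin n → Y, (∏ i, W (a i) (b i) (y i)) *
        ind (∏ i, W (a i) (b i) (y i) ≤ (2 : ℝ) ^ γ * ∏ i, d (a i) (b i) (y i))
    ≤ Ep (fun _ : Fin n => tripleLaw W p1 p2) (fun ω => if ∑ i, Real.logb 2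
        (W (ω i).1.1 (ω i).1.2 (ω i).2 / d (ω i).1.1 (ω i).1.2 (ω i).2) ≤ γ then 1 else 0) := by
  have e : ∑ a : Fin n → X1, ∑ b : Fin n → X2, blockLaw n p1 a * blockLaw n p2 b *
      ∑ y : Fin n → Y, (∏ i, W (a i) (b i) (y i)) *
        ind (∏ i, W (a i) (b i) (y i) ≤ (2 : ℝ) ^ γ * ∏ i, d (a i) (b i) (y i))
      = Ep (fun _ => p1) (fun a : Fin n → X1 => Ep (fun _ => p2) (fun b : Fin n → X2 =>
        Ep (fun i => W (a i) (b i)) (fun y : Fin n → Y =>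
          ind (∏ i, W (a i) (b i) (y i) ≤ (2 : ℝ) ^ γ * ∏ i, d (a i) (b i) (y i))))) := by
    unfold Ep blockLaw
    refine Finset.sum_congr rfl fun a _ => ?_
    rw [Finset.mul_sum]
    exact Finset.sum_congr rfl fun b _ => by ring
  rw [e, Ep_pair]
  have e2 := Ep_bind (ι := Fin n) (fun _ (x : X1 × X2) => p1 x.1 * p2 x.2)
    (fun _ x => W x.1 x.2) (fun ω y => ind (∏ i, W (ω i).1 (ω i).2 (y i)
      ≤ (2 : ℝ) ^ γ * ∏ i, d (ω i).1 (ω i).2 (y i)))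
  refine e2.trans_le ?_
  refine Ep_mono' (fun i => (isPMF_tripleLaw hW hp1 hp2).1) fun ω hω => ?_
  have hpos : ∀ i, 0 < p1 (ω i).1.1 ∧ 0 < p2 (ω i).1.2 ∧ 0 < W (ω i).1.1 (ω i).1.2 (ω i).2 := by
    intro i
    have : 0 < tripleLaw W p1 p2 (ω i) := hω i
    unfold tripleLaw at this
    refine ⟨(hp1.1 _).lt_of_ne' fun h => ?_, (hp2.1 _).lt_of_ne' fun h => ?_,
      (hW.1 _ _ _).lt_of_ne' fun h => ?_⟩ <;> simp [h] at this
  exact ind_mono fun h => sum_logb_le_of_prod_le (fun i => (hpos i).2.2)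
    (fun i => hd _ _ _ (hpos i).1 (hpos i).2.1 (hpos i).2.2) h

lemma sum_prod_condOut2 {n : ℕ} (b : Fin n → X2) (y : Fin n → Y) :
    ∑ a : Fin n → X1, blockLaw n p1 a * ∏ i, W (a i) (b i) (y i)
      = ∏ i, condOut2 W p1 (b i) (y i) :=
  Ep_prod (fun _ => p1) (fun i a => W a (b i) (y i))

lemma sum_prod_condOut1 {n : ℕ} (a : Fin n → X1) (y : Fin n → Y) :
    ∑ b : Fin n → X2, blockLaw n p2 b * ∏ i, W (a i) (b i) (y i)
      = ∏ i, condOut1 W p2 (a i) (y i) :=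
  Ep_prod (fun _ => p2) (fun i b => W (a i) b (y i))

lemma sum_prod_outDist {n : ℕ} (y : Fin n → Y) :
    ∑ a : Fin n → X1, ∑ b : Fin n → X2, blockLaw n p1 a * blockLaw n p2 b *
      ∏ i, W (a i) (b i) (y i) = ∏ i, outDist W p1 p2 (y i) := by
  simp_rw [outDist_eq, mul_assoc, ← Finset.mul_sum, sum_prod_condOut1]
  exact Ep_prod (fun _ => p1) (fun i a => condOut1 W p2 a (y i))

lemma blockLaw_pos {α : Type*} [Fintype α] {n : ℕ} {p : α → ℝ} (hp : IsPMF p) {a : Fin n → α}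
    (h : blockLaw n p a ≠ 0) (i : Fin n) : 0 < p (a i) :=
  (hp.1 _).lt_of_ne' (Finset.prod_ne_zero_iff.1 h i (Finset.mem_univ i))

set_option maxHeartbeats 1000000 in
/-- Non-asymptotic achievability: random coding where the facilitator picks the pair of codewords
with the largest conditional mean information density. -/
lemma code_exists (hW : IsChannel W) (hp1 : IsPMF p1) (hp2 : IsPMF p2)
    (hV1 : 0 < Vone W p1 p2) (hV2 : 0 < Vtwo W p1 p2) :
    ∃ C D κ : ℝ, 0 < C ∧ 0 < D ∧ 0 < κ ∧ ∀ δ > 0, ∃ r > 0,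
      ∀ (n K M1 M2 : ℕ) (Λ : ℝ), 0 < n → 0 < K → 0 < M1 → 0 < M2 → 1 ≤ Λ →
      n * K ≤ Real.exp (Λ ^ 2) → Λ ^ 3 ≤ κ * Real.sqrt n → ∀ s : ℝ,
      ExistsCode W n M1 M2 K
        (FSK (Vone W p1 p2) (Vtwo W p1 p2) K (s + D / Real.sqrt n)
          + C * (min (K : ℝ) (Λ ^ 3) + Λ ^ 2) / Real.sqrt n
          + 2 * (K * Real.exp (-(r * n)))
          + (M1 * M2 * K / (2 : ℝ) ^ (n * Isum W p1 p2 + Real.sqrt n * s)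
            + M1 * K / (2 : ℝ) ^ (n * (Icond1 W p1 p2 - δ))
            + M2 * K / (2 : ℝ) ^ (n * (Icond2 W p1 p2 - δ)))) := by
  have hp : IsPMF (fun z : X1 × X2 => p1 z.1 * p2 z.2) := by
    refine ⟨fun z => mul_nonneg (hp1.1 _) (hp2.1 _), ?_⟩
    rw [Fintype.sum_prod_type]
    simp_rw [← Finset.mul_sum, hp2.2, mul_one, hp1.2]
  obtain ⟨C, D, κ, hC, hD, hκ, hsn⟩ := select_noise hp (D := Y)
    (w := fun z => W z.1 z.2) (f := fun z => iDens W p1 p2 z.1 z.2)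
    (fun z => hW.1 _ _) (fun z => hW.2 _ _)
    (m := fun z => iBar W p1 p2 z.1 z.2) (μ := Isum W p1 p2) (V1 := Vone W p1 p2)
    (V2 := Vtwo W p1 p2) (fun z => rfl) (fun z => rfl)
    (by rw [Fintype.sum_prod_type]; rfl) (by rw [Fintype.sum_prod_type]; rfl)
    (by
      rw [Fintype.sum_prod_type]; unfold Vtwo
      refine Finset.sum_congr rfl fun _ _ => Finset.sum_congr rfl fun _ _ => ?_
      rw [Finset.mul_sum]
      exact Finset.sum_congr rfl fun _ _ => by ring) hV1 hV2
  refine ⟨C, D, κ, hC, hD, hκ, fun δ hδ => ?_⟩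
  have hT := isPMF_tripleLaw hW hp1 hp2
  obtain ⟨r1, hr1, h1⟩ := exp_small (f := fun z => iDensC1 W p1 z.1.1 z.1.2 z.2)
    (μ' := Icond1 W p1 p2 - δ) hT (sum_tripleLaw_mul (iDensC1 W p1))
    (by change _ < Icond1 W p1 p2; linarith)
  obtain ⟨r2, hr2, h2⟩ := exp_small (f := fun z => iDensC2 W p2 z.1.1 z.1.2 z.2)
    (μ' := Icond2 W p1 p2 - δ) hT (sum_tripleLaw_mul (iDensC2 W p2))
    (by change _ < Icond2 W p1 p2; linarith)
  refine ⟨min r1 r2, lt_min hr1 hr2, ?_⟩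
  intro n K M1 M2 Λ hn hK hM1 hM2 hΛ hnK hΛκ s
  have hKne : Nonempty (Fin K) := ⟨⟨0, hK⟩⟩
  choose sel hsel using fun ω : Fin K → (Fin n → X1) × (Fin n → X2) =>
    Finite.exists_max (fun k => ∑ i, iBar W p1 p2 ((ω k).1 i) ((ω k).2 i))
  have hP1 : IsPMF (blockLaw n p1) := ⟨blockLaw_nonneg hp1, sum_blockLaw hp1⟩
  have hP2 : IsPMF (blockLaw n p2) := ⟨blockLaw_nonneg hp2, sum_blockLaw hp2⟩
  obtain ⟨e, f1, f2, g, hcode⟩ := oneshot (K := K) hM1 hM2 hP1 hP2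
    (Wn := fun (a : Fin n → X1) (b : Fin n → X2) (y : Fin n → Y) => ∏ i, W (a i) (b i) (y i))
    (c := (2 : ℝ) ^ (n * Isum W p1 p2 + Real.sqrt n * s))
    (c1 := (2 : ℝ) ^ (n * (Icond1 W p1 p2 - δ))) (c2 := (2 : ℝ) ^ (n * (Icond2 W p1 p2 - δ)))
    (fun a b y => Finset.prod_nonneg fun i _ => hW.1 _ _ _)
    (fun a b => by
      have := Ep_const (q := fun i => W (a i) (b i)) (fun i => hW.2 _ _) 1
      simpa [Ep] using this)
    sum_prod_outDist sum_prod_condOut2 sum_prod_condOut1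
    (Real.rpow_pos_of_pos two_pos _) (Real.rpow_pos_of_pos two_pos _)
    (Real.rpow_pos_of_pos two_pos _) (fun a b => sel (fun k => (a k, b k)))
  refine ⟨e, f1, f2, g, hcode.trans ?_⟩
  have hn0 : (0 : ℝ) < n := by exact_mod_cast hn
  have t2 := (triple_fail_le hW hp1 hp2 (n := n) (d := fun _ x2 y => condOut2 W p1 x2 y)
    (fun x1 x2 y h _ hw => condOut2_pos hW hp1 h hw) (n * (Icond1 W p1 p2 - δ))).trans (h1 n)
  have t3 := (triple_fail_le hW hp1 hp2 (n := n) (d := fun x1 _ y => condOut1 W p2 x1 y)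
    (fun x1 x2 y _ h hw => condOut1_pos hW hp2 h hw) (n * (Icond2 W p1 p2 - δ))).trans (h2 n)
  have hexp : ∀ r, min r1 r2 ≤ r → Real.exp (-(r * n)) ≤ Real.exp (-(min r1 r2 * n)) :=
    fun r hr => Real.exp_le_exp.2 (neg_le_neg (mul_le_mul_of_nonneg_right hr hn0.le))
  have t2' := mul_le_mul_of_nonneg_left (t2.trans (hexp r1 (min_le_left _ _)))
    (Nat.cast_nonneg (α := ℝ) K)
  have t3' := mul_le_mul_of_nonneg_left (t3.trans (hexp r2 (min_le_right _ _)))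
    (Nat.cast_nonneg (α := ℝ) K)
  have hq : IsPMF (fun z : (Fin n → X1) × (Fin n → X2) => blockLaw n p1 z.1 * blockLaw n p2 z.2) := by
    refine ⟨fun z => mul_nonneg (hP1.1 _) (hP2.1 _), ?_⟩
    rw [Fintype.sum_prod_type]
    simp_rw [← Finset.mul_sum, hP2.2, mul_one, hP1.2]
  have t1 := hsn n K Λ hn hK hΛ hnK hΛκ ((Fin n → X1) × (Fin n → X2))
    (fun z => blockLaw n p1 z.1 * blockLaw n p2 z.2) (fun z i => (z.1 i, z.2 i)) hq
    (fun F => by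
      have := Ep_pair (ι := Fin n) (fun _ => p1) (fun _ => p2)
        (fun a b => F (fun i => (a i, b i)))
      refine Eq.trans ?_ this
      rw [Fintype.sum_prod_type]
      unfold Ep blockLaw
      refine Finset.sum_congr rfl fun a _ => ?_
      rw [Finset.mul_sum]
      exact Finset.sum_congr rfl fun b _ => by ring)
    sel hsel s
  have t1' : Ep (fun _ => blockLaw n p1) (fun a : Fin K → Fin n → X1 =>
      Ep (fun _ => blockLaw n p2) (fun b : Fin K → Fin n → X2 =>
        ∑ y : Fin n → Y, (∏ i, W (a (sel fun k => (a k, b k)) i) (b (sel fun k => (a k, b k)) i) (y i))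
          * ind (∏ i, W (a (sel fun k => (a k, b k)) i) (b (sel fun k => (a k, b k)) i) (y i)
            ≤ (2 : ℝ) ^ (n * Isum W p1 p2 + Real.sqrt n * s) * ∏ i, outDist W p1 p2 (y i))))
      ≤ FSK (Vone W p1 p2) (Vtwo W p1 p2) K (s + D / Real.sqrt n)
          + C * (min (K : ℝ) (Λ ^ 3) + Λ ^ 2) / Real.sqrt n := by
    refine le_trans ?_ t1
    rw [Ep_pair]
    refine Ep_mono' (fun _ => hq.1) fun ω hω => ?_
    have hx1 : ∀ i, 0 < p1 ((ω (sel ω)).1 i) := blockLaw_pos hp1 fun h => by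
      have := hω (sel ω); simp [h] at this
    have hx2 : ∀ i, 0 < p2 ((ω (sel ω)).2 i) := blockLaw_pos hp2 fun h => by
      have := hω (sel ω); simp [h] at this
    refine Ep_mono' (q := fun i => W ((ω (sel ω)).1 i) ((ω (sel ω)).2 i))
      (F := fun y => ind (∏ i, W ((ω (sel ω)).1 i) ((ω (sel ω)).2 i) (y i)
            ≤ (2 : ℝ) ^ (n * Isum W p1 p2 + Real.sqrt n * s) * ∏ i, outDist W p1 p2 (y i)))
      (fun i => hW.1 _ _) fun y hy => ?_
    exact ind_mono fun h => sum_logb_le_of_prod_le hy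
      (fun i => outDist_pos hW hp1 hp2 (hx1 i) (hx2 i) (hy i)) h
  linarith

end Memoryless

/-! ### Information inequalities and finiteness of `R_sum` -/

section Rate

variable {W : X1 → X2 → Y → ℝ} {p1 : X1 → ℝ} {p2 : X2 → ℝ}

lemma Isum_eq_triple :
    Isum W p1 p2 = ∑ z, tripleLaw W p1 p2 z * iDens W p1 p2 z.1.1 z.1.2 z.2 := by
  rw [sum_tripleLaw_mul (iDens W p1 p2)]
  unfold Isum iBar
  refine Finset.sum_congr rfl fun _ _ => Finset.sum_congr rfl fun _ _ => ?_
  rw [Finset.mul_sum]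
  exact Finset.sum_congr rfl fun _ _ => by ring

/-- Nonnegativity of a relative entropy, in the form used for `I(X₁,X₂;Y) - I(X₁;Y|X₂)` and
`I(X₁,X₂;Y) - I(X₂;Y|X₁)`. -/
lemma triple_logb_le (hW : IsChannel W) (hp1 : IsPMF p1) (hp2 : IsPMF p2)
    {d : X1 → X2 → Y → ℝ}
    (hd : ∀ x1 x2 y, 0 < p1 x1 → 0 < p2 x2 → 0 < W x1 x2 y → 0 < d x1 x2 y)
    (hsum : ∑ x1, ∑ x2, ∑ y, p1 x1 * p2 x2 * W x1 x2 y * (outDist W p1 p2 y / d x1 x2 y) ≤ 1) :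
    ∑ x1, ∑ x2, ∑ y, p1 x1 * p2 x2 * W x1 x2 y * Real.logb 2 (W x1 x2 y / d x1 x2 y)
      ≤ Isum W p1 p2 := by
  have hT := isPMF_tripleLaw hW hp1 hp2
  have hl2 : 0 < Real.log 2 := Real.log_pos one_lt_two
  rw [Isum_eq_triple, ← sum_tripleLaw_mul (fun x1 x2 y => Real.logb 2 (W x1 x2 y / d x1 x2 y))]
  rw [← sum_tripleLaw_mul (fun x1 x2 y => outDist W p1 p2 y / d x1 x2 y)] at hsum
  have hpt : ∀ z : (X1 × X2) × Y,
      tripleLaw W p1 p2 z * Real.logb 2 (W z.1.1 z.1.2 z.2 / d z.1.1 z.1.2 z.2)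
      ≤ tripleLaw W p1 p2 z * iDens W p1 p2 z.1.1 z.1.2 z.2
        + (tripleLaw W p1 p2 z * (outDist W p1 p2 z.2 / d z.1.1 z.1.2 z.2)
          - tripleLaw W p1 p2 z) / Real.log 2 := by
    intro z
    rcases (hT.1 z).eq_or_lt with h0 | h0
    · simp [← h0]
    · have hz : 0 < p1 z.1.1 ∧ 0 < p2 z.1.2 ∧ 0 < W z.1.1 z.1.2 z.2 := by
        unfold tripleLaw at h0
        refine ⟨(hp1.1 _).lt_of_ne' fun h => ?_, (hp2.1 _).lt_of_ne' fun h => ?_,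
          (hW.1 _ _ _).lt_of_ne' fun h => ?_⟩ <;> simp [h] at h0
      have hdz := hd _ _ _ hz.1 hz.2.1 hz.2.2
      have ho := outDist_pos hW hp1 hp2 hz.1 hz.2.1 hz.2.2
      have hlog := Real.log_le_sub_one_of_pos (div_pos ho hdz)
      have e : Real.logb 2 (W z.1.1 z.1.2 z.2 / d z.1.1 z.1.2 z.2)
          = iDens W p1 p2 z.1.1 z.1.2 z.2
            + Real.log (outDist W p1 p2 z.2 / d z.1.1 z.1.2 z.2) / Real.log 2 := by
        unfold iDens Real.logb
        rw [← add_div, ← Real.log_mul (div_pos hz.2.2 ho).ne' (div_pos ho hdz).ne']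
        congr 2
        field_simp
      rw [e, mul_add, add_le_add_iff_left, ← mul_div_assoc, div_le_div_iff_of_pos_right hl2]
      have := mul_le_mul_of_nonneg_left hlog h0.le
      linarith
  refine (Finset.sum_le_sum fun z _ => hpt z).trans ?_
  rw [Finset.sum_add_distrib, ← Finset.sum_div, Finset.sum_sub_distrib, hT.2]
  have : (∑ z, tripleLaw W p1 p2 z * (outDist W p1 p2 z.2 / d z.1.1 z.1.2 z.2) - 1) / Real.log 2
      ≤ 0 := div_nonpos_of_nonpos_of_nonneg (by linarith) hl2.le
  linarith

lemma sum_outDist (hW : IsChannel W) (hp1 : IsPMF p1) (hp2 : IsPMF p2) :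
    ∑ y, outDist W p1 p2 y = 1 := by
  unfold outDist
  rw [Finset.sum_comm]
  simp_rw [Finset.sum_comm (s := (Finset.univ : Finset Y)), ← Finset.mul_sum, hW.2, mul_one,
    ← Finset.mul_sum, hp2.2, mul_one, hp1.2]

lemma outDist_nonneg (hW : IsChannel W) (hp1 : IsPMF p1) (hp2 : IsPMF p2) (y : Y) :
    0 ≤ outDist W p1 p2 y :=
  Finset.sum_nonneg fun _ _ => Finset.sum_nonneg fun _ _ =>
    mul_nonneg (mul_nonneg (hp1.1 _) (hp2.1 _)) (hW.1 _ _ _)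

lemma mul_div_le_of_nonneg {a b : ℝ} (hb : 0 ≤ b) : a * (b / a) ≤ b := by
  rcases eq_or_ne a 0 with h | h
  · simp [h, hb]
  · rw [mul_div_cancel₀ _ h]

lemma Icond1_le_Isum (hW : IsChannel W) (hp1 : IsPMF p1) (hp2 : IsPMF p2) :
    Icond1 W p1 p2 ≤ Isum W p1 p2 := by
  refine triple_logb_le hW hp1 hp2 (d := fun _ x2 y => condOut2 W p1 x2 y)
    (fun x1 x2 y h _ hw => condOut2_pos hW hp1 h hw) ?_
  have e : ∑ x1, ∑ x2, ∑ y, p1 x1 * p2 x2 * W x1 x2 y *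
      (outDist W p1 p2 y / condOut2 W p1 x2 y)
      = ∑ x2, ∑ y, p2 x2 * (condOut2 W p1 x2 y * (outDist W p1 p2 y / condOut2 W p1 x2 y)) := by
    rw [Finset.sum_comm]
    refine Finset.sum_congr rfl fun x2 _ => ?_
    rw [Finset.sum_comm]
    refine Finset.sum_congr rfl fun y _ => ?_
    conv_rhs => rw [condOut2, Finset.sum_mul, Finset.mul_sum]
    exact Finset.sum_congr rfl fun _ _ => by rw [condOut2]; ring
  rw [e]
  refine (Finset.sum_le_sum fun x2 _ => Finset.sum_le_sum fun y _ =>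
    mul_le_mul_of_nonneg_left (mul_div_le_of_nonneg (outDist_nonneg hW hp1 hp2 y))
      (hp2.1 x2)).trans_eq ?_
  simp_rw [← Finset.mul_sum, sum_outDist hW hp1 hp2, mul_one, hp2.2]

lemma Icond2_le_Isum (hW : IsChannel W) (hp1 : IsPMF p1) (hp2 : IsPMF p2) :
    Icond2 W p1 p2 ≤ Isum W p1 p2 := by
  refine triple_logb_le hW hp1 hp2 (d := fun x1 _ y => condOut1 W p2 x1 y)
    (fun x1 x2 y _ h hw => condOut1_pos hW hp2 h hw) ?_
  have e : ∑ x1, ∑ x2, ∑ y, p1 x1 * p2 x2 * W x1 x2 y *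
      (outDist W p1 p2 y / condOut1 W p2 x1 y)
      = ∑ x1, ∑ y, p1 x1 * (condOut1 W p2 x1 y * (outDist W p1 p2 y / condOut1 W p2 x1 y)) := by
    refine Finset.sum_congr rfl fun x1 _ => ?_
    rw [Finset.sum_comm]
    refine Finset.sum_congr rfl fun y _ => ?_
    conv_rhs => rw [condOut1, Finset.sum_mul, Finset.mul_sum]
    exact Finset.sum_congr rfl fun _ _ => by rw [condOut1]; ring
  rw [e]
  refine (Finset.sum_le_sum fun x1 _ => Finset.sum_le_sum fun y _ =>
    mul_le_mul_of_nonneg_left (mul_div_le_of_nonneg (outDist_nonneg hW hp1 hp2 y))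
      (hp1.1 x1)).trans_eq ?_
  simp_rw [← Finset.mul_sum, sum_outDist hW hp1 hp2, mul_one, hp1.2]

/-- A code of error at most `ε < 1` has at most `|𝒴|ⁿ / (1 - ε)` message pairs. -/
lemma card_le_of_existsCode (hW : IsChannel W) {n M1 M2 K : ℕ} {ε : ℝ} (hε : ε < 1)
    (hM1 : 0 < M1) (hM2 : 0 < M2) (h : ExistsCode W n M1 M2 K ε) :
    (M1 : ℝ) * M2 ≤ (Fintype.card Y : ℝ) ^ n / (1 - ε) := by
  obtain ⟨e, f1, f2, g, herr⟩ := h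
  have hM : (0 : ℝ) < (M1 : ℝ) * M2 := by positivity
  unfold avgErr at herr
  rw [one_div, inv_mul_le_iff₀ hM] at herr
  rw [le_div_iff₀ (by linarith)]
  set N := fun (m1 : Fin M1) (m2 : Fin M2) (y : Fin n → Y) =>
    ∏ i, W (f1 m1 (e m1 m2) i) (f2 m2 (e m1 m2) i) (y i) with hN
  have hN1 : ∀ m1 m2, ∑ y, N m1 m2 y = 1 := by
    intro m1 m2
    have := Ep_const (q := fun i => W (f1 m1 (e m1 m2) i) (f2 m2 (e m1 m2) i))
      (fun i => hW.2 _ _) 1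
    simpa [Ep] using this
  have hW1 : ∀ x1 x2 y, W x1 x2 y ≤ 1 := fun x1 x2 y =>
    (Finset.single_le_sum (f := W x1 x2) (fun y _ => hW.1 _ _ _) (Finset.mem_univ y)).trans_eq
      (hW.2 _ _)
  have hNle : ∀ m1 m2 y, N m1 m2 y ≤ 1 := fun m1 m2 y =>
    Finset.prod_le_one (fun i _ => hW.1 _ _ _) fun i _ => hW1 _ _ _
  have h1 : ∑ m1, ∑ m2, ∑ y, N m1 m2 y * (if g y = (m1, m2) then 0 else 1)
      = M1 * M2 - ∑ m1, ∑ m2, ∑ y, N m1 m2 y * (if g y = (m1, m2) then 1 else 0) := by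
    have h2 : ∀ m1 m2, ∑ y, N m1 m2 y * (if g y = (m1, m2) then 0 else 1)
        = 1 - ∑ y, N m1 m2 y * (if g y = (m1, m2) then 1 else 0) := by
      intro m1 m2
      rw [eq_sub_iff_add_eq, ← Finset.sum_add_distrib]
      refine (Finset.sum_congr rfl fun y _ => ?_).trans (hN1 m1 m2)
      split_ifs <;> simp
    simp_rw [h2, Finset.sum_sub_distrib]
    simp
  have h3 : ∑ m1, ∑ m2, ∑ y, N m1 m2 y * (if g y = (m1, m2) then (1 : ℝ) else 0)
      ≤ (Fintype.card Y : ℝ) ^ n := by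
    calc ∑ m1, ∑ m2, ∑ y, N m1 m2 y * (if g y = (m1, m2) then (1 : ℝ) else 0)
        ≤ ∑ m1, ∑ m2, ∑ y, (if g y = (m1, m2) then (1 : ℝ) else 0) := by
          refine Finset.sum_le_sum fun m1 _ => Finset.sum_le_sum fun m2 _ =>
            Finset.sum_le_sum fun y _ => ?_
          have := hNle m1 m2 y
          split_ifs <;> linarith
      _ = ∑ y : Fin n → Y, ∑ m : Fin M1 × Fin M2, (if g y = m then (1 : ℝ) else 0) := by
          rw [← Fintype.sum_prod_type' (f := fun m1 m2 =>
            ∑ y, (if g y = (m1, m2) then (1 : ℝ) else 0)), Finset.sum_comm]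
      _ = (Fintype.card Y : ℝ) ^ n := by simp
  have h4 : ∑ m1, ∑ m2, ∑ y, N m1 m2 y * (if g y = (m1, m2) then 0 else 1) ≤ M1 * M2 * ε := herr
  rw [h1] at h4
  linarith

lemma le_Rsum (hW : IsChannel W) {n M1 M2 K : ℕ} {ε : ℝ} (hε : ε < 1)
    (hM1 : 0 < M1) (hM2 : 0 < M2) (h : ExistsCode W n M1 M2 K ε) :
    Real.logb 2 ((M1 : ℝ) * M2) / n ≤ Rsum W n ε K := by
  refine le_csSup ⟨Real.logb 2 ((Fintype.card Y : ℝ) ^ n / (1 - ε)) / n, ?_⟩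
    ⟨M1, M2, hM1, hM2, h, rfl⟩
  rintro _ ⟨N1, N2, h1, h2, hc, rfl⟩
  refine div_le_div_of_nonneg_right ?_ (Nat.cast_nonneg n)
  exact Real.logb_le_logb_of_le one_lt_two (by positivity) (card_le_of_existsCode hW hε h1 h2 hc)

/-- Rounding down `2^a` to an integer loses at most one bit. -/
lemma exists_nat_near_two_rpow {a : ℝ} (ha : 0 ≤ a) :
    ∃ M : ℕ, 0 < M ∧ (M : ℝ) ≤ (2 : ℝ) ^ a ∧ a - 1 ≤ Real.logb 2 M := by
  have h1 : (1 : ℝ) ≤ (2 : ℝ) ^ a := Real.one_le_rpow one_le_two ha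
  have hM : 0 < ⌊(2 : ℝ) ^ a⌋₊ := Nat.floor_pos.2 h1
  have hM1 : (1 : ℝ) ≤ (⌊(2 : ℝ) ^ a⌋₊ : ℝ) := by exact_mod_cast hM
  refine ⟨_, hM, Nat.floor_le (by linarith), ?_⟩
  rw [Real.le_logb_iff_rpow_le one_lt_two (by linarith), Real.rpow_sub two_pos, Real.rpow_one]
  have := Nat.lt_floor_add_one ((2 : ℝ) ^ a)
  linarith

end Rate

/-! ### Choice of the rates -/

lemma logb_two_le {x : ℝ} (hx : 1 ≤ x) : Real.logb 2 x ≤ 2 * Real.log x := by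
  have h2 := Real.log_two_gt_d9
  have h0 := Real.log_nonneg hx
  rw [Real.logb, div_le_iff₀ (by linarith)]
  nlinarith

section Rate

variable {W : X1 → X2 → Y → ℝ} {p1 : X1 → ℝ} {p2 : X2 → ℝ}

set_option maxHeartbeats 1000000 in
/-- The rate bound at a fixed large blocklength, uniformly in `K`. The threshold of the
random-coding bound is placed at distance of order `(min K Λ³ + Λ²) / √n` below the quantile of
`S_K`, which pays for all error terms; the first rate is fixed strictly inside the pentagon. -/
lemma rate_bound (hW : IsChannel W) (hp1 : IsPMF p1) (hp2 : IsPMF p2) {ε : ℝ}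
    (hε0 : 0 < ε) (hε1 : ε < 1)
    (hV1 : 0 < Vone W p1 p2) (hV2 : 0 < Vtwo W p1 p2)
    (hI : Isum W p1 p2 < Icond1 W p1 p2 + Icond2 W p1 p2) :
    ∃ C4 κ : ℝ, ∃ N0 : ℕ, 0 < C4 ∧ 0 < κ ∧ ∀ (n K : ℕ) (Λ : ℝ), N0 ≤ n → 0 < K → 0 ≤ Λ →
      Λ ^ 2 = Real.log n + Real.log K → Λ ^ 3 ≤ κ * √n →
      Isum W p1 p2 + FSKinv (Vone W p1 p2) (Vtwo W p1 p2) K ε / √n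
        - C4 * (min (K : ℝ) (Λ ^ 3) + Λ ^ 2) / n ≤ Rsum W n ε K := by
  obtain ⟨C, D, κ1, hC, hD, hκ1, hcode⟩ := code_exists hW hp1 hp2 hV1 hV2
  obtain ⟨c, h0, R, hc, hh0, hR, hF⟩ := FSKinv_spec hV1 hV2 hε0 hε1
  have hI1 := Icond1_le_Isum hW hp1 hp2
  have hI2 := Icond2_le_Isum hW hp1 hp2
  set I := Isum W p1 p2
  set I1 := Icond1 W p1 p2
  set I2 := Icond2 W p1 p2
  set V1 := Vone W p1 p2
  set V2 := Vtwo W p1 p2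
  obtain ⟨η, hη⟩ : ∃ η, η = (I1 + I2 - I) / 2 := ⟨_, rfl⟩
  have hη0 : 0 < η := by rw [hη]; linarith
  obtain ⟨r, hr, hcode⟩ := hcode (η / 4) (by linarith)
  obtain ⟨a2, ha2⟩ : ∃ a2, a2 = I2 - η := ⟨_, rfl⟩
  have ha20 : 0 < a2 := by rw [ha2, hη]; linarith
  obtain ⟨R1, hR1⟩ : ∃ R1, R1 = I1 - η := ⟨_, rfl⟩
  have hR10 : 0 < R1 := by rw [hR1, hη]; linarith
  have hl2 := Real.log_two_gt_d9
  have hl2' := Real.log_two_lt_d9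
  obtain ⟨r', hr'⟩ : ∃ r', r' = min r (Real.log 2 * η / 2) := ⟨_, rfl⟩
  have hr'0 : 0 < r' := by rw [hr']; exact lt_min hr (by positivity)
  have hr'1 : r' ≤ r := by rw [hr']; exact min_le_left _ _
  have hr'2 : r' ≤ Real.log 2 * η / 2 := by rw [hr']; exact min_le_right _ _
  obtain ⟨B, hB⟩ : ∃ B, B = 2 * R + h0 + D := ⟨_, rfl⟩
  have hB0 : 0 < B := by rw [hB]; positivity
  obtain ⟨κ, hκ⟩ : ∃ κ, κ = min κ1 (min (h0 * c / (2 * (C + 2))) (min (r' / 2)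
    (min (η / (4 * B)) (min (a2 / (4 * B)) (a2 / 8))))) := ⟨_, rfl⟩
  have hκ0 : 0 < κ := by
    rw [hκ]
    refine lt_min hκ1 (lt_min (by positivity) (lt_min (by positivity) (lt_min (by positivity)
      (lt_min (by positivity) (by positivity)))))
  have hκ' := hκ.le
  simp only [le_min_iff] at hκ'
  obtain ⟨k1, k2, k3, k4, k5, k6⟩ := hκ'
  rw [le_div_iff₀ (by positivity)] at k2 k4 k5
  refine ⟨(C + 2) / c + D + 4, κ, 3 + ⌈4 / r'⌉₊, by positivity, hκ0, ?_⟩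
  intro n K Λ hn hK hΛ0 hΛ hΛκ
  have hn3 : (3 : ℝ) ≤ n := by exact_mod_cast (by omega : 3 ≤ n)
  have hn0 : (0 : ℝ) < n := by linarith
  have hn0' : 0 < n := by omega
  have hnr : 4 ≤ r' * n := by
    have h1 : (4 / r' : ℝ) ≤ n :=
      (Nat.le_ceil _).trans (by exact_mod_cast (by omega : ⌈4 / r'⌉₊ ≤ n))
    rw [div_le_iff₀ hr'0] at h1; linarith
  have hK1 : (1 : ℝ) ≤ K := by exact_mod_cast hK
  have hlogn : 1 ≤ Real.log n := by
    rw [Real.le_log_iff_exp_le hn0]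
    have := Real.exp_one_lt_d9
    linarith
  have hlogK : 0 ≤ Real.log K := Real.log_nonneg hK1
  have hΛ1 : 1 ≤ Λ := (one_le_sq_iff₀ hΛ0).1 (by linarith)
  have hΛ2 : Λ ≤ Λ ^ 2 := le_self_pow₀ hΛ1 two_ne_zero
  have hΛ3 : Λ ^ 2 ≤ Λ ^ 3 := pow_le_pow_right₀ hΛ1 (by norm_num)
  obtain ⟨t, ht⟩ : ∃ t, t = √(n : ℝ) := ⟨_, rfl⟩
  have htt : t * t = n := by rw [ht]; exact Real.mul_self_sqrt hn0.le
  have ht0 : 0 < t := by rw [ht]; exact Real.sqrt_pos.2 hn0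
  have ht1 : 1 ≤ t := by rw [ht]; exact Real.one_le_sqrt.2 (by linarith)
  rw [← ht] at hΛκ ⊢
  have htn : t ≤ n := by rw [← htt]; exact le_mul_of_one_le_left ht0.le ht1
  obtain ⟨G, hG⟩ : ∃ G, G = min (K : ℝ) (Λ ^ 3) + Λ ^ 2 := ⟨_, rfl⟩
  have hmin0 : 0 ≤ min (K : ℝ) (Λ ^ 3) := le_min (by linarith) (by positivity)
  have hGΛ : Λ ^ 2 ≤ G := by rw [hG]; linarith
  have hG1 : 1 ≤ G := by linarith
  have hG2 : G ≤ 2 * Λ ^ 3 := by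
    rw [hG]; linarith [min_le_right (K : ℝ) (Λ ^ 3)]
  rw [← hG]
  obtain ⟨q, hq⟩ : ∃ q, q = FSKinv V1 V2 K ε := ⟨_, rfl⟩
  obtain ⟨hqR, hFh⟩ := hF K hK
  rw [← hq] at hqR hFh ⊢
  obtain ⟨h, hh⟩ : ∃ h, h = (C + 2) * G / (c * t) := ⟨_, rfl⟩
  have hhpos : 0 < h := by rw [hh]; positivity
  have hhle : h ≤ h0 := by
    rw [hh, div_le_iff₀ (by positivity)]
    calc (C + 2) * G ≤ (C + 2) * (2 * (κ * t)) := by gcongr; linarith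
      _ = (κ * (2 * (C + 2))) * t := by ring
      _ ≤ h0 * c * t := by gcongr
      _ = h0 * (c * t) := by ring
  have hFh := hFh h hhpos hhle
  have hch : c * h = (C + 2) * G / t := by rw [hh]; field_simp
  obtain ⟨s, hs⟩ : ∃ s, s = q - h - D / t := ⟨_, rfl⟩
  have hDt : D / t ≤ D := div_le_self hD.le ht1
  have hDt0 : 0 < D / t := by positivity
  have hsB : |s| ≤ B * Λ := by
    have h1 : √(Real.log K) ≤ Λ := Real.sqrt_le_iff.2 ⟨hΛ0, by linarith⟩
    have h2 : |q| ≤ R * (2 * Λ) := hqR.trans (by gcongr; linarith)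
    rw [abs_le] at h2 ⊢
    have h3 : h0 ≤ h0 * Λ := le_mul_of_one_le_right hh0.le hΛ1
    have h4 : D ≤ D * Λ := le_mul_of_one_le_right hD.le hΛ1
    rw [hB, hs]
    obtain ⟨h5, h6⟩ := h2
    constructor <;> linarith
  have hsκ : |s| ≤ B * κ * t := hsB.trans (by
    rw [mul_assoc]; gcongr; linarith)
  have hts : |t * s| ≤ B * κ * n := by
    rw [abs_mul, abs_of_pos ht0, ← htt]
    calc t * |s| ≤ t * (B * κ * t) := by gcongr
      _ = B * κ * (t * t) := by ring
  have hts1 : t * s ≤ η / 4 * n := by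
    have h1 : B * κ * n ≤ η / 4 * n := by gcongr; linarith
    linarith [le_of_abs_le hts]
  have hts2 : -(a2 / 4 * n) ≤ t * s := by
    have h1 : B * κ * n ≤ a2 / 4 * n := by gcongr; linarith
    linarith [neg_le_of_abs_le hts]
  have hln := logb_two_le (x := (n : ℝ)) (by linarith)
  have hlK := logb_two_le hK1
  have hln0 : 0 ≤ Real.logb 2 (n : ℝ) := Real.logb_nonneg one_lt_two (by linarith)
  have hlK0 : 0 ≤ Real.logb 2 (K : ℝ) := Real.logb_nonneg one_lt_two hK1
  have hLn : Λ ^ 2 ≤ κ * n := by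
    have : κ * t ≤ κ * n := by gcongr
    linarith
  -- `T` bits are sent in all; the last two terms make the joint union bound at most `1 / √n`
  obtain ⟨T, hT⟩ : ∃ T, T = n * I + t * s - Real.logb 2 K - Real.logb 2 n / 2 := ⟨_, rfl⟩
  have hlog2 : Real.logb 2 (K : ℝ) + Real.logb 2 (n : ℝ) / 2 ≤ 2 * Λ ^ 2 := by linarith
  have hIR : I = R1 + a2 := by rw [hR1, ha2, hη]; ring
  have hT2 : 0 ≤ T - n * R1 := by
    have h1 : κ * n ≤ a2 / 8 * n := by gcongr
    have h2 : 0 < a2 * n := by positivity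
    have h3 : (n : ℝ) * (R1 + a2) = n * R1 + a2 * n := by ring
    rw [hT, hIR, h3]
    linarith
  obtain ⟨M1, hM1, hM1u, hM1l⟩ := exists_nat_near_two_rpow (a := n * R1) (by positivity)
  obtain ⟨M2, hM2, hM2u, hM2l⟩ := exists_nat_near_two_rpow hT2
  have hnK : (n : ℝ) * K ≤ Real.exp (Λ ^ 2) := by
    rw [hΛ, Real.exp_add, Real.exp_log hn0, Real.exp_log (by linarith)]
  have hcode := hcode n K M1 M2 Λ hn0' hK hM1 hM2 hΛ1 hnK (by
    rw [← ht]; exact hΛκ.trans (by gcongr)) s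
  rw [← ht, ← hG] at hcode
  -- the three union bounds and the atypicality terms are each at most of order `1 / √n`
  have e1 : (M1 : ℝ) * M2 * K / (2 : ℝ) ^ (n * I + t * s) ≤ 1 / t := by
    have hK2 : (K : ℝ) = (2 : ℝ) ^ Real.logb 2 (K : ℝ) :=
      (Real.rpow_logb two_pos (by norm_num) (by linarith)).symm
    have ht2 : t = (2 : ℝ) ^ (Real.logb 2 (n : ℝ) / 2) := by
      rw [div_eq_mul_inv, Real.rpow_mul two_pos.le, Real.rpow_logb two_pos (by norm_num) hn0, ht,
        Real.sqrt_eq_rpow, one_div]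
    rw [div_le_div_iff₀ (by positivity) ht0, one_mul]
    calc (M1 : ℝ) * M2 * K * t
        ≤ (2 : ℝ) ^ (n * R1) * (2 : ℝ) ^ (T - n * R1) * K * t := by gcongr
      _ = (2 : ℝ) ^ (n * I + t * s) := by
          conv_lhs => rw [hK2, ht2]
          rw [← Real.rpow_add two_pos, ← Real.rpow_add two_pos, ← Real.rpow_add two_pos, hT]
          congr 1; ring
  have hexp : (2 : ℝ) ^ (-(η / 2 * n)) ≤ Real.exp (-(r' * n)) := by
    rw [Real.rpow_def_of_pos two_pos]
    refine Real.exp_le_exp.2 ?_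
    have h1 : r' * n ≤ Real.log 2 * η / 2 * n := by gcongr
    linarith
  have e2 : (M1 : ℝ) * K / (2 : ℝ) ^ (n * (I1 - η / 4)) ≤ K * Real.exp (-(r' * n)) := by
    calc (M1 : ℝ) * K / (2 : ℝ) ^ (n * (I1 - η / 4))
        ≤ (2 : ℝ) ^ (n * R1) * K / (2 : ℝ) ^ (n * (I1 - η / 4)) := by gcongr
      _ = K * (2 : ℝ) ^ (n * R1 - n * (I1 - η / 4)) := by rw [Real.rpow_sub two_pos]; ring
      _ ≤ K * (2 : ℝ) ^ (-(η / 2 * n)) := by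
          gcongr
          · exact one_le_two
          · have h1 : 0 < η * n := by positivity
            rw [hR1]; linarith
      _ ≤ _ := by gcongr
  have e3 : (M2 : ℝ) * K / (2 : ℝ) ^ (n * (I2 - η / 4)) ≤ K * Real.exp (-(r' * n)) := by
    calc (M2 : ℝ) * K / (2 : ℝ) ^ (n * (I2 - η / 4))
        ≤ (2 : ℝ) ^ (T - n * R1) * K / (2 : ℝ) ^ (n * (I2 - η / 4)) := by gcongr
      _ = K * (2 : ℝ) ^ (T - n * R1 - n * (I2 - η / 4)) := by
          rw [Real.rpow_sub two_pos (T - n * R1)]; ring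
      _ ≤ K * (2 : ℝ) ^ (-(η / 2 * n)) := by
          gcongr
          · exact one_le_two
          · rw [hT, hIR, ha2]; linarith
      _ ≤ _ := by gcongr
  have e4 : (K : ℝ) * Real.exp (-(r * n)) ≤ K * Real.exp (-(r' * n)) := by gcongr
  have e5 : 4 * (K * Real.exp (-(r' * n))) ≤ 1 / t := by
    have h1 : (4 : ℝ) ≤ Real.exp (r' * n / 2) := by
      have h2 := Real.add_one_le_exp (r' * n / 4)
      have h3 : Real.exp (r' * n / 2) = Real.exp (r' * n / 4) * Real.exp (r' * n / 4) := by
        rw [← Real.exp_add]; congr 1; ring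
      rw [h3]; nlinarith only [h2, hnr]
    have h2 : Λ ^ 2 ≤ r' * n / 2 := by
      have h3 : κ * n ≤ r' / 2 * n := by gcongr
      linarith
    have h3 : (K : ℝ) * t ≤ Real.exp (r' * n / 2) := by
      calc (K : ℝ) * t ≤ n * K := by rw [mul_comm]; gcongr
        _ ≤ _ := hnK.trans (Real.exp_le_exp.2 h2)
    rw [le_div_iff₀ ht0]
    calc 4 * (K * Real.exp (-(r' * n))) * t = 4 * (K * t) * Real.exp (-(r' * n)) := by ring
      _ ≤ Real.exp (r' * n / 2) * Real.exp (r' * n / 2) * Real.exp (-(r' * n)) := by gcongr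
      _ = 1 := by rw [← Real.exp_add, ← Real.exp_add, Real.exp_eq_one_iff]; ring
  have hsD : s + D / t = q - h := by rw [hs]; ring
  rw [hsD] at hcode
  have hGt : (C + 2) * G / t = C * G / t + 2 * (G / t) := by ring
  have hGt1 : 1 / t ≤ G / t := by gcongr
  have hcode' : ExistsCode W n M1 M2 K ε := by
    obtain ⟨e, f1, f2, g, hg⟩ := hcode
    exact ⟨e, f1, f2, g, hg.trans (by linarith)⟩
  refine le_trans ?_ (le_Rsum hW hε1 hM1 hM2 hcode')
  have hM1' : (M1 : ℝ) ≠ 0 := by positivity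
  have hM2' : (M2 : ℝ) ≠ 0 := by positivity
  rw [Real.logb_mul hM1' hM2', le_div_iff₀ hn0]
  have hq1 : q / t * n = t * q := by rw [← htt]; field_simp
  have hh1 : t * h = (C + 2) / c * G := by rw [hh]; field_simp
  have hs1 : t * s = t * q - t * h - D := by rw [hs]; field_simp
  have hDG : D ≤ D * G := le_mul_of_one_le_right hD.le hG1
  have : (I + q / t - ((C + 2) / c + D + 4) * G / n) * n
      = n * I + q / t * n - ((C + 2) / c * G + D * G + 4 * G) := by
    field_simp
  rw [this, hq1]
  linarith

end Rate

/-! ### The four regimes of `K` -/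

/-- The error term `min K Λ³ + Λ²` with `Λ² = log n + log K` in the four regimes. -/
lemma regimes {x K Λ : ℝ} (hx : 1 ≤ Real.log x) (hx0 : 0 < x) (hK : 1 ≤ K) (hΛ0 : 0 ≤ Λ)
    (hΛ : Λ ^ 2 = Real.log x + Real.log K) :
    (K ≤ Real.log x → min K (Λ ^ 3) + Λ ^ 2 ≤ 6 * Real.log x) ∧
    (Real.log x ≤ K → min K (Λ ^ 3) + Λ ^ 2 ≤ 6 * K) ∧
    (K ≤ x → min K (Λ ^ 3) + Λ ^ 2 ≤ 6 * Real.log x ^ ((3 : ℝ) / 2)) ∧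
    (x ≤ K → min K (Λ ^ 3) + Λ ^ 2 ≤ 6 * Real.log K ^ ((3 : ℝ) / 2)) := by
  have hlK : Real.log K ≤ K - 1 := Real.log_le_sub_one_of_pos (by linarith)
  have key : ∀ l : ℝ, 1 ≤ l → Λ ^ 2 ≤ 2 * l →
      min K (Λ ^ 3) + Λ ^ 2 ≤ 6 * l ^ ((3 : ℝ) / 2) := by
    intro l hl h
    have hs : l ^ ((3 : ℝ) / 2) = √l ^ 3 := by
      rw [Real.sqrt_eq_rpow, ← Real.rpow_natCast, ← Real.rpow_mul (by linarith)]; norm_num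
    have hu : √l ^ 2 = l := Real.sq_sqrt (by linarith)
    have hu1 : 1 ≤ √l := Real.one_le_sqrt.2 hl
    rw [hs]
    set u := √l
    rw [← hu] at h
    have h1 : Λ ≤ 2 * u := by nlinarith
    have h2 : Λ ^ 3 ≤ 4 * u ^ 3 := by
      calc Λ ^ 3 = Λ ^ 2 * Λ := by ring
        _ ≤ 2 * u ^ 2 * (2 * u) := by gcongr
        _ = 4 * u ^ 3 := by ring
    have h3 : u ^ 2 ≤ u ^ 3 := pow_le_pow_right₀ hu1 (by norm_num)
    linarith [min_le_right K (Λ ^ 3)]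
  have hm := min_le_left K (Λ ^ 3)
  refine ⟨fun h => by linarith, fun h => by linarith, fun h => key _ hx ?_, fun h => ?_⟩
  · linarith [Real.log_le_log (by linarith) h]
  · have := Real.log_le_log hx0 h
    exact key _ (by linarith) (by linarith)

/-- If `log₂ Kₙ = o(n^{1/3})` then `(log n + log Kₙ)^{3/2} ≤ κ √n` eventually. -/
lemma eventually_cube_le {Kseq : ℕ → ℕ} (hK : ∀ n, 0 < Kseq n)
    (h : (fun n : ℕ => Real.logb 2 (Kseq n : ℝ)) =o[Filter.atTop]
        fun n : ℕ => (n : ℝ) ^ ((1 : ℝ) / 3)) {κ : ℝ} (hκ : 0 < κ) :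
    ∀ᶠ n : ℕ in Filter.atTop, √(Real.log n + Real.log (Kseq n)) ^ 3 ≤ κ * √n := by
  obtain ⟨a, ha⟩ : ∃ a, a = min 1 (κ ^ 2) := ⟨_, rfl⟩
  have ha0 : 0 < a := by rw [ha]; exact lt_min one_pos (by positivity)
  have ha1 : a ≤ 1 := by rw [ha]; exact min_le_left _ _
  have ha2 : a ≤ κ ^ 2 := by rw [ha]; exact min_le_right _ _
  have h2 : (fun n : ℕ => Real.log (n : ℝ)) =o[Filter.atTop]
      fun n : ℕ => (n : ℝ) ^ ((1 : ℝ) / 3) :=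
    (isLittleO_log_rpow_atTop (r := (1 : ℝ) / 3) (by norm_num)).comp_tendsto
      tendsto_natCast_atTop_atTop
  filter_upwards [h.bound (half_pos ha0), h2.bound (half_pos ha0), Filter.eventually_ge_atTop 1]
    with n h1 h2 hn
  have hn1 : (1 : ℝ) ≤ n := by exact_mod_cast hn
  have hK1 : (1 : ℝ) ≤ Kseq n := by exact_mod_cast hK n
  have hl1 := Real.log_nonneg hn1
  have hl2 := Real.log_nonneg hK1
  have hp : 0 ≤ (n : ℝ) ^ ((1 : ℝ) / 3) := by positivity
  rw [Real.norm_eq_abs, Real.norm_eq_abs, abs_of_nonneg hp] at h1 h2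
  have h1 := (le_abs_self _).trans h1
  have h2 := (le_abs_self _).trans h2
  have hlog2 := Real.log_two_gt_d9
  have hlog2' := Real.log_two_lt_d9
  have h3 : Real.log (Kseq n) ≤ Real.logb 2 (Kseq n) := by
    rw [Real.logb, le_div_iff₀ (by linarith)]
    nlinarith
  set L := Real.log n + Real.log (Kseq n) with hL
  have hL0 : 0 ≤ L := by positivity
  set w := (n : ℝ) ^ ((1 : ℝ) / 3) with hw
  have hw3 : w ^ 3 = n := by
    rw [hw, ← Real.rpow_natCast, ← Real.rpow_mul (by linarith)]; norm_num
  have h4 : L ≤ a * w := by linarith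
  refine le_of_sq_le_sq ?_ (by positivity)
  have e1 : (√L ^ 3) ^ 2 = L ^ 3 := by
    rw [← pow_mul, mul_comm 3 2, pow_mul, Real.sq_sqrt hL0]
  rw [e1, mul_pow, Real.sq_sqrt (by linarith)]
  calc L ^ 3 ≤ (a * w) ^ 3 := by gcongr
    _ = a ^ 3 * n := by rw [mul_pow, hw3]
    _ ≤ κ ^ 2 * n := by
        gcongr
        calc a ^ 3 = a * (a * a) := by ring
          _ ≤ a * 1 := by gcongr; nlinarith
          _ ≤ κ ^ 2 := by linarith

/-- **Theorem 2, small-deviations achievability.**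
Fix a discrete memoryless MAC, `ε ∈ (0,1)`, and a sum-capacity-achieving product pmf
`p₁·p₂ ∈ 𝒫*` with `V₁ > 0`, `V₂ > 0` and `I(X₁;Y|X₂)+I(X₂;Y|X₁) > I(X₁,X₂;Y)`.
Then there is a constant `c` such that for every sequence `(K_n)` of positive integers with
`log₂ K_n = o(n^{1/3})` and all sufficiently large `n`:
`R_sum(n,ε,K_n) ≥ C_sum + F_{S_{K_n}}^{-1}(ε)/√n − θ_n`, where
`θ_n ≤ c·(log n)/n` if `K_n ≤ log n`; `θ_n ≤ c·K_n/n` if `log n ≤ K_n ≤ (log n)^{3/2}`;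
`θ_n ≤ c·(log n)^{3/2}/n` if `(log n)^{3/2} ≤ K_n ≤ n`; and `θ_n ≤ c·(log K_n)^{3/2}/n`
if `K_n ≥ n`. -/
theorem sum_rate_small_deviations
    (W : X1 → X2 → Y → ℝ) (p1 : X1 → ℝ) (p2 : X2 → ℝ)
    (hW : IsChannel W) (hp1 : IsPMF p1) (hp2 : IsPMF p2)
    (ε : ℝ) (hε : ε ∈ Set.Ioo (0 : ℝ) 1)
    (hopt : Isum W p1 p2 = Csum W)
    (hV1 : 0 < Vone W p1 p2) (hV2 : 0 < Vtwo W p1 p2)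
    (hI : Isum W p1 p2 < Icond1 W p1 p2 + Icond2 W p1 p2) :
    ∃ c : ℝ, ∀ Kseq : ℕ → ℕ, (∀ n, 0 < Kseq n) →
      ((fun n : ℕ => Real.logb 2 (Kseq n : ℝ)) =o[Filter.atTop]
        fun n : ℕ => (n : ℝ) ^ ((1 : ℝ) / 3)) →
      ∃ N : ℕ, ∀ n : ℕ, N ≤ n → ∃ θ : ℝ,
        Csum W + FSKinv (Vone W p1 p2) (Vtwo W p1 p2) (Kseq n) ε / Real.sqrt n - θ ≤
            Rsum W n ε (Kseq n) ∧
        ((Kseq n : ℝ) ≤ Real.log n → θ ≤ c * Real.log n / n) ∧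
        (Real.log n ≤ (Kseq n : ℝ) → (Kseq n : ℝ) ≤ (Real.log n) ^ ((3 : ℝ) / 2) →
          θ ≤ c * (Kseq n : ℝ) / n) ∧
        ((Real.log n) ^ ((3 : ℝ) / 2) ≤ (Kseq n : ℝ) → (Kseq n : ℝ) ≤ (n : ℝ) →
          θ ≤ c * (Real.log n) ^ ((3 : ℝ) / 2) / n) ∧
        ((n : ℝ) ≤ (Kseq n : ℝ) → θ ≤ c * (Real.log (Kseq n : ℝ)) ^ ((3 : ℝ) / 2) / n) := by
  obtain ⟨C, κ, N0, hC, hκ, hrate⟩ := rate_bound hW hp1 hp2 hε.1 hε.2 hV1 hV2 hI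
  refine ⟨C * 6, fun Kseq hK ho => ?_⟩
  obtain ⟨N1, hN1⟩ := Filter.eventually_atTop.1 (eventually_cube_le hK ho hκ)
  refine ⟨max 3 (max N0 N1), fun n hn => ?_⟩
  have hn3 : 3 ≤ n := (le_max_left _ _).trans hn
  have hnN0 : N0 ≤ n := ((le_max_left _ _).trans (le_max_right _ _)).trans hn
  have hnN1 : N1 ≤ n := ((le_max_right _ _).trans (le_max_right _ _)).trans hn
  have hn3' : (3 : ℝ) ≤ n := by exact_mod_cast hn3
  have hn0 : (0 : ℝ) < n := by linarith
  have hlogn : 1 ≤ Real.log n := by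
    rw [Real.le_log_iff_exp_le hn0]
    have := Real.exp_one_lt_d9
    linarith
  have hK1 : (1 : ℝ) ≤ Kseq n := by exact_mod_cast hK n
  have hlogK := Real.log_nonneg hK1
  set Λ := √(Real.log n + Real.log (Kseq n)) with hΛ
  have hΛ2 : Λ ^ 2 = Real.log n + Real.log (Kseq n) := Real.sq_sqrt (by linarith)
  obtain ⟨r1, r2, r3, r4⟩ := regimes hlogn hn0 hK1 (Real.sqrt_nonneg _) hΛ2
  refine ⟨C * (min (Kseq n : ℝ) (Λ ^ 3) + Λ ^ 2) / n, ?_, fun h => ?_, fun h _ => ?_,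
    fun _ h => ?_, fun h => ?_⟩
  · rw [← hopt]
    exact hrate n (Kseq n) Λ hnN0 (hK n) (Real.sqrt_nonneg _) hΛ2 (hN1 n hnN1)
  · rw [mul_assoc]; gcongr; exact r1 h
  · rw [mul_assoc]; gcongr; exact r2 h
  · rw [mul_assoc]; gcongr; exact r3 h
  · rw [mul_assoc]; gcongr; exact r4 h

end
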